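/- arXiv:2508.00480 — 3 statements merged into one kernel-verified Lean document; each statement's English description precedes it below -/
import Mathlib

section
/- Let F be a fixed graph with no isolated vertices and at least one edge. For each ν > 0, there exist γ > 0 and d₀ such that the following holds for each n ≥ d ≥ d₀: every n-vertex graph G in which every vertex v satisfies (1 − γ)d ≤ deg_G(v) ≤ (1 + γ)d contains a collection of pairwise vertex-disjoint subgraphs, each of which is a subdivision of F, whose vertex sets together cover at least (1 − ν)n vertices of G. -/
open SimpleGraph

/-- `w` is an internal vertex of the walk `p` (on its support but not an endvertex). -/
def SimpleGraph.Walk.IsInternalVertex {β : Type*} {G : SimpleGraph β} {x y : β}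
    (p : G.Walk x y) (w : β) : Prop :=
  w ∈ p.support ∧ w ≠ x ∧ w ≠ y

/-- `F.IsSubdivisionP G lenOK` says that `G` is a subdivision of `F` in which the length of
each subdivision-path satisfies the predicate `lenOK`: there is an injection `f` of the
vertices of `F` into the vertices of `G` and, for each edge `uv` of `F`, a path of positive
length in `G` from `f u` to `f v`, these paths being pairwise internally vertex-disjoint with
all internal vertices outside the range of `f`, such that every vertex of `G` is in the range
of `f` or on one of the paths, and every edge of `G` is an edge of one of the paths. -/
def SimpleGraph.IsSubdivisionP {α β : Type*} (F : SimpleGraph α) (G : SimpleGraph β)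
    (lenOK : ℕ → Prop) : Prop :=
  ∃ (f : α → β) (P : ∀ u v : α, F.Adj u v → G.Walk (f u) (f v)),
    Function.Injective f ∧
    (∀ u v (h : F.Adj u v), (P u v h).IsPath) ∧
    (∀ u v (h : F.Adj u v), 0 < (P u v h).length ∧ lenOK (P u v h).length) ∧
    (∀ u v (h : F.Adj u v), P v u h.symm = (P u v h).reverse) ∧
    (∀ u v (h : F.Adj u v) (w : β), (P u v h).IsInternalVertex w → w ∉ Set.range f) ∧
    (∀ u v u' v' (h : F.Adj u v) (h' : F.Adj u' v'), s(u, v) ≠ s(u', v') →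
      ∀ w : β, (P u v h).IsInternalVertex w → ¬ (P u' v' h').IsInternalVertex w) ∧
    (∀ w : β, w ∈ Set.range f ∨ ∃ u v, ∃ h : F.Adj u v, w ∈ (P u v h).support) ∧
    (∀ x y : β, G.Adj x y → ∃ u v, ∃ h : F.Adj u v, s(x, y) ∈ (P u v h).edges)

/-- `G` is a subdivision of `F`. -/
def SimpleGraph.IsSubdivision {α β : Type*} (F : SimpleGraph α) (G : SimpleGraph β) : Prop :=
  F.IsSubdivisionP G fun _ => True

namespace SubdivPack
open scoped Classical

/-- There is a path from `x` to `y` with internal vertex set `I` and edge set `E`. -/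
def ConnE {V : Type*} (A : SimpleGraph V) (x y : V) (I : Set V) (E : Set (Sym2 V)) : Prop :=
  ∃ p : A.Walk x y, p.IsPath ∧ x ≠ y ∧ (∀ w, w ∈ I ↔ p.IsInternalVertex w) ∧
    (∀ e, e ∈ E ↔ e ∈ p.edges)

lemma ConnE.symm {V : Type*} {A : SimpleGraph V} {x y : V} {I : Set V} {E : Set (Sym2 V)}
    (h : ConnE A x y I E) : ConnE A y x I E := by
  obtain ⟨p, hp, hne, hI, hE⟩ := h
  refine ⟨p.reverse, hp.reverse, hne.symm, fun w => ?_, fun e => ?_⟩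
  · rw [hI]; simp only [Walk.IsInternalVertex, Walk.support_reverse, List.mem_reverse]; tauto
  · rw [hE]; simp

/-- Set-level data of a topological copy of `F` in `A` with all vertices in `W`. -/
structure IsModel {α V : Type*} (F : SimpleGraph α) (A : SimpleGraph V) (W : Set V)
    (f : α → V) (I : α → α → Set V) (E : α → α → Set (Sym2 V)) : Prop where
  inj : Function.Injective f
  mem : ∀ u, f u ∈ W
  symmI : ∀ u v, I u v = I v u
  symmE : ∀ u v, E u v = E v u
  conn : ∀ u v, F.Adj u v → ConnE A (f u) (f v) (I u v) (E u v)
  sub : ∀ u v, F.Adj u v → I u v ⊆ W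
  avoid : ∀ u v, F.Adj u v → ∀ w ∈ I u v, w ∉ Set.range f
  disj : ∀ u v u' v', F.Adj u v → F.Adj u' v' → s(u, v) ≠ s(u', v') →
    ∀ w ∈ I u v, w ∉ I u' v'

lemma connE_of_walk {V : Type*} {A : SimpleGraph V} {x y : V} (hne : x ≠ y) (p : A.Walk x y)
    (S : Set V) (hS : ∀ w ∈ p.support, w = x ∨ w = y ∨ w ∈ S) :
    ∃ I E, I ⊆ S ∧ ConnE A x y I E := by
  refine ⟨{w | p.bypass.IsInternalVertex w}, {e | e ∈ p.bypass.edges}, ?_, p.bypass,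
    p.bypass_isPath, hne, fun w => Iff.rfl, fun e => Iff.rfl⟩
  rintro w ⟨h1, h2, h3⟩
  have := hS w (p.support_bypass_subset_support h1)
  tauto

/-- degree into a finset -/
noncomputable def dg {V : Type*} (A : SimpleGraph V) (W : Finset V) (x : V) : ℕ :=
  (W.filter (A.Adj x)).card

/-- twice the number of edges inside a finset -/
noncomputable def E2 {V : Type*} (A : SimpleGraph V) (W : Finset V) : ℕ :=
  ∑ x ∈ W, dg A W x

lemma E2_erase {V : Type*} (A : SimpleGraph V) (W : Finset V) (v : V) (hv : v ∈ W) :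
    E2 A (W.erase v) + 2 * dg A W v = E2 A W := by
  have h1 : ∀ x ∈ W.erase v, dg A W x = dg A (W.erase v) x + if A.Adj x v then 1 else 0 := by
    intro x _
    unfold dg
    conv_lhs => rw [← Finset.insert_erase hv]
    rw [Finset.filter_insert]
    split_ifs with h
    · rw [Finset.card_insert_of_notMem (by simp)]
    · simp
  have h2 : ∑ x ∈ W.erase v, (if A.Adj x v then 1 else 0) = dg A W v := by
    rw [← Finset.card_filter]
    unfold dg
    congr 1
    ext x
    simp only [Finset.mem_filter, Finset.mem_erase]
    constructor
    · rintro ⟨⟨_, h⟩, h'⟩; exact ⟨h, h'.symm⟩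
    · rintro ⟨h, h'⟩; exact ⟨⟨h'.ne', h⟩, h'.symm⟩
  unfold E2
  rw [← Finset.add_sum_erase W _ hv, Finset.sum_congr rfl h1, Finset.sum_add_distrib, h2]
  ring

/-- connected set -/
def CSet {V : Type*} (A : SimpleGraph V) (U : Finset V) : Prop :=
  ∀ u ∈ U, ∀ v ∈ U, ∃ p : A.Walk u v, ∀ w ∈ p.support, w ∈ U

lemma CSet.insert_adj {V : Type*} {A : SimpleGraph V} {U : Finset V} (h : CSet A U) {u v : V}
    (hu : u ∈ U) (huv : A.Adj u v) : CSet A (insert v U) := by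
  have key : ∀ a ∈ U, ∃ p : A.Walk a v, ∀ w ∈ p.support, w ∈ insert v U := by
    intro a ha
    obtain ⟨p, hp⟩ := h a ha u hu
    refine ⟨p.concat huv, fun w hw => ?_⟩
    simp only [Walk.support_concat, List.mem_append, List.mem_singleton] at hw
    rcases hw with hw | hw
    · exact Finset.mem_insert_of_mem (hp w hw)
    · simp [hw]
  intro a ha b hb
  rw [Finset.mem_insert] at ha hb
  rcases ha with rfl | ha <;> rcases hb with rfl | hb
  · exact ⟨Walk.nil, by simp⟩
  · obtain ⟨p, hp⟩ := key b hb
    exact ⟨p.reverse, fun w hw => hp w (by simpa using hw)⟩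
  · exact key a ha
  · obtain ⟨p, hp⟩ := h a ha b hb
    exact ⟨p, fun w hw => Finset.mem_insert_of_mem (hp w hw)⟩

/-- Either a smaller dense set, or a connected set `U` and a set `N` of neighbours of `U` with large
minimum degree. -/
lemma contract {V : Type*} (A : SimpleGraph V) (C : ℕ) (W : Finset V) (hW : W.Nonempty)
    (hE : (2 * C + 2) * W.card ≤ E2 A W) :
    (∃ W' ⊂ W, W'.Nonempty ∧ (2 * C + 2) * W'.card ≤ E2 A W') ∨
    ∃ U N : Finset V, U ⊆ W ∧ N ⊆ W ∧ Disjoint U N ∧ CSet A U ∧ N.Nonempty ∧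
      (∀ x ∈ N, ∃ u ∈ U, A.Adj u x) ∧ C * N.card ≤ E2 A N := by
  set NN : Finset V → Finset V := fun U => (W \ U).filter (fun x => ∃ u ∈ U, A.Adj u x) with hNN
  set good : Finset V → Prop := fun U => U.Nonempty ∧ CSet A U ∧
    (2 * C + 2) * ((W \ U).card + 1) ≤ E2 A (W \ U) + 2 * (NN U).card with hgood
  obtain ⟨v0, hv0⟩ := hW
  have hg0 : good {v0} := by
    refine ⟨by simp, ?_, ?_⟩
    · intro a ha b hb
      simp only [Finset.mem_singleton] at ha hb
      subst ha; subst hb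
      exact ⟨Walk.nil, by simp⟩
    · have h1 : W \ {v0} = W.erase v0 := by rw [Finset.sdiff_singleton_eq_erase]
      have h2 : (NN {v0}).card = dg A W v0 := by
        unfold dg
        simp only [hNN]
        congr 1
        ext x
        simp only [Finset.mem_filter, Finset.mem_sdiff, Finset.mem_singleton, exists_eq_left]
        constructor
        · rintro ⟨⟨h, _⟩, h'⟩; exact ⟨h, h'⟩
        · rintro ⟨h, h'⟩; exact ⟨⟨h, h'.ne'⟩, h'⟩
      rw [h2, h1, E2_erase A W v0 hv0, Finset.card_erase_add_one hv0]
      exact hE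
  obtain ⟨U, hU, hmax⟩ := Finset.exists_max_image (W.powerset.filter good) Finset.card
    ⟨{v0}, by simp [hv0, hg0]⟩
  rw [Finset.mem_filter, Finset.mem_powerset] at hU
  obtain ⟨hUW, hUne, hUc, hUE⟩ := hU
  by_cases hN : (NN U).Nonempty
  · right
    refine ⟨U, NN U, hUW, ?_, ?_, hUc, hN, ?_, ?_⟩
    · exact (Finset.filter_subset _ _).trans Finset.sdiff_subset
    · exact (Finset.disjoint_sdiff).mono_right (Finset.filter_subset _ _)
    · intro x hx; exact (Finset.mem_filter.1 hx).2
    · have hdeg : ∀ v ∈ NN U, C ≤ dg A (NN U) v := by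
        intro v hv
        by_contra hlt
        push Not at hlt
        obtain ⟨hvW, u, hu, huv⟩ := Finset.mem_filter.1 hv
        have hvW' := Finset.mem_sdiff.1 hvW
        have hs : W \ insert v U = (W \ U).erase v := by
          ext x; simp only [Finset.mem_sdiff, Finset.mem_insert, Finset.mem_erase]; tauto
        have hcard : (NN U).card + dg A (W \ U) v ≤ (NN (insert v U)).card + 1 + dg A (NN U) v := by
          have hsub : (NN U).erase v ∪ ((W \ U).filter (A.Adj v) \ NN U) ⊆ NN (insert v U) := by
            intro x hx
            rw [Finset.mem_union] at hx
            rcases hx with hx | hx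
            · rw [Finset.mem_erase] at hx
              obtain ⟨h1, h2⟩ := hx
              obtain ⟨h2, u', hu', ha⟩ := Finset.mem_filter.1 h2
              rw [Finset.mem_filter, hs, Finset.mem_erase]
              exact ⟨⟨h1, h2⟩, u', Finset.mem_insert_of_mem hu', ha⟩
            · obtain ⟨h1, h2⟩ := Finset.mem_sdiff.1 hx
              obtain ⟨h1, h3⟩ := Finset.mem_filter.1 h1
              rw [Finset.mem_filter, hs, Finset.mem_erase]
              exact ⟨⟨h3.ne', h1⟩, v, Finset.mem_insert_self _ _, h3⟩
          have hd : Disjoint ((NN U).erase v) ((W \ U).filter (A.Adj v) \ NN U) :=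
            Finset.disjoint_sdiff.mono_left (Finset.erase_subset _ _)
          have h1 := Finset.card_le_card hsub
          rw [Finset.card_union_of_disjoint hd] at h1
          have h2 := Finset.card_erase_add_one hv
          have h3 := Finset.card_sdiff_add_card_inter ((W \ U).filter (A.Adj v)) (NN U)
          have h4 : ((W \ U).filter (A.Adj v) ∩ NN U).card = dg A (NN U) v := by
            unfold dg
            congr 1
            ext x
            simp only [hNN, Finset.mem_inter, Finset.mem_filter]; tauto
          have h5 : dg A (W \ U) v = ((W \ U).filter (A.Adj v)).card := rfl
          omega
        have hg : good (insert v U) := by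
          refine ⟨by simp, hUc.insert_adj hu huv, ?_⟩
          have e1 := E2_erase A (W \ U) v hvW
          have e2 := Finset.card_erase_add_one hvW
          rw [hs, e2]
          have : (2 * C + 2) * ((W \ U).card + 1) = (2 * C + 2) * (W \ U).card + (2 * C + 2) := by ring
          omega
        have := hmax (insert v U) (by
          rw [Finset.mem_filter, Finset.mem_powerset]
          exact ⟨Finset.insert_subset hvW'.1 hUW, hg⟩)
        rw [Finset.card_insert_of_notMem hvW'.2] at this
        omega
      unfold E2
      rw [mul_comm, ← smul_eq_mul]
      exact Finset.card_nsmul_le_sum _ _ _ hdeg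
  · left
    rw [Finset.not_nonempty_iff_eq_empty] at hN
    rw [hN] at hUE
    simp only [Finset.card_empty, mul_zero, add_zero] at hUE
    refine ⟨W \ U, ?_, ?_, ?_⟩
    · exact Finset.sdiff_ssubset hUW hUne
    · by_contra h
      rw [Finset.not_nonempty_iff_eq_empty] at h
      rw [h] at hUE
      simp [E2] at hUE
    · exact le_trans (Nat.mul_le_mul_left _ (Nat.le_succ _)) hUE

lemma IsModel.mono {α V : Type*} {F : SimpleGraph α} {A : SimpleGraph V} {W W' : Set V}
    {f : α → V} {I : α → α → Set V} {E : α → α → Set (Sym2 V)} (h : IsModel F A W f I E)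
    (hW : W ⊆ W') : IsModel F A W' f I E :=
  ⟨h.inj, fun u => hW (h.mem u), h.symmI, h.symmE, h.conn, fun u v a => (h.sub u v a).trans hW,
    h.avoid, h.disj⟩

/-- Mader's theorem: large average degree forces a topological copy of `F`. -/
theorem mader.{u, v} {α : Type u} [Finite α] (k : ℕ) : ∀ (F : SimpleGraph α), F.edgeSet.ncard = k →
    ∃ C : ℕ, ∀ (V : Type v) (A : SimpleGraph V) (W : Finset V), W.Nonempty →
      C * W.card ≤ E2 A W → ∃ f I E, IsModel F A (W : Set V) f I E := by
  induction k with
  | zero =>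
    intro F hF
    have hF0 : ∀ u v, ¬ F.Adj u v := by
      intro u v h
      have : F.edgeSet = ∅ := by
        rwa [Set.ncard_eq_zero (Set.toFinite _)] at hF
      have h' : s(u, v) ∈ F.edgeSet := h
      rw [this] at h'
      exact h'
    refine ⟨Nat.card α, fun V A W hW hE => ?_⟩
    have hcard : Nat.card α ≤ W.card := by
      have h1 : E2 A W ≤ W.card * W.card := by
        unfold E2
        rw [← smul_eq_mul]
        exact Finset.sum_le_card_nsmul _ _ _ (fun x _ => Finset.card_filter_le _ _)
      exact Nat.le_of_mul_le_mul_right (hE.trans h1) hW.card_pos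
    have : Fintype α := Fintype.ofFinite α
    obtain ⟨g⟩ : Nonempty (α ↪ W) := by
      rw [Function.Embedding.nonempty_iff_card_le]
      simpa [Nat.card_eq_fintype_card] using hcard
    refine ⟨fun a => (g a : V), fun _ _ => ∅, fun _ _ => ∅, ?_⟩
    refine ⟨fun a b h => g.injective (Subtype.ext h), fun u => (g u).2, fun _ _ => rfl,
      fun _ _ => rfl, fun u v h => absurd h (hF0 u v), fun u v h => absurd h (hF0 u v),
      fun u v h => absurd h (hF0 u v), fun u v _ _ h => absurd h (hF0 u v)⟩
  | succ k ih =>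
    intro F hF
    have hne : F.edgeSet.Nonempty := by
      rw [← Set.ncard_pos (Set.toFinite _)]; omega
    obtain ⟨e, he⟩ := hne
    induction e using Sym2.ind with
    | _ x y =>
    have hxy : F.Adj x y := he
    obtain ⟨C, hC⟩ := ih (F.deleteEdges {s(x, y)}) (by
      rw [edgeSet_deleteEdges, Set.ncard_sdiff_singleton_of_mem he, hF]; rfl)
    refine ⟨2 * C + 2, fun V A W => ?_⟩
    induction W using Finset.strongInduction with
    | H W IH =>
    intro hW hE
    rcases contract A C W hW hE with ⟨W', hW', hne', hE'⟩ | ⟨U, N, hUW, hNW, hUN, hUc, hNne, hadj, hEN⟩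
    · obtain ⟨f, I, E, h⟩ := IH W' hW' hne' hE'
      exact ⟨f, I, E, h.mono (by exact_mod_cast hW'.subset)⟩
    · obtain ⟨f, I, E, h⟩ := hC V A N hNne hEN
      have hfne : f x ≠ f y := fun h' => hxy.ne (h.inj h')
      obtain ⟨u1, hu1, ha1⟩ := hadj (f x) (h.mem x)
      obtain ⟨u2, hu2, ha2⟩ := hadj (f y) (h.mem y)
      obtain ⟨p, hp⟩ := hUc u1 hu1 u2 hu2
      obtain ⟨I0, E0, hI0, hconn⟩ := connE_of_walk (A := A) hfne
        (Walk.cons ha1.symm (p.concat ha2)) (U : Set V) (by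
          intro w hw
          simp only [Walk.support_cons, Walk.support_concat, List.mem_cons,
            List.mem_append, List.not_mem_nil, or_false] at hw
          rcases hw with hw | hw | hw
          · exact Or.inl hw
          · exact Or.inr (Or.inr (hp w hw))
          · exact Or.inr (Or.inl hw))
      have hUN' : ∀ w, w ∈ U → w ∉ N := fun w h1 h2 => Finset.disjoint_left.1 hUN h1 h2
      refine ⟨f, fun u v => if s(u, v) = s(x, y) then I0 else I u v,
        fun u v => if s(u, v) = s(x, y) then E0 else E u v, ?_⟩
      have hadj' : ∀ u v, F.Adj u v → s(u, v) ≠ s(x, y) → (F.deleteEdges {s(x, y)}).Adj u v := by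
        intro u v h1 h2
        rw [deleteEdges_adj]
        exact ⟨h1, h2⟩
      refine ⟨h.inj, fun u => hNW (h.mem u), ?_, ?_, ?_, ?_, ?_, ?_⟩
      · intro u v; simp only [Sym2.eq_swap (a := v) (b := u), h.symmI u v]
      · intro u v; simp only [Sym2.eq_swap (a := v) (b := u), h.symmE u v]
      · intro u v huv
        by_cases hs : s(u, v) = s(x, y)
        · simp only [hs, if_true]
          rcases Sym2.eq_iff.1 hs with ⟨rfl, rfl⟩ | ⟨rfl, rfl⟩
          · exact hconn
          · exact hconn.symm
        · simp only [hs, if_false]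
          exact h.conn u v (hadj' u v huv hs)
      · intro u v huv
        by_cases hs : s(u, v) = s(x, y)
        · simp only [hs, if_true]
          exact hI0.trans (by exact_mod_cast hUW)
        · simp only [hs, if_false]
          exact (h.sub u v (hadj' u v huv hs)).trans (by exact_mod_cast hNW)
      · intro u v huv w hw
        by_cases hs : s(u, v) = s(x, y)
        · simp only [hs, if_true] at hw
          rintro ⟨a, rfl⟩
          exact hUN' _ (hI0 hw) (h.mem a)
        · simp only [hs, if_false] at hw
          exact h.avoid u v (hadj' u v huv hs) w hw
      · intro u v u' v' huv huv' hss w hw hw'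
        by_cases hs : s(u, v) = s(x, y) <;> by_cases hs' : s(u', v') = s(x, y)
        · exact hss (hs.trans hs'.symm)
        · simp only [hs, hs', if_true, if_false] at hw hw'
          exact hUN' _ (hI0 hw) (h.sub _ _ (hadj' _ _ huv' hs') hw')
        · simp only [hs, hs', if_true, if_false] at hw hw'
          exact hUN' _ (hI0 hw') (h.sub _ _ (hadj' _ _ huv hs) hw)
        · simp only [hs, hs', if_false] at hw hw'
          exact h.disj u v u' v' (hadj' _ _ huv hs) (hadj' _ _ huv' hs') hss w hw hw'

end SubdivPack
namespace SubdivPack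
open scoped Classical

lemma symm_choice {α V : Type*} {F : SimpleGraph α} {G : SimpleGraph V} {f : α → V}
    (Φ : ∀ u v, G.Walk (f u) (f v) → Prop) (hex : ∀ u v, F.Adj u v → ∃ p, Φ u v p)
    (hrev : ∀ u v p, Φ u v p → Φ v u p.reverse) :
    ∃ P : ∀ u v, F.Adj u v → G.Walk (f u) (f v), (∀ u v h, Φ u v (P u v h)) ∧
      ∀ u v h, P v u h.symm = (P u v h).reverse := by
  let _ : LinearOrder α := linearOrderOfSTO WellOrderingRel
  choose q hq using hex
  refine ⟨fun u v h => if u < v then q u v h else (q v u h.symm).reverse, ?_, ?_⟩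
  · intro u v h
    dsimp only
    split_ifs
    · exact hq u v h
    · exact hrev _ _ _ (hq v u h.symm)
  · intro u v h
    dsimp only
    rcases lt_trichotomy u v with h1 | h1 | h1
    · rw [if_neg h1.not_gt, if_pos h1]
    · exact absurd h1 h.ne
    · rw [if_pos h1, if_neg h1.not_gt, Walk.reverse_reverse]

lemma lift_walk {V : Type*} {G : SimpleGraph V} (H : G.Subgraph) {x y : V} (p : G.Walk x y) :
    ∀ (hx : x ∈ H.verts) (hy : y ∈ H.verts), (∀ e ∈ p.edges, e ∈ H.edgeSet) →
      ∃ q : H.coe.Walk ⟨x, hx⟩ ⟨y, hy⟩, q.map H.hom = p := by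
  induction p with
  | nil => intro hx hy _; exact ⟨Walk.nil, rfl⟩
  | @cons a b c h p ih =>
    intro hx hy he
    have hab : H.Adj a b := he s(a, b) (by simp)
    obtain ⟨q, hq⟩ := ih (H.edge_vert hab.symm) hy (fun e h' => he e (by simp [h']))
    refine ⟨Walk.cons (show H.coe.Adj ⟨a, hx⟩ ⟨b, H.edge_vert hab.symm⟩ from hab) q, ?_⟩
    rw [Walk.map_cons, hq]
    rfl

lemma exists_subgraph {α V : Type*} {F : SimpleGraph α} {G : SimpleGraph V}
    {f : α → V} {I : α → α → Set V} (hinj : Function.Injective f)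
    (hsymm : ∀ u v, I u v = I v u)
    (hconn : ∀ u v, F.Adj u v → ∃ E, ConnE G (f u) (f v) (I u v) E)
    (havoid : ∀ u v, F.Adj u v → ∀ w ∈ I u v, w ∉ Set.range f)
    (hdisj : ∀ u v u' v', F.Adj u v → F.Adj u' v' → s(u, v) ≠ s(u', v') →
      ∀ w ∈ I u v, w ∉ I u' v') :
    ∃ H : G.Subgraph, H.verts = Set.range f ∪ {w | ∃ u v, F.Adj u v ∧ w ∈ I u v} ∧
      F.IsSubdivision H.coe := by
  obtain ⟨P, hP, hPs⟩ := symm_choice (F := F) (G := G) (f := f)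
    (fun u v p => p.IsPath ∧ ∀ w, w ∈ I u v ↔ p.IsInternalVertex w)
    (by
      intro u v h
      obtain ⟨E, p, hp, _, hI, _⟩ := hconn u v h
      exact ⟨p, hp, hI⟩)
    (by
      rintro u v p ⟨hp, hI⟩
      refine ⟨hp.reverse, fun w => ?_⟩
      rw [hsymm, hI]
      simp only [Walk.IsInternalVertex, Walk.support_reverse, List.mem_reverse]
      tauto)
  have hsup : ∀ u v h w, w ∈ (P u v h).support →
      w ∈ Set.range f ∪ {w | ∃ u v, F.Adj u v ∧ w ∈ I u v} := by
    intro u v h w hw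
    by_cases h1 : w = f u
    · exact Or.inl ⟨u, h1.symm⟩
    by_cases h2 : w = f v
    · exact Or.inl ⟨v, h2.symm⟩
    exact Or.inr ⟨u, v, h, ((hP u v h).2 w).2 ⟨hw, h1, h2⟩⟩
  let H : G.Subgraph :=
    { verts := Set.range f ∪ {w | ∃ u v, F.Adj u v ∧ w ∈ I u v}
      Adj := fun x y => ∃ u v, ∃ h : F.Adj u v, s(x, y) ∈ (P u v h).edges
      adj_sub := by
        rintro x y ⟨u, v, h, he⟩
        exact (P u v h).adj_of_mem_edges he
      edge_vert := by
        rintro x y ⟨u, v, h, he⟩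
        exact hsup u v h x ((P u v h).fst_mem_support_of_mem_edges he)
      symm := ⟨by
        rintro x y ⟨u, v, h, he⟩
        exact ⟨u, v, h, by rwa [Sym2.eq_swap]⟩⟩ }
  have hfH : ∀ u, f u ∈ H.verts := fun u => Or.inl ⟨u, rfl⟩
  have hlift : ∀ u v (h : F.Adj u v),
      ∃ q : H.coe.Walk ⟨f u, hfH u⟩ ⟨f v, hfH v⟩, q.map H.hom = P u v h := by
    intro u v h
    refine lift_walk H (P u v h) _ _ ?_
    intro e he
    induction e using Sym2.ind with
    | _ x y => exact ⟨u, v, h, he⟩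
  choose Q hQ using hlift
  have hhom : Function.Injective H.hom := Subgraph.hom_injective
  have hQsup : ∀ u v h (w : H.verts), w ∈ (Q u v h).support ↔ (w : V) ∈ (P u v h).support := by
    intro u v h w
    have hS : (P u v h).support = (Q u v h).support.map H.hom :=
      (congrArg Walk.support (hQ u v h)).symm.trans (Walk.support_map _ _)
    rw [hS]
    constructor
    · intro hw; exact List.mem_map_of_mem (f := H.hom) hw
    · intro hw
      obtain ⟨w', hw', he⟩ := List.mem_map.1 hw
      have : w' = w := Subtype.ext he
      rwa [← this]
  have hQint : ∀ u v h (w : H.verts), (Q u v h).IsInternalVertex w → (w : V) ∈ I u v := by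
    rintro u v h w ⟨h1, h2, h3⟩
    refine ((hP u v h).2 w).2 ⟨(hQsup u v h w).1 h1, ?_, ?_⟩
    · intro h'; exact h2 (Subtype.ext h')
    · intro h'; exact h3 (Subtype.ext h')
  refine ⟨H, rfl, fun u => ⟨f u, hfH u⟩, Q, ?_, ?_, ?_, ?_, ?_, ?_, ?_, ?_⟩
  · intro a b hab
    exact hinj (Subtype.mk.inj hab)
  · intro u v h
    have := (hP u v h).1
    rw [← hQ u v h] at this
    exact this.of_map
  · intro u v h
    refine ⟨?_, trivial⟩
    rw [Nat.pos_iff_ne_zero]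
    intro h0
    have := Walk.eq_of_length_eq_zero h0
    exact h.ne (hinj (Subtype.mk.inj this))
  · intro u v h
    apply Walk.map_injective_of_injective hhom
    have h1 := (Walk.reverse_map H.hom (Q u v h))
    have h2 : (Walk.map H.hom (Q u v h)).reverse = (P u v h).reverse :=
      congrArg Walk.reverse (hQ u v h)
    exact (hQ v u h.symm).trans ((hPs u v h).trans (h2.symm.trans h1))
  · rintro u v h w hw ⟨a, ha⟩
    exact havoid u v h w (hQint u v h w hw) ⟨a, congrArg Subtype.val ha⟩
  · intro u v u' v' h h' hss w hw hw'
    exact hdisj u v u' v' h h' hss w (hQint u v h w hw) (hQint u' v' h' w hw')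
  · rintro ⟨w, hw⟩
    rcases hw with ⟨a, rfl⟩ | ⟨u, v, h, hw⟩
    · exact Or.inl ⟨a, rfl⟩
    · right
      refine ⟨u, v, h, (hQsup u v h _).2 ?_⟩
      exact (((hP u v h).2 w).1 hw).1
  · rintro ⟨x, hx⟩ ⟨y, hy⟩ ⟨u, v, h, he⟩
    refine ⟨u, v, h, ?_⟩
    have hS : (P u v h).edges = (Q u v h).edges.map (Sym2.map H.hom) :=
      (congrArg Walk.edges (hQ u v h)).symm.trans (Walk.edges_map _ _)
    rw [hS] at he
    obtain ⟨e, he1, he2⟩ := List.mem_map.1 he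
    have : Sym2.map H.hom e = Sym2.map H.hom s(⟨x, hx⟩, ⟨y, hy⟩) := he2
    rwa [← Sym2.map.injective hhom this]

lemma append_isPath {V : Type*} {G : SimpleGraph V} {x y z : V} {p : G.Walk x y} {q : G.Walk y z}
    (hp : p.IsPath) (hq : q.IsPath) (h : ∀ w, w ∈ p.support → w ∈ q.support → w = y) :
    (p.append q).IsPath := by
  rw [Walk.isPath_def, Walk.support_append, List.nodup_append]
  have hq' := hq.support_nodup
  rw [← Walk.cons_tail_support, List.nodup_cons] at hq'
  refine ⟨hp.support_nodup, hq'.2, ?_⟩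
  intro a ha b hb hab
  subst hab
  have := h a ha (List.mem_of_mem_tail hb)
  subst this
  exact hq'.1 hb

/-- Substituting paths for the edges of a path. -/
lemma subst_walk {V : Type*} {A G : SimpleGraph V} (S : Set V) (J : Sym2 V → Set V)
    (hJ : ∀ a b, A.Adj a b → ∃ E, ConnE G a b (J s(a, b)) E)
    (hJS : ∀ e ∈ A.edgeSet, ∀ w ∈ J e, w ∉ S)
    (hJJ : ∀ e ∈ A.edgeSet, ∀ e' ∈ A.edgeSet, e ≠ e' → ∀ w ∈ J e, w ∉ J e')
    {x y : V} (p : A.Walk x y) : p.IsPath → (∀ w ∈ p.support, w ∈ S) →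
    ∃ q : G.Walk x y, q.IsPath ∧ ∀ w, w ∈ q.support ↔ w ∈ p.support ∨ ∃ e ∈ p.edges, w ∈ J e := by
  induction p with
  | nil => intro _ _; exact ⟨Walk.nil, by simp, by simp⟩
  | @cons a b c h p ih =>
    intro hp hS
    rw [Walk.cons_isPath_iff] at hp
    obtain ⟨q, hq, hqs⟩ := ih hp.1 (fun w hw => hS w (by simp [hw]))
    obtain ⟨E, r, hr, hne, hI, _⟩ := hJ a b h
    have haS : a ∈ S := hS a (by simp)
    have hrs : ∀ w, w ∈ r.support ↔ w = a ∨ w = b ∨ w ∈ J s(a, b) := by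
      intro w
      rw [hI]
      unfold Walk.IsInternalVertex
      constructor
      · intro h; by_cases h1 : w = a <;> by_cases h2 : w = b <;> tauto
      · rintro (rfl | rfl | h)
        · simp
        · simp
        · exact h.1
    have hedge : ∀ e ∈ p.edges, e ∈ A.edgeSet := fun e he => p.edges_subset_edgeSet he
    refine ⟨r.append q, append_isPath hr hq ?_, ?_⟩
    · intro w hw hw'
      rw [hrs] at hw
      rw [hqs] at hw'
      rcases hw with rfl | rfl | hw
      · rcases hw' with hw' | ⟨e, he, hw'⟩
        · exact absurd hw' hp.2
        · exact absurd haS (hJS e (hedge e he) _ hw')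
      · rfl
      · rcases hw' with hw' | ⟨e, he, hw'⟩
        · exact absurd (hS w (by simp [hw'])) (hJS _ h w hw)
        · refine absurd hw' (hJJ s(a, b) h e (hedge e he) ?_ w hw)
          rintro rfl
          exact hp.2 (p.fst_mem_support_of_mem_edges he)
    · intro w
      rw [Walk.mem_support_append_iff, hrs, hqs]
      simp only [Walk.support_cons, Walk.edges_cons, List.mem_cons, exists_eq_or_imp]
      constructor
      · rintro ((rfl | rfl | h) | h | h) <;> simp_all
      · rintro ((rfl | h) | h | h) <;> simp_all

end SubdivPack
namespace SubdivPack
open scoped Classical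

lemma sym2_aux {V : Type*} {a b p q : V} (hab : a ≠ b) (ha : a = p ∨ a = q)
    (hb : b = p ∨ b = q) : s(a, b) = s(p, q) := by
  rcases ha with rfl | rfl <;> rcases hb with rfl | rfl
  · exact absurd rfl hab
  · rfl
  · exact Sym2.eq_swap
  · exact absurd rfl hab

lemma or_aux {P Q S : Prop} (h : P ∨ Q ∨ S) (n : ¬ S) : P ∨ Q := by tauto

/-- Turning a topological copy of `F` in the auxiliary graph into a subdivision in `G`. -/
lemma transfer {α V ι : Type*} {F : SimpleGraph α} (hFiso : ∀ a : α, ∃ b : α, F.Adj a b)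
    [Nonempty α] {G A : SimpleGraph V} {R : Finset V} {T : Finset ι} {seg : ι → Set V}
    (hsegR : ∀ i ∈ T, ∀ w ∈ seg i, w ∉ R)
    (hseg : ∀ i ∈ T, ∀ j ∈ T, i ≠ j → ∀ w ∈ seg i, w ∉ seg j)
    (e : ι → Sym2 V) (he : Set.InjOn e T)
    (hA : ∀ a b, A.Adj a b → ∃ i ∈ T, e i = s(a, b) ∧ ∃ E, ConnE G a b (seg i) E)
    {f : α → V} {I : α → α → Set V} {E : α → α → Set (Sym2 V)}
    (hM : IsModel F A (R : Set V) f I E) :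
    ∃ (X : Finset V) (J : Finset ι) (H : G.Subgraph), X ⊆ R ∧ J ⊆ T ∧ J.Nonempty ∧
      X.card ≤ 2 * J.card ∧ H.verts = ↑X ∪ ⋃ i ∈ J, seg i ∧ F.IsSubdivision H.coe := by
  set Jf : Sym2 V → Set V := fun s => {w | ∃ i ∈ T, e i = s ∧ w ∈ seg i} with hJf
  have hAe : ∀ s ∈ A.edgeSet, ∃ i ∈ T, e i = s := by
    intro s hs
    induction s using Sym2.ind with
    | _ a b =>
      obtain ⟨i, hi, h, _⟩ := hA a b hs
      exact ⟨i, hi, h⟩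
  have hJS : ∀ s ∈ A.edgeSet, ∀ w ∈ Jf s, w ∉ (R : Set V) := by
    rintro s - w ⟨i, hi, -, hw⟩
    exact hsegR i hi w hw
  have hJJ : ∀ s ∈ A.edgeSet, ∀ s' ∈ A.edgeSet, s ≠ s' → ∀ w ∈ Jf s, w ∉ Jf s' := by
    rintro s - s' - hne w ⟨i, hi, rfl, hw⟩ ⟨j, hj, rfl, hw'⟩
    exact hseg i hi j hj (fun h => hne (by rw [h])) w hw hw'
  have hJ : ∀ a b, A.Adj a b → ∃ E, ConnE G a b (Jf s(a, b)) E := by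
    intro a b hab
    obtain ⟨i, hi, hei, E', hE'⟩ := hA a b hab
    refine ⟨E', ?_⟩
    have : Jf s(a, b) = seg i := by
      ext w
      constructor
      · rintro ⟨j, hj, hej, hw⟩
        have : j = i := he hj hi (hej.trans hei.symm)
        rwa [← this]
      · intro hw; exact ⟨i, hi, hei, hw⟩
    rwa [this]
  set I' : α → α → Set V := fun u v => I u v ∪ {w | ∃ s ∈ E u v, w ∈ Jf s} with hI'
  have hEA : ∀ u v, F.Adj u v → ∀ s ∈ E u v, s ∈ A.edgeSet := by
    intro u v h s hs
    obtain ⟨p, _, _, _, hE⟩ := hM.conn u v h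
    exact p.edges_subset_edgeSet ((hE s).1 hs)
  -- vertices of edges
  have hEv : ∀ u v, F.Adj u v → ∀ s ∈ E u v, ∀ w ∈ s, w = f u ∨ w = f v ∨ w ∈ I u v := by
    intro u v h s hs w hw
    obtain ⟨p, _, _, hI, hE⟩ := hM.conn u v h
    have h1 : w ∈ p.support := Walk.mem_support_iff_exists_mem_edges.2 (Or.inr ⟨s, (hE s).1 hs, hw⟩)
    by_cases h2 : w = f u
    · exact Or.inl h2
    by_cases h3 : w = f v
    · exact Or.inr (Or.inl h3)
    · exact Or.inr (Or.inr ((hI w).2 ⟨h1, h2, h3⟩))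
  have hvE : ∀ u v, F.Adj u v → ∀ w, (w = f u ∨ w = f v ∨ w ∈ I u v) → ∃ s ∈ E u v, w ∈ s := by
    intro u v h w hw
    obtain ⟨p, _, hne, hI, hE⟩ := hM.conn u v h
    have h1 : w ∈ p.support := by
      rcases hw with rfl | rfl | hw
      · simp
      · simp
      · exact ((hI w).1 hw).1
    obtain ⟨s, hs, hws⟩ := (Walk.mem_support_iff_exists_mem_edges_of_not_nil
      (fun hn => hne hn.eq)).1 h1
    exact ⟨s, (hE s).2 hs, hws⟩
  have hEE : ∀ u v u' v', F.Adj u v → F.Adj u' v' → s(u, v) ≠ s(u', v') →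
      ∀ s ∈ E u v, s ∉ E u' v' := by
    intro u v u' v' h h' hne s hs hs'
    have hnI : ∀ w ∈ s, w ∉ I u v ∧ w ∉ I u' v' := by
      intro w hw
      have h1 := hEv u v h s hs w hw
      have h2 := hEv u' v' h' s hs' w hw
      constructor
      · intro h3
        have h4 := hM.avoid u v h w h3
        rcases h2 with h2 | h2 | h2
        · exact h4 ⟨_, h2.symm⟩
        · exact h4 ⟨_, h2.symm⟩
        · exact hM.disj u v u' v' h h' hne w h3 h2
      · intro h3
        have h4 := hM.avoid u' v' h' w h3
        rcases h1 with h1 | h1 | h1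
        · exact h4 ⟨_, h1.symm⟩
        · exact h4 ⟨_, h1.symm⟩
        · exact hM.disj u v u' v' h h' hne w h1 h3
    have hA' := hEA u v h s hs
    induction s using Sym2.ind with
    | _ a b =>
      have hab : a ≠ b := A.ne_of_adj hA'
      have a1 := hEv u v h _ hs a (by simp)
      have a2 := hEv u' v' h' _ hs' a (by simp)
      have b1 := hEv u v h _ hs b (by simp)
      have b2 := hEv u' v' h' _ hs' b (by simp)
      have na := hnI a (by simp)
      have nb := hnI b (by simp)
      have e1 : s(a, b) = s(f u, f v) := sym2_aux hab (or_aux a1 na.1) (or_aux b1 nb.1)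
      have e2 : s(a, b) = s(f u', f v') := sym2_aux hab (or_aux a2 na.2) (or_aux b2 nb.2)
      apply hne
      apply Sym2.map.injective hM.inj
      simpa using e1.symm.trans e2
  have hIR : ∀ u v, F.Adj u v → ∀ w ∈ I u v, w ∈ R := fun u v h w hw => by
    exact_mod_cast hM.sub u v h hw
  have hfR : ∀ u, f u ∈ R := fun u => by exact_mod_cast hM.mem u
  obtain ⟨H, hHv, hH⟩ := exists_subgraph (F := F) (G := G) (f := f) (I := I') hM.inj
    (by intro u v; simp only [hI', hM.symmI u v, hM.symmE u v])
    (by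
      intro u v h
      obtain ⟨p, hp, hne, hI, hE⟩ := hM.conn u v h
      obtain ⟨q, hq, hqs⟩ := subst_walk (R : Set V) Jf hJ hJS hJJ p hp (by
        intro w hw
        by_cases h2 : w = f u
        · rw [h2]; exact hfR u
        by_cases h3 : w = f v
        · rw [h3]; exact hfR v
        exact hIR u v h w ((hI w).2 ⟨hw, h2, h3⟩))
      refine ⟨{s | s ∈ q.edges}, q, hq, hne, ?_, fun _ => Iff.rfl⟩
      intro w
      unfold Walk.IsInternalVertex
      rw [hqs]
      simp only [hI', Set.mem_union, Set.mem_setOf_eq, hI, hE]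
      unfold Walk.IsInternalVertex
      constructor
      · rintro (⟨h1, h2⟩ | ⟨s, hs, hw⟩)
        · exact ⟨Or.inl h1, h2⟩
        · have := hJS s (hEA u v h s ((hE s).2 hs)) w hw
          refine ⟨Or.inr ⟨s, hs, hw⟩, ?_, ?_⟩
          · rintro rfl; exact this (hfR u)
          · rintro rfl; exact this (hfR v)
      · rintro ⟨h1 | h1, h2⟩
        · exact Or.inl ⟨h1, h2⟩
        · exact Or.inr h1)
    (by
      rintro u v h w (hw | ⟨s, hs, hw⟩)
      · exact hM.avoid u v h w hw
      · rintro ⟨a, rfl⟩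
        exact hJS s (hEA u v h s hs) _ hw (hfR a))
    (by
      rintro u v u' v' h h' hne w (hw | ⟨s, hs, hw⟩) (hw' | ⟨s', hs', hw'⟩)
      · exact hM.disj u v u' v' h h' hne w hw hw'
      · exact hJS s' (hEA u' v' h' s' hs') w hw' (hIR u v h w hw)
      · exact hJS s (hEA u v h s hs) w hw (hIR u' v' h' w hw')
      · by_cases hss : s = s'
        · subst hss
          exact hEE u v u' v' h h' hne s hs hs'
        · exact hJJ s (hEA u v h s hs) s' (hEA u' v' h' s' hs') hss w hw hw')
  set X : Finset V := R.filter (fun w => w ∈ Set.range f ∨ ∃ u v, F.Adj u v ∧ w ∈ I u v) with hX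
  set J : Finset ι := T.filter (fun i => ∃ u v, F.Adj u v ∧ e i ∈ E u v) with hJdef
  have hXJ : X ⊆ J.biUnion (fun i => (e i).toFinset) := by
    intro w hw
    have : ∃ u v, F.Adj u v ∧ (w = f u ∨ w = f v ∨ w ∈ I u v) := by
      rcases (Finset.mem_filter.1 hw).2 with ⟨a, rfl⟩ | ⟨u, v, h, hw⟩
      · obtain ⟨b, hb⟩ := hFiso a
        exact ⟨a, b, hb, Or.inl rfl⟩
      · exact ⟨u, v, h, Or.inr (Or.inr hw)⟩
    obtain ⟨u, v, h, hw'⟩ := this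
    obtain ⟨s, hs, hws⟩ := hvE u v h w hw'
    obtain ⟨i, hi, rfl⟩ := hAe s (hEA u v h s hs)
    rw [Finset.mem_biUnion]
    exact ⟨i, Finset.mem_filter.2 ⟨hi, u, v, h, hs⟩, by simpa using hws⟩
  have hXcard : X.card ≤ 2 * J.card := by
    refine (Finset.card_le_card hXJ).trans ?_
    rw [mul_comm]
    refine Finset.card_biUnion_le_card_mul _ _ _ ?_
    intro i _
    rw [Sym2.card_toFinset]
    split_ifs <;> omega
  have hXne : X.Nonempty := by
    obtain ⟨a⟩ := ‹Nonempty α›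
    exact ⟨f a, Finset.mem_filter.2 ⟨hfR a, Or.inl ⟨a, rfl⟩⟩⟩
  refine ⟨X, J, H, Finset.filter_subset _ _, Finset.filter_subset _ _, ?_, hXcard, ?_, hH⟩
  · have := hXne.card_pos
    rw [← Finset.card_pos]; omega
  · rw [hHv]
    ext w
    simp only [hI', hX, hJdef, Set.mem_union, Set.mem_setOf_eq, Finset.coe_filter, Set.mem_iUnion,
      Finset.mem_filter, hJf]
    constructor
    · rintro (h | ⟨u, v, h, h1 | ⟨s, hs, i, hi, rfl, hw⟩⟩)
      · refine Or.inl ⟨?_, Or.inl h⟩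
        obtain ⟨a, rfl⟩ := h
        exact hfR a
      · exact Or.inl ⟨hIR u v h w h1, Or.inr ⟨u, v, h, h1⟩⟩
      · exact Or.inr ⟨i, ⟨hi, u, v, h, hs⟩, hw⟩
    · rintro (⟨_, h | ⟨u, v, h, h1⟩⟩ | ⟨i, ⟨hi, u, v, h, hs⟩, hw⟩)
      · exact Or.inl h
      · exact Or.inr ⟨u, v, h, Or.inl h1⟩
      · exact Or.inr ⟨u, v, h, Or.inr ⟨_, hs, i, hi, rfl, hw⟩⟩

/-- The extension step. -/
lemma core {α V ι : Type*} {F : SimpleGraph α} (hFiso : ∀ a : α, ∃ b : α, F.Adj a b)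
    [Nonempty α] {C : ℕ}
    (hC : ∀ (A : SimpleGraph V) (W : Finset V), W.Nonempty →
      C * W.card ≤ E2 A W → ∃ f I E, IsModel F A (W : Set V) f I E)
    {G : SimpleGraph V} {R : Finset V} {T : Finset ι} {seg : ι → Set V}
    (hsegR : ∀ i ∈ T, ∀ w ∈ seg i, w ∉ R)
    (hseg : ∀ i ∈ T, ∀ j ∈ T, i ≠ j → ∀ w ∈ seg i, w ∉ seg j)
    (NA NB : ι → Finset V) (hNA : ∀ i ∈ T, NA i ⊆ R) (hNB : ∀ i ∈ T, NB i ⊆ R)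
    (cA : ∀ i ∈ T, C + 1 ≤ (NA i).card) (cB : ∀ i ∈ T, C + 1 ≤ (NB i).card)
    (hconn : ∀ i ∈ T, ∀ x ∈ NA i, ∀ y ∈ NB i, x ≠ y → ∃ E, ConnE G x y (seg i) E)
    (hTne : T.Nonempty) (hTC : C * R.card ≤ 2 * T.card) :
    ∃ (X : Finset V) (J : Finset ι) (H : G.Subgraph), X ⊆ R ∧ J ⊆ T ∧ J.Nonempty ∧
      X.card ≤ 2 * J.card ∧ H.verts = ↑X ∪ ⋃ i ∈ J, seg i ∧ F.IsSubdivision H.coe := by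
  set good : Finset ι → Prop := fun J => ∃ x y : ι → V,
    (∀ i ∈ J, x i ∈ NA i ∧ y i ∈ NB i ∧ x i ≠ y i) ∧
    Set.InjOn (fun i => s(x i, y i)) J with hgood
  obtain ⟨i00, hi00⟩ := hTne
  have hg0 : good ∅ := by
    have : Nonempty V := by
      have := cA i00 hi00
      have h : (NA i00).Nonempty := by rw [← Finset.card_pos]; omega
      exact ⟨h.choose⟩
    obtain ⟨v⟩ := this
    exact ⟨fun _ => v, fun _ => v, by simp, by simp⟩
  obtain ⟨J, hJ, hmax⟩ := Finset.exists_max_image (T.powerset.filter good) Finset.card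
    ⟨∅, by simp [hg0]⟩
  rw [Finset.mem_filter, Finset.mem_powerset] at hJ
  obtain ⟨hJT, x, y, hxy, hinj⟩ := hJ
  obtain ⟨A, hA⟩ : ∃ A : SimpleGraph V,
    A = SimpleGraph.fromEdgeSet (Set.image (fun i => s(x i, y i)) (J : Set ι)) := ⟨_, rfl⟩
  have hAadj : ∀ a b, A.Adj a b → ∃ i ∈ J, s(x i, y i) = s(a, b) := by
    intro a b hab
    rw [hA, fromEdgeSet_adj] at hab
    obtain ⟨⟨i, hi, h⟩, _⟩ := hab
    exact ⟨i, hi, h⟩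
  suffices hW : ∃ W : Finset V, W ⊆ R ∧ W.Nonempty ∧ C * W.card ≤ E2 A W by
    obtain ⟨W, hWR, hWne, hWE⟩ := hW
    obtain ⟨f, I, E, hM⟩ := hC A W hWne hWE
    obtain ⟨X, J', H, h1, h2, h3⟩ := transfer (G := G) (T := J) (seg := seg) (R := R) hFiso
      (fun i hi => hsegR i (hJT hi)) (fun i hi j hj => hseg i (hJT hi) j (hJT hj))
      (fun i => s(x i, y i)) hinj (by
        intro a b hab
        obtain ⟨i, hi, h⟩ := hAadj a b hab
        refine ⟨i, hi, h, ?_⟩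
        obtain ⟨k1, k2, k3⟩ := hxy i hi
        obtain ⟨E', hE'⟩ := hconn i (hJT hi) (x i) k1 (y i) k2 k3
        refine ⟨E', ?_⟩
        rcases Sym2.eq_iff.1 h with ⟨rfl, rfl⟩ | ⟨rfl, rfl⟩
        · exact hE'
        · exact hE'.symm) (hM.mono (by exact_mod_cast hWR))
    exact ⟨X, J', H, h1, h2.trans hJT, h3⟩
  by_cases hJe : J = T
  · refine ⟨R, subset_rfl, ?_, hTC.trans ?_⟩
    · have := cA i00 hi00
      have h : (NA i00).Nonempty := by rw [← Finset.card_pos]; omega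
      exact h.mono (hNA i00 hi00)
    · have hx : ∀ i ∈ T, x i ∈ R := fun i hi => hNA i hi (hxy i (hJe ▸ hi)).1
      have hy : ∀ i ∈ T, y i ∈ R := fun i hi => hNB i hi (hxy i (hJe ▸ hi)).2.1
      have hne : ∀ i ∈ T, x i ≠ y i := fun i hi => (hxy i (hJe ▸ hi)).2.2
      rw [hJe] at hinj
      have hadj : ∀ i ∈ T, A.Adj (x i) (y i) := by
        intro i hi
        rw [hA, fromEdgeSet_adj]
        exact ⟨⟨i, by rw [hJe]; exact hi, rfl⟩, hne i hi⟩
      have hE2 : E2 A R = (R.sigma (fun a => R.filter (A.Adj a))).card := by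
        rw [Finset.card_sigma]; rfl
      set S1 : Finset (Σ _ : V, V) := T.image (fun i => ⟨x i, y i⟩) with hS1
      set S2 : Finset (Σ _ : V, V) := T.image (fun i => ⟨y i, x i⟩) with hS2
      have c1 : S1.card = T.card := by
        apply Finset.card_image_of_injOn
        intro i hi j hj hij
        simp only [Sigma.mk.injEq, heq_eq_eq] at hij
        exact hinj hi hj (by simp [hij.1, hij.2])
      have c2 : S2.card = T.card := by
        apply Finset.card_image_of_injOn
        intro i hi j hj hij
        simp only [Sigma.mk.injEq, heq_eq_eq] at hij
        exact hinj hi hj (by simp [hij.1, hij.2])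
      have hd : Disjoint S1 S2 := by
        rw [Finset.disjoint_left]
        intro z hz hz'
        obtain ⟨i, hi, rfl⟩ := Finset.mem_image.1 hz
        obtain ⟨j, hj, hij⟩ := Finset.mem_image.1 hz'
        simp only [Sigma.mk.injEq, heq_eq_eq] at hij
        have : j = i := hinj hj hi (by
          show s(x j, y j) = s(x i, y i)
          rw [hij.1, hij.2, Sym2.eq_swap])
        subst this
        exact hne j hj hij.2
      rw [hE2, two_mul]
      nth_rewrite 1 [← c1]
      rw [← c2, ← Finset.card_union_of_disjoint hd]
      apply Finset.card_le_card
      intro z hz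
      rw [Finset.mem_union] at hz
      rcases hz with hz | hz
      · obtain ⟨i, hi, rfl⟩ := Finset.mem_image.1 hz
        simp only [Finset.mem_sigma, Finset.mem_filter]
        exact ⟨hx i hi, hy i hi, hadj i hi⟩
      · obtain ⟨i, hi, rfl⟩ := Finset.mem_image.1 hz
        simp only [Finset.mem_sigma, Finset.mem_filter]
        exact ⟨hy i hi, hx i hi, (hadj i hi).symm⟩
  · obtain ⟨i0, hi0, hi0J⟩ : ∃ i0 ∈ T, i0 ∉ J := by
      by_contra h
      push Not at h
      exact hJe (Finset.Subset.antisymm hJT h)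
    have hfull : ∀ a ∈ NA i0, ∀ b ∈ NB i0, a ≠ b → A.Adj a b := by
      intro a ha b hb hab
      rw [hA, fromEdgeSet_adj]
      refine ⟨?_, hab⟩
      by_contra hnot
      have hg : good (insert i0 J) := by
        refine ⟨Function.update x i0 a, Function.update y i0 b, ?_, ?_⟩
        · intro i hi
          by_cases h : i = i0
          · subst h; simp [ha, hb, hab]
          · have : i ∈ J := by simpa [h] using hi
            simpa [Function.update_of_ne h] using hxy i this
        · have key : ∀ i ∈ J, s(x i, y i) ≠ s(a, b) := fun i hi h => hnot ⟨i, hi, h⟩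
          have hJi : ∀ i ∈ J, i ≠ i0 := fun i hi h => hi0J (h ▸ hi)
          intro i hi j hj hij
          simp only [Finset.coe_insert, Set.mem_insert_iff, Finset.mem_coe] at hi hj
          rcases hi with rfl | hi <;> rcases hj with rfl | hj
          · rfl
          · exfalso
            simp only [Function.update_self, Function.update_of_ne (hJi j hj)] at hij
            exact key j hj hij.symm
          · exfalso
            simp only [Function.update_self, Function.update_of_ne (hJi i hi)] at hij
            exact key i hi hij
          · simp only [Function.update_of_ne (hJi i hi), Function.update_of_ne (hJi j hj)] at hij
            exact hinj hi hj hij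
      have := hmax (insert i0 J) (by
        rw [Finset.mem_filter, Finset.mem_powerset]
        exact ⟨Finset.insert_subset hi0 hJT, hg⟩)
      rw [Finset.card_insert_of_notMem hi0J] at this
      omega
    refine ⟨NA i0 ∪ NB i0, Finset.union_subset (hNA i0 hi0) (hNB i0 hi0), ?_, ?_⟩
    · have := cA i0 hi0
      have h : (NA i0).Nonempty := by rw [← Finset.card_pos]; omega
      exact h.mono Finset.subset_union_left
    · unfold E2
      rw [mul_comm, ← smul_eq_mul]
      apply Finset.card_nsmul_le_sum
      intro w hw
      rw [Finset.mem_union] at hw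
      unfold dg
      rcases hw with hw | hw
      · have h1 : (NB i0).erase w ⊆ (NA i0 ∪ NB i0).filter (A.Adj w) := by
          intro z hz
          rw [Finset.mem_erase] at hz
          exact Finset.mem_filter.2 ⟨Finset.mem_union_right _ hz.2, hfull w hw z hz.2 hz.1.symm⟩
        have h2 := Finset.card_le_card h1
        have h3 := Finset.pred_card_le_card_erase (s := NB i0) (a := w)
        have := cB i0 hi0
        omega
      · have h1 : (NA i0).erase w ⊆ (NA i0 ∪ NB i0).filter (A.Adj w) := by
          intro z hz
          rw [Finset.mem_erase] at hz
          exact Finset.mem_filter.2 ⟨Finset.mem_union_left _ hz.2, (hfull z hz.2 w hw hz.1).symm⟩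
        have h2 := Finset.card_le_card h1
        have h3 := Finset.pred_card_le_card_erase (s := NA i0) (a := w)
        have := cA i0 hi0
        omega

end SubdivPack
namespace SubdivPack
open scoped Classical

/-- colour class -/
noncomputable def cls {V κ : Type*} [Fintype V] (χ : V → κ) (j : κ) : Finset V :=
  Finset.univ.filter (fun v => χ v = j)

lemma mem_cls {V κ : Type*} [Fintype V] {χ : V → κ} {j : κ} {v : V} :
    v ∈ cls χ j ↔ χ v = j := by simp [cls]

lemma sum_cross {V κ : Type*} [Fintype V] [Fintype κ] (u w : V) (huw : u ≠ w) (g h : κ → ℝ)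
    (hg : ∑ c, g c = 0) : ∑ χ : V → κ, g (χ u) * h (χ w) = 0 := by
  rw [← (Equiv.funSplitAt u κ).symm.sum_comp (fun χ : V → κ => g (χ u) * h (χ w)),
    Fintype.sum_prod_type, Finset.sum_comm]
  apply Finset.sum_eq_zero
  intro y _
  have : ∀ x : κ, g ((Equiv.funSplitAt u κ).symm (x, y) u) *
      h ((Equiv.funSplitAt u κ).symm (x, y) w) = g x * h (y ⟨w, huw.symm⟩) := by
    intro x
    simp [Equiv.funSplitAt, Equiv.piSplitAt, huw.symm]
  simp only [this]
  rw [← Finset.sum_mul, hg, zero_mul]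

lemma exists_small_var {V κ : Type*} [Fintype V] [Fintype κ] [Nonempty κ] (G : SimpleGraph V)
    (N : ℕ) (hN : Fintype.card κ = N)
    (D : ℝ) (hD : ∀ v, (dg G Finset.univ v : ℝ) ≤ D) :
    ∃ χ : V → κ, ∑ v, ∑ j, ((N : ℝ) * dg G (cls χ j) v - dg G Finset.univ v) ^ 2
      ≤ N ^ 2 * D * Fintype.card V := by
  set a : κ → κ → ℝ := fun j c => (N : ℝ) * (if c = j then 1 else 0) - 1 with ha
  have hNpos : (1 : ℝ) ≤ N := by
    rw [← hN]; exact_mod_cast Fintype.card_pos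
  have ha0 : ∀ j, ∑ c, a j c = 0 := by
    intro j
    simp [ha, Finset.sum_sub_distrib, hN]
  have hrep : ∀ (χ : V → κ) v j, (N : ℝ) * dg G (cls χ j) v - dg G Finset.univ v =
      ∑ u ∈ Finset.univ.filter (G.Adj v), a j (χ u) := by
    intro χ v j
    simp only [ha, Finset.sum_sub_distrib, ← Finset.mul_sum, dg]
    congr 1
    · congr 1
      rw [Finset.sum_boole, Finset.filter_filter, cls, Finset.filter_filter]
      congr 2
      ext x; simp [and_comm]
    · simp
  have hdiag : ∀ c : κ, ∑ j, a j c * a j c ≤ (N : ℝ) ^ 2 := by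
    intro c
    have h1 : ∀ j, a j c * a j c = ((N : ℝ) ^ 2 - 2 * N) * (if c = j then 1 else 0) + 1 := by
      intro j
      simp only [ha]
      split_ifs <;> ring
    simp only [h1, Finset.sum_add_distrib, ← Finset.mul_sum]
    simp [hN]
    nlinarith
  have hv : ∀ v, ∑ χ : V → κ, ∑ j, ((N : ℝ) * dg G (cls χ j) v - dg G Finset.univ v) ^ 2
      ≤ ∑ χ : V → κ, (N : ℝ) ^ 2 * D := by
    intro v
    set S := Finset.univ.filter (G.Adj v) with hS
    have e1 : ∑ χ : V → κ, ∑ j, ((N : ℝ) * dg G (cls χ j) v - dg G Finset.univ v) ^ 2 =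
        ∑ u ∈ S, ∑ w ∈ S, ∑ j, ∑ χ : V → κ, a j (χ u) * a j (χ w) := by
      simp only [hrep, ← hS, sq, Finset.sum_mul_sum]
      rw [Finset.sum_comm]
      have : ∀ y : κ, ∑ x : V → κ, ∑ i ∈ S, ∑ j ∈ S, a y (x i) * a y (x j) =
          ∑ i ∈ S, ∑ j ∈ S, ∑ x : V → κ, a y (x i) * a y (x j) := by
        intro y
        rw [Finset.sum_comm]
        apply Finset.sum_congr rfl
        intro i _
        rw [Finset.sum_comm]
      simp only [this]
      rw [Finset.sum_comm]
      apply Finset.sum_congr rfl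
      intro i _
      rw [Finset.sum_comm]
    have e2 : ∀ u ∈ S, ∑ w ∈ S, ∑ j, ∑ χ : V → κ, a j (χ u) * a j (χ w) ≤
        ∑ χ : V → κ, (N : ℝ) ^ 2 := by
      intro u hu
      rw [Finset.sum_eq_single_of_mem u hu]
      · rw [Finset.sum_comm]
        exact Finset.sum_le_sum (fun χ _ => hdiag (χ u))
      · intro w _ hw
        apply Finset.sum_eq_zero
        intro j _
        exact sum_cross u w hw.symm (a j) (a j) (ha0 j)
    rw [e1]
    refine (Finset.sum_le_sum e2).trans ?_
    rw [Finset.sum_const, ← Finset.sum_mul, nsmul_eq_mul, mul_comm]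
    refine mul_le_mul_of_nonneg_left (hD v) ?_
    positivity
  by_contra hcon
  push Not at hcon
  have h1 : ∑ χ : V → κ, ∑ v, ∑ j, ((N : ℝ) * dg G (cls χ j) v - dg G Finset.univ v) ^ 2
      ≤ ∑ χ : V → κ, (N : ℝ) ^ 2 * D * Fintype.card V := by
    rw [Finset.sum_comm]
    refine (Finset.sum_le_sum (fun v _ => hv v)).trans ?_
    simp only [Finset.sum_const, nsmul_eq_mul, Finset.card_univ]
    apply le_of_eq; ring
  have h2 : ∑ χ : V → κ, (N : ℝ) ^ 2 * D * Fintype.card V <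
      ∑ χ : V → κ, ∑ v, ∑ j, ((N : ℝ) * dg G (cls χ j) v - dg G Finset.univ v) ^ 2 :=
    Finset.sum_lt_sum_of_nonempty Finset.univ_nonempty (fun χ _ => hcon χ)
  linarith

/-- The random colouring: almost all vertices see every colour the right number of times. -/
lemma exists_colouring {V κ : Type*} [Fintype V] [Fintype κ] [Nonempty κ] (G : SimpleGraph V)
    (N : ℕ) (hN : Fintype.card κ = N) (ε d : ℝ) (hε : 0 < ε) (hε1 : ε ≤ 1) (hd : 0 < d)
    (hdN : 2 * (N : ℝ) ^ 2 ≤ ε ^ 3 * d)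
    (hdeg : ∀ v, (1 - ε) * d ≤ dg G Finset.univ v ∧ (dg G Finset.univ v : ℝ) ≤ (1 + ε) * d) :
    ∃ (χ : V → κ) (B : Finset V), (B.card : ℝ) ≤ ε * Fintype.card V ∧
      ∀ v, v ∉ B → ∀ j, (1 - 2 * ε) * d ≤ N * dg G (cls χ j) v ∧
        (N : ℝ) * dg G (cls χ j) v ≤ (1 + 2 * ε) * d := by
  obtain ⟨χ, hχ⟩ := exists_small_var (κ := κ) G N hN (2 * d)
    (fun v => (hdeg v).2.trans (by nlinarith))
  refine ⟨χ, Finset.univ.filter (fun v => ∃ j, ε * d <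
    |(N : ℝ) * dg G (cls χ j) v - dg G Finset.univ v|), ?_, ?_⟩
  · set B := Finset.univ.filter (fun v => ∃ j, ε * d <
      |(N : ℝ) * dg G (cls χ j) v - dg G Finset.univ v|) with hB
    have h1 : (B.card : ℝ) * (ε * d) ^ 2 ≤
        ∑ v, ∑ j, ((N : ℝ) * dg G (cls χ j) v - dg G Finset.univ v) ^ 2 := by
      rw [← nsmul_eq_mul]
      refine (Finset.card_nsmul_le_sum B
        (fun v => ∑ j, ((N : ℝ) * dg G (cls χ j) v - dg G Finset.univ v) ^ 2) _ ?_).trans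
        (Finset.sum_le_sum_of_subset_of_nonneg (Finset.subset_univ _)
          (fun v _ _ => Finset.sum_nonneg (fun j _ => sq_nonneg _)))
      intro v hv
      obtain ⟨j, hj⟩ := (Finset.mem_filter.1 hv).2
      refine le_trans ?_ (Finset.single_le_sum (fun j _ => sq_nonneg _) (Finset.mem_univ j))
      rw [← sq_abs ((N : ℝ) * dg G (cls χ j) v - dg G Finset.univ v)]
      have : 0 < ε * d := by positivity
      gcongr
    have h2 := h1.trans hχ
    have hc : (0 : ℝ) ≤ Fintype.card V := by positivity
    have h3 : (N : ℝ) ^ 2 * (2 * d) * Fintype.card V ≤ ε ^ 3 * d * d * Fintype.card V := by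
      have : (N : ℝ) ^ 2 * (2 * d) ≤ ε ^ 3 * d * d := by nlinarith
      exact mul_le_mul_of_nonneg_right this hc
    have h4 : 0 < (ε * d) ^ 2 := by positivity
    refine le_of_mul_le_mul_right ?_ h4
    calc (B.card : ℝ) * (ε * d) ^ 2 ≤ ε ^ 3 * d * d * Fintype.card V := h2.trans h3
      _ = _ := by ring
  · intro v hv j
    have : |(N : ℝ) * dg G (cls χ j) v - dg G Finset.univ v| ≤ ε * d := by
      by_contra h
      push Not at h
      exact hv (Finset.mem_filter.2 ⟨Finset.mem_univ _, j, h⟩)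
    rw [abs_le] at this
    have := hdeg v
    constructor <;> nlinarith

end SubdivPack
namespace SubdivPack
open scoped Classical

lemma dg_comm {V : Type*} (G : SimpleGraph V) (S T : Finset V) :
    ∑ v ∈ S, dg G T v = ∑ u ∈ T, dg G S u := by
  unfold dg
  simp only [Finset.card_filter]
  rw [Finset.sum_comm]
  simp only [G.adj_comm]

lemma dg_le_univ {V : Type*} [Fintype V] (G : SimpleGraph V) (S : Finset V) (v : V) :
    dg G S v ≤ dg G Finset.univ v :=
  Finset.card_le_card (Finset.filter_subset_filter _ (Finset.subset_univ _))

/-- Hall's theorem with deficiency. -/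
lemma hall_deficiency {ι V : Type*} [hV : Nonempty V] (I : Finset ι) (t : ι → Finset V) (D : ℕ)
    (h : ∀ S ⊆ I, S.card ≤ (S.biUnion t).card + D) :
    ∃ (I' : Finset ι) (f : ι → V), I' ⊆ I ∧ Set.InjOn f I' ∧ (∀ x ∈ I', f x ∈ t x) ∧
      I.card ≤ I'.card + D := by
  have key := (Finset.all_card_le_biUnion_card_iff_exists_injective
    (fun x : I => (t x.1).disjSum (Finset.univ : Finset (Fin D)))).1 (by
      intro s
      rcases s.eq_empty_or_nonempty with rfl | ⟨x0, hx0⟩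
      · simp
      have h1 := h (s.image Subtype.val) (by
        intro x hx
        obtain ⟨y, _, rfl⟩ := Finset.mem_image.1 hx
        exact y.2)
      rw [Finset.card_image_of_injective _ Subtype.val_injective] at h1
      refine h1.trans ?_
      have h2 : ((s.image Subtype.val).biUnion t).disjSum (Finset.univ : Finset (Fin D)) ⊆
          s.biUnion (fun x : I => (t x.1).disjSum (Finset.univ : Finset (Fin D))) := by
        intro z hz
        rw [Finset.mem_biUnion]
        rcases z with z | z
        · rw [Finset.inl_mem_disjSum, Finset.mem_biUnion] at hz
          obtain ⟨x, hx, hz⟩ := hz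
          obtain ⟨y, hy, rfl⟩ := Finset.mem_image.1 hx
          exact ⟨y, hy, Finset.inl_mem_disjSum.2 hz⟩
        · exact ⟨x0, hx0, Finset.inr_mem_disjSum.2 (Finset.mem_univ _)⟩
      have h3 := Finset.card_le_card h2
      rw [Finset.card_disjSum, Finset.card_univ, Fintype.card_fin] at h3
      exact h3)
  obtain ⟨g, hg, hgt⟩ := key
  set Lf : Finset I := Finset.univ.filter (fun x => (g x).isLeft) with hLf
  set Rt : Finset I := Finset.univ.filter (fun x => ¬ (g x).isLeft) with hRt
  have hcard : Lf.card + Rt.card = I.card := by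
    rw [Finset.card_filter_add_card_filter_not]; simp
  have hRtD : Rt.card ≤ D := by
    have : Rt.image g ⊆ (Finset.univ : Finset (Fin D)).image Sum.inr := by
      intro z hz
      obtain ⟨x, hx, rfl⟩ := Finset.mem_image.1 hz
      have := (Finset.mem_filter.1 hx).2
      rcases hgx : g x with y | y
      · simp [hgx] at this
      · simp
    have := Finset.card_le_card this
    rw [Finset.card_image_of_injective _ hg, Finset.card_image_of_injective _ Sum.inr_injective] at this
    simpa using this
  obtain ⟨v0⟩ := hV
  refine ⟨Lf.image Subtype.val, fun x => if hx : x ∈ I then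
    (match g ⟨x, hx⟩ with | Sum.inl y => y | Sum.inr _ => v0) else v0, ?_, ?_, ?_, ?_⟩
  · intro x hx
    obtain ⟨y, _, rfl⟩ := Finset.mem_image.1 hx
    exact y.2
  · intro x hx y hy hxy
    obtain ⟨x, hx1, rfl⟩ := Finset.mem_image.1 (Finset.mem_coe.1 hx)
    obtain ⟨y, hy1, rfl⟩ := Finset.mem_image.1 (Finset.mem_coe.1 hy)
    have hx' := (Finset.mem_filter.1 hx1).2
    have hy' := (Finset.mem_filter.1 hy1).2
    rcases hgx : g x with a | a
    · rcases hgy : g y with b | b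
      · simp [hgx, hgy] at hxy
        rw [hg (hgx.trans ((congrArg Sum.inl hxy).trans hgy.symm))]
      · simp [hgy] at hy'
    · simp [hgx] at hx'
  · intro x hx
    obtain ⟨x, hx1, rfl⟩ := Finset.mem_image.1 hx
    have hx' := (Finset.mem_filter.1 hx1).2
    have := hgt x
    rcases hgx : g x with a | a
    · rw [hgx, Finset.inl_mem_disjSum] at this
      simpa [hgx] using this
    · simp [hgx] at hx'
  · rw [Finset.card_image_of_injective _ Subtype.val_injective]; omega

lemma step {V κ : Type*} [Fintype V] [Nonempty V] (G : SimpleGraph V)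
    (N : ℕ) (hN : 1 ≤ N) (ε d : ℝ) (hε : 0 < ε) (hε1 : ε ≤ 1) (hd : 0 < d)
    (hdeg : ∀ v, (dg G Finset.univ v : ℝ) ≤ (1 + ε) * d)
    (χ : V → κ) (B : Finset V) (hB : (B.card : ℝ) ≤ ε * Fintype.card V)
    (hg : ∀ v, v ∉ B → ∀ j, (1 - 2 * ε) * d ≤ N * dg G (cls χ j) v ∧
        (N : ℝ) * dg G (cls χ j) v ≤ (1 + 2 * ε) * d)
    (nxt : κ → κ) (hnxt : Function.Injective nxt) {ι : Type*} (I : Finset ι) (p : ι → V)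
    (hp : Set.InjOn p I) (hpB : ∀ x ∈ I, p x ∉ B) :
    ∃ (I' : Finset ι) (p' : ι → V), I' ⊆ I ∧ Set.InjOn p' I' ∧
      (∀ x ∈ I', G.Adj (p x) (p' x) ∧ p' x ∉ B ∧ χ (p' x) = nxt (χ (p x))) ∧
      I.card ≤ I'.card + ⌊6 * N * ε * (Fintype.card V : ℝ)⌋₊ := by
  set t : ι → Finset V := fun x => Finset.univ.filter
    (fun u => G.Adj (p x) u ∧ u ∉ B ∧ χ u = nxt (χ (p x))) with ht
  obtain ⟨I', f, h1, h2, h3, h4⟩ := hall_deficiency I t ⌊6 * N * ε * (Fintype.card V : ℝ)⌋₊ (by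
    intro S hS
    set T := S.biUnion t with hT
    set cnt : V → ℕ := fun u => (S.filter (fun x => G.Adj (p x) u ∧ χ u = nxt (χ (p x)))).card
      with hcnt
    have hsum : ∑ x ∈ S, dg G (cls χ (nxt (χ (p x)))) (p x) = ∑ u, cnt u := by
      simp only [hcnt, dg, cls, Finset.filter_filter, Finset.card_filter]
      rw [Finset.sum_comm]
      simp only [and_comm]
    have hcntle : ∀ u c, (∀ x ∈ S, χ u = nxt (χ (p x)) → χ (p x) = c) →
        cnt u ≤ dg G (cls χ c) u := by
      intro u c hc
      have : (S.filter (fun x => G.Adj (p x) u ∧ χ u = nxt (χ (p x)))).image p ⊆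
          (cls χ c).filter (G.Adj u) := by
        intro z hz
        obtain ⟨x, hx, rfl⟩ := Finset.mem_image.1 hz
        obtain ⟨hx1, hx2, hx3⟩ := Finset.mem_filter.1 hx
        exact Finset.mem_filter.2 ⟨mem_cls.2 (hc x hx1 hx3), hx2.symm⟩
      have := Finset.card_le_card this
      rwa [Finset.card_image_of_injOn] at this
      intro x hx y hy hxy
      exact hp (hS (Finset.mem_filter.1 hx).1) (hS (Finset.mem_filter.1 hy).1) hxy
    have hu : ∀ u, (N : ℝ) * cnt u ≤ (if u ∈ T then (1 + 2 * ε) * d else 0) +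
        (if u ∈ B then N * ((1 + ε) * d) else 0) := by
      intro u
      have n1 : 0 ≤ (1 + 2 * ε) * d := by positivity
      have n2 : 0 ≤ N * ((1 + ε) * d) := by positivity
      by_cases hc0 : cnt u = 0
      · rw [hc0]; split_ifs <;> simp <;> linarith
      have hne : (S.filter (fun x => G.Adj (p x) u ∧ χ u = nxt (χ (p x)))).Nonempty := by
        rw [← Finset.card_pos]; exact Nat.pos_of_ne_zero hc0
      obtain ⟨x, hx⟩ := hne
      obtain ⟨hx1, hx2, hx3⟩ := Finset.mem_filter.1 hx
      have hle := hcntle u (χ (p x)) (fun y _ hy => hnxt (hy.symm.trans hx3))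
      by_cases huB : u ∈ B
      · have h5 : (cnt u : ℝ) ≤ (1 + ε) * d :=
          le_trans (by exact_mod_cast hle.trans (dg_le_univ G _ u)) (hdeg u)
        have h6 : (N : ℝ) * cnt u ≤ N * ((1 + ε) * d) := by gcongr
        rw [if_pos huB]
        split_ifs <;> linarith
      · have huT : u ∈ T := Finset.mem_biUnion.2 ⟨x, hx1, by simp [ht, hx2, huB, hx3]⟩
        rw [if_pos huT, if_neg huB, add_zero]
        refine le_trans ?_ (hg u huB (χ (p x))).2
        gcongr
    have hlow : (S.card : ℝ) * ((1 - 2 * ε) * d) ≤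
        N * ∑ x ∈ S, (dg G (cls χ (nxt (χ (p x)))) (p x) : ℝ) := by
      rw [← nsmul_eq_mul, Finset.mul_sum]
      apply Finset.card_nsmul_le_sum
      intro x hx
      exact (hg (p x) (hpB x (hS hx)) _).1
    have hup : (N : ℝ) * ∑ u, (cnt u : ℝ) ≤ T.card * ((1 + 2 * ε) * d) +
        B.card * (N * ((1 + ε) * d)) := by
      rw [Finset.mul_sum]
      refine (Finset.sum_le_sum (fun u _ => hu u)).trans ?_
      rw [Finset.sum_add_distrib, Finset.sum_ite_mem, Finset.sum_ite_mem]
      simp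
    have hS' : ∑ x ∈ S, (dg G (cls χ (nxt (χ (p x)))) (p x) : ℝ) = ∑ u, (cnt u : ℝ) := by
      exact_mod_cast hsum
    rw [hS'] at hlow
    have hall := hlow.trans hup
    have hSn : (S.card : ℝ) ≤ Fintype.card V := by
      have := Finset.card_image_of_injOn (hp.mono (Finset.coe_subset.2 hS))
      rw [← this]
      exact_mod_cast Finset.card_le_univ _
    have hTn : (T.card : ℝ) ≤ Fintype.card V := by exact_mod_cast Finset.card_le_univ _
    have hN' : (1 : ℝ) ≤ N := by exact_mod_cast hN
    set n : ℝ := (Fintype.card V : ℝ) with hn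
    have hn0 : 0 ≤ n := by positivity
    have hall2 : (S.card : ℝ) * (1 - 2 * ε) ≤ T.card * (1 + 2 * ε) + B.card * (N * (1 + ε)) := by
      refine le_of_mul_le_mul_right ?_ hd
      linarith
    have b1 : (B.card : ℝ) * (N * (1 + ε)) ≤ 2 * N * ε * n := by
      have : (N : ℝ) * (1 + ε) ≤ 2 * N := by nlinarith
      calc (B.card : ℝ) * (N * (1 + ε)) ≤ (ε * n) * (2 * N) := by gcongr
        _ = _ := by ring
    have b2 : ε * S.card ≤ ε * n := by gcongr
    have b3 : ε * T.card ≤ ε * n := by gcongr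
    have b4 : ε * n ≤ N * ε * n := by
      have : 0 ≤ ε * n := by positivity
      nlinarith
    have hfin : (S.card : ℝ) - T.card ≤ 6 * N * ε * n := by nlinarith
    have : S.card - T.card ≤ ⌊6 * N * ε * n⌋₊ := by
      apply Nat.le_floor
      rcases le_total T.card S.card with h | h
      · rw [Nat.cast_sub h]; exact hfin
      · rw [Nat.sub_eq_zero_of_le h]; simp; positivity
    omega)
  refine ⟨I', f, h1, h2, ?_, h4⟩
  intro x hx
  exact (Finset.mem_filter.1 (h3 x hx)).2

lemma steps {V κ : Type*} [Fintype V] (G : SimpleGraph V) (χ : V → κ) (B : Finset V)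
    (nxt : κ → κ) (D : ℕ) {ι : Type*}
    (hstep : ∀ (I : Finset ι) (p : ι → V), Set.InjOn p I → (∀ x ∈ I, p x ∉ B) →
      ∃ (I' : Finset ι) (p' : ι → V), I' ⊆ I ∧ Set.InjOn p' I' ∧
      (∀ x ∈ I', G.Adj (p x) (p' x) ∧ p' x ∉ B ∧ χ (p' x) = nxt (χ (p x))) ∧
      I.card ≤ I'.card + D)
    (I0 : Finset ι) (p0 : ι → V) (h0 : Set.InjOn p0 I0) (h0B : ∀ x ∈ I0, p0 x ∉ B) (t : ℕ) :
    ∃ (I : Finset ι) (P : ι → ℕ → V), I ⊆ I0 ∧ (∀ x, P x 0 = p0 x) ∧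
      (∀ i ≤ t, Set.InjOn (fun x => P x i) I) ∧ (∀ x ∈ I, ∀ i ≤ t, P x i ∉ B) ∧
      (∀ x ∈ I, ∀ i < t, G.Adj (P x i) (P x (i + 1)) ∧ χ (P x (i + 1)) = nxt (χ (P x i))) ∧
      I0.card ≤ I.card + t * D := by
  induction t with
  | zero =>
    refine ⟨I0, fun x _ => p0 x, subset_rfl, fun _ => rfl, fun _ _ => h0, fun x hx _ _ => h0B x hx,
      fun x _ i hi => absurd hi (by omega), by simp⟩
  | succ t ih =>
    obtain ⟨I, P, h1, h2, h3, h4, h5, h6⟩ := ih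
    obtain ⟨I', p', k1, k2, k3, k4⟩ := hstep I (fun x => P x t) (h3 t le_rfl)
      (fun x hx => h4 x hx t le_rfl)
    refine ⟨I', fun x i => if i ≤ t then P x i else p' x, k1.trans h1, ?_, ?_, ?_, ?_, ?_⟩
    · intro x; simp [h2]
    · intro i hi
      by_cases hit : i ≤ t
      · simp only [hit, if_true]
        exact (h3 i hit).mono (Finset.coe_subset.2 k1)
      · simp only [hit, if_false]
        exact k2
    · intro x hx i hi
      by_cases hit : i ≤ t
      · simp only [hit, if_true]
        exact h4 x (k1 hx) i hit
      · simp only [hit, if_false]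
        exact (k3 x hx).2.1
    · intro x hx i hi
      by_cases hit : i < t
      · have e1 : i ≤ t := hit.le
        have e2 : i + 1 ≤ t := hit
        simp only [e1, e2, if_true]
        exact h5 x (k1 hx) i hit
      · have e1 : i = t := by omega
        subst e1
        simp only [le_refl, if_true, Nat.not_succ_le_self, if_false]
        exact ⟨(k3 x hx).1, (k3 x hx).2.2⟩
    · rw [Nat.succ_mul]; omega

/-- sizes of the colour classes -/
lemma class_size {V κ : Type*} [Fintype V] (G : SimpleGraph V)
    (N : ℕ) (hN : 1 ≤ N) (ε d : ℝ) (hε : 0 < ε) (hε1 : ε * (10 * N) ≤ 1) (hd : 0 < d)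
    (hdeg : ∀ v, (1 - ε) * d ≤ dg G Finset.univ v ∧ (dg G Finset.univ v : ℝ) ≤ (1 + ε) * d)
    (χ : V → κ) (B : Finset V) (hB : (B.card : ℝ) ≤ ε * Fintype.card V)
    (hg : ∀ v, v ∉ B → ∀ j, (1 - 2 * ε) * d ≤ N * dg G (cls χ j) v ∧
        (N : ℝ) * dg G (cls χ j) v ≤ (1 + 2 * ε) * d) (j : κ) :
    (1 - 4 * ε) * Fintype.card V ≤ N * (cls χ j).card ∧
      (N : ℝ) * (cls χ j).card ≤ 2 * Fintype.card V := by
  have hdc : ∑ v, (dg G (cls χ j) v : ℝ) = ∑ u ∈ cls χ j, (dg G Finset.univ u : ℝ) := by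
    exact_mod_cast dg_comm G Finset.univ (cls χ j)
  have hN' : (1 : ℝ) ≤ N := by exact_mod_cast hN
  set n : ℝ := (Fintype.card V : ℝ) with hn
  have hn0 : 0 ≤ n := by positivity
  have hε2 : ε ≤ 1 / 10 := by nlinarith
  set c : ℝ := ((cls χ j).card : ℝ) with hc
  have hc0 : 0 ≤ c := by positivity
  have u1 : ∑ u ∈ cls χ j, (dg G Finset.univ u : ℝ) ≤ c * ((1 + ε) * d) := by
    rw [hc, ← nsmul_eq_mul]
    exact Finset.sum_le_card_nsmul _ _ _ (fun u _ => (hdeg u).2)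
  have l1 : c * ((1 - ε) * d) ≤ ∑ u ∈ cls χ j, (dg G Finset.univ u : ℝ) := by
    rw [hc, ← nsmul_eq_mul]
    exact Finset.card_nsmul_le_sum _ _ _ (fun u _ => (hdeg u).1)
  have u2 : N * ∑ v, (dg G (cls χ j) v : ℝ) ≤ n * ((1 + 2 * ε) * d) +
      B.card * (N * ((1 + ε) * d)) := by
    have : ∀ v, (N : ℝ) * dg G (cls χ j) v ≤ (1 + 2 * ε) * d +
        (if v ∈ B then N * ((1 + ε) * d) else 0) := by
      intro v
      have n1 : 0 ≤ (1 + 2 * ε) * d := by positivity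
      split_ifs with hv
      · have : (dg G (cls χ j) v : ℝ) ≤ (1 + ε) * d :=
          le_trans (by exact_mod_cast dg_le_univ G _ v) (hdeg v).2
        have h6 : (N : ℝ) * dg G (cls χ j) v ≤ N * ((1 + ε) * d) := by gcongr
        linarith
      · rw [add_zero]; exact (hg v hv j).2
    rw [Finset.mul_sum]
    refine (Finset.sum_le_sum (fun u _ => this u)).trans ?_
    rw [Finset.sum_add_distrib, Finset.sum_ite_mem]
    simp [hn]
  have l2 : (n - B.card) * ((1 - 2 * ε) * d) ≤ N * ∑ v, (dg G (cls χ j) v : ℝ) := by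
    have : ∀ v, (1 - 2 * ε) * d - (if v ∈ B then (1 - 2 * ε) * d else 0) ≤
        (N : ℝ) * dg G (cls χ j) v := by
      intro v
      split_ifs with hv
      · rw [sub_self]; positivity
      · rw [sub_zero]; exact (hg v hv j).1
    rw [Finset.mul_sum]
    refine le_trans ?_ (Finset.sum_le_sum (fun u _ => this u))
    rw [Finset.sum_sub_distrib, Finset.sum_ite_mem]
    simp [hn, sub_mul]
    apply le_of_eq
    ring
  rw [hdc] at u2 l2
  have hU : N * c * (1 - ε) ≤ n * (1 + 2 * ε) + B.card * (N * (1 + ε)) := by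
    refine le_of_mul_le_mul_right ?_ hd
    nlinarith
  have hL : (n - B.card) * (1 - 2 * ε) ≤ N * c * (1 + ε) := by
    refine le_of_mul_le_mul_right ?_ hd
    nlinarith
  have hNc : 0 ≤ N * c := by positivity
  have hεn : 0 ≤ ε * n := by positivity
  constructor
  · have q1 : (1 - ε) * n * (1 - 2 * ε) ≤ N * c * (1 + ε) := by
      refine le_trans ?_ hL
      apply mul_le_mul_of_nonneg_right _ (by linarith)
      linarith
    have q2 : (1 - 4 * ε) * n * (1 + ε) ≤ N * c * (1 + ε) := by
      refine le_trans ?_ q1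
      have : 0 ≤ ε * ε * n := by positivity
      nlinarith
    exact le_of_mul_le_mul_right q2 (by linarith)
  · have q1 : (B.card : ℝ) * (N * (1 + ε)) ≤ (ε * n) * (N * (11 / 10)) := by
      gcongr
      linarith
    have q2 : (ε * n) * (N * (11 / 10)) ≤ n * (11 / 100) := by
      nlinarith
    have q3 : N * c * (9 / 10) ≤ n * (12 / 10) + n * (11 / 100) := by
      nlinarith
    linarith

end SubdivPack
namespace SubdivPack
open scoped Classical

lemma arith1 (N k ε η n X : ℝ) (hN : 1 ≤ N) (hk : 1 ≤ k) (hε : 0 < ε) (hn : 0 ≤ n)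
    (hη : ε * (11 * N ^ 3) = η)
    (h8 : k * ((1 - 4 * ε) * n) ≤ N * (X + N * (6 * N * ε * n) + ε * n)) :
    k * (1 - η) * n ≤ N * X := by
  have hN3 : N ≤ N ^ 3 := by
    have : (1 : ℝ) ≤ N ^ 2 := one_le_pow₀ hN
    nlinarith
  have a1 : (6 * N ^ 3 + N) * ε ≤ 7 * N ^ 3 * ε := by
    apply mul_le_mul_of_nonneg_right _ hε.le
    linarith
  have a2 : 7 * N ^ 3 * ε ≤ η - 4 * ε := by nlinarith
  have a3 : 0 ≤ η - 4 * ε := le_trans (by positivity) a2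
  have a4 : (6 * N ^ 3 + N) * ε ≤ k * (η - 4 * ε) := by nlinarith
  have a5 : (6 * N ^ 3 + N) * ε * n ≤ k * (η - 4 * ε) * n := mul_le_mul_of_nonneg_right a4 hn
  linarith

set_option maxHeartbeats 1000000 in
/-- The path system: `m` reservoirs `R j`, and paths `P x` (`x ∈ I`) on `ℓ` vertices. -/
lemma exists_paths (m k ℓ : ℕ) (hk : 1 ≤ k) (hℓ : 1 ≤ ℓ) (η : ℝ) (hη : 0 < η) (hη1 : η ≤ 1)
    (N : ℕ) (hNdef : N = m + k * ℓ) (ε d : ℝ) (hεdef : ε * (11 * N ^ 3) = η) (hd : 0 < d)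
    (hdN : 2 * (N : ℝ) ^ 2 ≤ ε ^ 3 * d)
    {V : Type*} [Fintype V] [Nonempty V] (G : SimpleGraph V)
    (hdeg : ∀ v, (1 - ε) * d ≤ dg G Finset.univ v ∧ (dg G Finset.univ v : ℝ) ≤ (1 + ε) * d) :
    ∃ (R : Fin m → Finset V) (I : Finset V) (P : V → ℕ → V),
      (∀ i j, i ≠ j → Disjoint (R i) (R j)) ∧
      (∀ x ∈ I, ∀ y ∈ I, ∀ i < ℓ, ∀ j < ℓ, P x i = P y j → x = y ∧ i = j) ∧
      (∀ x ∈ I, ∀ i, i + 1 < ℓ → G.Adj (P x i) (P x (i + 1))) ∧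
      (∀ x ∈ I, ∀ i < ℓ, ∀ j, P x i ∉ R j) ∧
      (∀ x ∈ I, ∀ i < ℓ, ∀ j, d ≤ 2 * N * dg G (R j) (P x i)) ∧
      (∀ j, (N : ℝ) * (R j).card ≤ 2 * Fintype.card V) ∧
      k * (1 - η) * Fintype.card V ≤ N * (I.card : ℝ) ∧
      (N : ℝ) * I.card ≤ 2 * k * Fintype.card V := by
  have : NeZero ℓ := ⟨by omega⟩
  set κ := Fin m ⊕ (Fin k × ZMod ℓ) with hκ
  have hcard : Fintype.card κ = N := by
    simp [hκ, ZMod.card, hNdef]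
  have : Nonempty κ := ⟨Sum.inr (⟨0, hk⟩, 0)⟩
  have hkN : k ≤ N := by
    rw [hNdef]; nlinarith
  have hℓN : ℓ ≤ N := by
    rw [hNdef]; nlinarith
  have hN1 : 1 ≤ N := hk.trans hkN
  have hN' : (1 : ℝ) ≤ N := by exact_mod_cast hN1
  have hk' : (1 : ℝ) ≤ k := by exact_mod_cast hk
  have hkN' : (k : ℝ) ≤ N := by exact_mod_cast hkN
  have hℓN' : (ℓ : ℝ) ≤ N := by exact_mod_cast hℓN
  have hN3 : (N : ℝ) ≤ N ^ 3 := by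
    have : (1 : ℝ) ≤ N ^ 2 := one_le_pow₀ hN'
    nlinarith
  have hε : 0 < ε := by
    have : (0 : ℝ) < 11 * N ^ 3 := by positivity
    by_contra h
    push Not at h
    nlinarith
  have hε1 : ε * (10 * N) ≤ 1 := by nlinarith
  have hε2 : ε ≤ 1 / 10 := by nlinarith
  obtain ⟨χ, B, hB, hg⟩ := exists_colouring (κ := κ) G N hcard ε d hε (by linarith) hd hdN hdeg
  have hcs := class_size G N hN1 ε d hε hε1 hd hdeg χ B hB hg
  set nxt : κ → κ := Sum.map id (fun z => (z.1, z.2 + 1)) with hnxt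
  have hnxti : Function.Injective nxt := by
    apply Function.Injective.sumMap Function.injective_id
    rintro ⟨a, b⟩ ⟨c, e⟩ h
    simpa using h
  set I0 : Finset V := Finset.univ.filter (fun v => v ∉ B ∧ ∃ b : Fin k, χ v = Sum.inr (b, 0))
    with hI0
  obtain ⟨I, P, h1, h2, h3, h4, h5, h6⟩ := steps G χ B nxt
    ⌊6 * N * ε * (Fintype.card V : ℝ)⌋₊
    (fun I p hp hpB => step G N hN1 ε d hε (by linarith) hd (fun v => (hdeg v).2) χ B hB hg nxt
      hnxti I p hp hpB) I0 id Function.injective_id.injOn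
      (fun x hx => (Finset.mem_filter.1 hx).2.1) (ℓ - 1)
  have hcol : ∀ x ∈ I, ∃ b : Fin k, ∀ i < ℓ, χ (P x i) = Sum.inr (b, (i : ZMod ℓ)) := by
    intro x hx
    obtain ⟨b, hb⟩ := (Finset.mem_filter.1 (h1 hx)).2.2
    refine ⟨b, ?_⟩
    intro i
    induction i with
    | zero => intro _; rw [h2]; simpa using hb
    | succ i ih =>
      intro hi
      rw [(h5 x hx i (by omega)).2, ih (by omega)]
      simp [hnxt]
  set n : ℝ := (Fintype.card V : ℝ) with hn
  have hn0 : 0 ≤ n := by positivity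
  have hCl : ∀ b : Fin k, ((1 - 4 * ε) * n ≤ N * (cls χ (Sum.inr (b, 0))).card ∧
      (N : ℝ) * (cls χ (Sum.inr (b, 0))).card ≤ 2 * n) := fun b => hcs _
  have hI0up : (I0.card : ℝ) ≤ ∑ b : Fin k, ((cls χ (Sum.inr (b, 0))).card : ℝ) := by
    have : I0 ⊆ Finset.univ.biUnion (fun b : Fin k => cls χ (Sum.inr (b, 0))) := by
      intro v hv
      obtain ⟨b, hb⟩ := (Finset.mem_filter.1 hv).2.2
      exact Finset.mem_biUnion.2 ⟨b, Finset.mem_univ _, mem_cls.2 hb⟩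
    exact_mod_cast (Finset.card_le_card this).trans Finset.card_biUnion_le
  have hI0low : ∑ b : Fin k, ((cls χ (Sum.inr (b, 0))).card : ℝ) ≤ I0.card + B.card := by
    have : Finset.univ.biUnion (fun b : Fin k => cls χ (Sum.inr (b, 0))) ⊆ I0 ∪ B := by
      intro v hv
      obtain ⟨b, _, hb⟩ := Finset.mem_biUnion.1 hv
      by_cases hvB : v ∈ B
      · exact Finset.mem_union_right _ hvB
      · exact Finset.mem_union_left _ (Finset.mem_filter.2
          ⟨Finset.mem_univ _, hvB, b, mem_cls.1 hb⟩)
    have h7 := (Finset.card_le_card this).trans (Finset.card_union_le _ _)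
    rw [Finset.card_biUnion] at h7
    · exact_mod_cast h7
    · intro b _ b' _ hbb
      refine Finset.disjoint_left.2 ?_
      intro v hv hv'
      have := (mem_cls.1 hv).symm.trans (mem_cls.1 hv')
      exact hbb (Prod.mk.inj (Sum.inr_injective this)).1
  have hsumup : N * ∑ b : Fin k, ((cls χ (Sum.inr (b, 0))).card : ℝ) ≤ k * (2 * n) := by
    rw [Finset.mul_sum]
    refine (Finset.sum_le_card_nsmul _ _ _ (fun b _ => (hCl b).2)).trans ?_
    simp
  have hsumlow : k * ((1 - 4 * ε) * n) ≤ N * ∑ b : Fin k, ((cls χ (Sum.inr (b, 0))).card : ℝ) := by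
    rw [Finset.mul_sum]
    refine le_trans ?_ (Finset.card_nsmul_le_sum _ _ _ (fun b _ => (hCl b).1))
    simp
  refine ⟨fun j => cls χ (Sum.inl j), I, P, ?_, ?_, ?_, ?_, ?_, ?_, ?_, ?_⟩
  · intro i j hij
    rw [Finset.disjoint_left]
    intro v hv hv'
    have := (mem_cls.1 hv).symm.trans (mem_cls.1 hv')
    exact hij (Sum.inl_injective this)
  · intro x hx y hy i hi j hj hP
    obtain ⟨b, hb⟩ := hcol x hx
    obtain ⟨c, hc⟩ := hcol y hy
    have h8 := (hb i hi).symm.trans ((congrArg χ hP).trans (hc j hj))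
    have h9 : (i : ZMod ℓ) = j := (Prod.mk.inj (Sum.inr_injective h8)).2
    rw [ZMod.natCast_eq_natCast_iff', Nat.mod_eq_of_lt hi, Nat.mod_eq_of_lt hj] at h9
    subst h9
    exact ⟨h3 i (by omega) hx hy hP, rfl⟩
  · intro x hx i hi
    exact (h5 x hx i (by omega)).1
  · intro x hx i hi j hj
    obtain ⟨b, hb⟩ := hcol x hx
    have := (hb i hi).symm.trans (mem_cls.1 hj)
    exact absurd this (by simp)
  · intro x hx i hi j
    have := (hg (P x i) (h4 x hx i (by omega)) (Sum.inl j)).1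
    nlinarith
  · intro j
    exact (hcs _).2
  · have hfl : ((⌊6 * N * ε * n⌋₊ : ℕ) : ℝ) ≤ 6 * N * ε * n := Nat.floor_le (by positivity)
    have h6' : (I0.card : ℝ) ≤ I.card + ((ℓ - 1 : ℕ) : ℝ) * (⌊6 * N * ε * n⌋₊ : ℕ) := by
      exact_mod_cast h6
    have hl1 : ((ℓ - 1 : ℕ) : ℝ) ≤ N := by
      refine le_trans ?_ hℓN'
      exact_mod_cast Nat.sub_le _ _
    have h7 : ((ℓ - 1 : ℕ) : ℝ) * (⌊6 * N * ε * n⌋₊ : ℕ) ≤ N * (6 * N * ε * n) := by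
      gcongr
    have h8 : (k : ℝ) * ((1 - 4 * ε) * n) ≤ N * (I.card + N * (6 * N * ε * n) + ε * n) := by
      refine hsumlow.trans ?_
      gcongr
      linarith
    exact arith1 _ _ _ _ _ _ hN' hk' hε hn0 hεdef h8
  · have : (I.card : ℝ) ≤ I0.card := by exact_mod_cast Finset.card_le_card h1
    calc (N : ℝ) * I.card ≤ N * ∑ b : Fin k, ((cls χ (Sum.inr (b, 0))).card : ℝ) := by
          gcongr; linarith
      _ ≤ _ := by linarith

end SubdivPack
namespace SubdivPack
open scoped Classical

lemma walk_of_seq {V : Type*} {G : SimpleGraph V} (q : ℕ → V) (a b : ℕ) (hab : a ≤ b)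
    (hadj : ∀ i, a ≤ i → i < b → G.Adj (q i) (q (i + 1)))
    (hinj : ∀ i j, a ≤ i → i ≤ b → a ≤ j → j ≤ b → q i = q j → i = j) :
    ∃ p : G.Walk (q a) (q b), p.IsPath ∧ ∀ z, z ∈ p.support ↔ ∃ i, a ≤ i ∧ i ≤ b ∧ q i = z := by
  induction b, hab using Nat.le_induction with
  | base =>
    refine ⟨Walk.nil, Walk.IsPath.nil, ?_⟩
    intro z
    simp only [Walk.support_nil, List.mem_singleton]
    constructor
    · rintro rfl; exact ⟨a, le_rfl, le_rfl, rfl⟩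
    · rintro ⟨i, h1, h2, rfl⟩
      rw [le_antisymm h2 h1]
  | succ b hab ih =>
    obtain ⟨p, hp, hs⟩ := ih (fun i h1 h2 => hadj i h1 (by omega))
      (fun i j h1 h2 h3 h4 => hinj i j h1 (by omega) h3 (by omega))
    have hn : q (b + 1) ∉ p.support := by
      rw [hs]
      rintro ⟨i, h1, h2, h3⟩
      have := hinj i (b + 1) h1 (by omega) (by omega) le_rfl h3
      omega
    refine ⟨p.concat (hadj b hab (by omega)), hp.concat hn _, ?_⟩
    intro z
    rw [Walk.support_concat, List.mem_append, hs, List.mem_singleton]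
    constructor
    · rintro (⟨i, h1, h2, h3⟩ | rfl)
      · exact ⟨i, h1, by omega, h3⟩
      · exact ⟨b + 1, by omega, le_rfl, rfl⟩
    · rintro ⟨i, h1, h2, rfl⟩
      rcases Nat.lt_or_ge b i with h | h
      · right
        rw [show i = b + 1 by omega]
      · exact Or.inl ⟨i, h1, h, rfl⟩

lemma seg_conn {V : Type*} {G : SimpleGraph V} (q : ℕ → V) (a b : ℕ) (hab : a ≤ b)
    (hadj : ∀ i, a ≤ i → i < b → G.Adj (q i) (q (i + 1)))
    (hinj : ∀ i j, a ≤ i → i ≤ b → a ≤ j → j ≤ b → q i = q j → i = j) (u w : V) (huw : u ≠ w)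
    (hu : ∀ i, a ≤ i → i ≤ b → q i ≠ u) (hw : ∀ i, a ≤ i → i ≤ b → q i ≠ w)
    (hua : G.Adj (q a) u) (hwb : G.Adj (q b) w) :
    ∃ E, ConnE G u w {z | ∃ i, a ≤ i ∧ i ≤ b ∧ q i = z} E := by
  obtain ⟨p, hp, hs⟩ := walk_of_seq q a b hab hadj hinj
  have hwn : w ∉ p.support := by
    rw [hs]; rintro ⟨i, h1, h2, h3⟩; exact hw i h1 h2 h3
  have hun : u ∉ p.support := by
    rw [hs]; rintro ⟨i, h1, h2, h3⟩; exact hu i h1 h2 h3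
  refine ⟨{e | e ∈ (Walk.cons hua.symm (p.concat hwb)).edges}, Walk.cons hua.symm (p.concat hwb),
    ?_, huw, ?_, fun _ => Iff.rfl⟩
  · rw [Walk.cons_isPath_iff]
    refine ⟨hp.concat hwn _, ?_⟩
    rw [Walk.support_concat, List.mem_append, List.mem_singleton]
    tauto
  · intro z
    unfold Walk.IsInternalVertex
    rw [Walk.support_cons, List.mem_cons, Walk.support_concat, List.mem_append, List.mem_singleton]
    change (∃ i, a ≤ i ∧ i ≤ b ∧ q i = z) ↔ _
    rw [← hs]
    constructor
    · intro h
      refine ⟨Or.inr (Or.inl h), ?_, ?_⟩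
      · rintro rfl; exact hun h
      · rintro rfl; exact hwn h
    · rintro ⟨h1 | h1 | h1, h2, h3⟩
      · exact absurd h1 h2
      · exact h1
      · exact absurd h1 h3

/-- State of the greedy procedure. -/
structure State {α V : Type*} (F : SimpleGraph α) (G : SimpleGraph V) {m : ℕ}
    (R : Fin m → Finset V) (I : Finset V) (P : V → ℕ → V) (ℓ c : ℕ)
    (C : Set G.Subgraph) (Iu Ru : Finset V) : Prop where
  sub : ∀ H ∈ C, F.IsSubdivision H.coe
  pd : C.Pairwise fun H₁ H₂ => Disjoint H₁.verts H₂.verts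
  verts : ∀ H ∈ C, ∀ z ∈ H.verts, z ∈ Ru ∨ ∃ x ∈ Iu, ∃ i < ℓ, P x i = z
  cov : Iu.card * c ≤ (⋃ H ∈ C, H.verts).ncard
  Isub : Iu ⊆ I
  Rsub : ∀ z ∈ Ru, ∃ j, z ∈ R j
  Rcard : Ru.card ≤ 2 * Iu.card

lemma State.extend {α V : Type*} [Fintype V] {F : SimpleGraph α} {G : SimpleGraph V}
    (hFiso : ∀ a : α, ∃ b : α, F.Adj a b) [Nonempty α] {C₀ : ℕ}
    (hC : ∀ (A : SimpleGraph V) (W : Finset V), W.Nonempty →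
      C₀ * W.card ≤ E2 A W → ∃ f I E, IsModel F A (W : Set V) f I E)
    {m : ℕ} {R : Fin m → Finset V} {I : Finset V} {P : V → ℕ → V} {ℓ h : ℕ} (hhℓ : 2 * h ≤ ℓ)
    (hPinj : ∀ x ∈ I, ∀ y ∈ I, ∀ i < ℓ, ∀ j < ℓ, P x i = P y j → x = y ∧ i = j)
    (hPadj : ∀ x ∈ I, ∀ i, i + 1 < ℓ → G.Adj (P x i) (P x (i + 1)))
    (hPR : ∀ x ∈ I, ∀ i < ℓ, ∀ j, P x i ∉ R j)
    {C : Set G.Subgraph} {Iu Ru : Finset V} (hS : State F G R I P ℓ (ℓ - 2 * h) C Iu Ru)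
    (j : Fin m) (T : Finset V) (hT : T ⊆ I \ Iu) (hTne : T.Nonempty) (a b : V → ℕ)
    (ha : ∀ x ∈ T, a x < h) (hb : ∀ x ∈ T, ℓ - h ≤ b x ∧ b x < ℓ)
    (da : ∀ x ∈ T, C₀ + 1 ≤ dg G (R j \ Ru) (P x (a x)))
    (db : ∀ x ∈ T, C₀ + 1 ≤ dg G (R j \ Ru) (P x (b x)))
    (hTC : C₀ * (R j \ Ru).card ≤ 2 * T.card) :
    ∃ C' Iu' Ru', State F G R I P ℓ (ℓ - 2 * h) C' Iu' Ru' ∧ Iu.card < Iu'.card := by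
  have hTI : ∀ x ∈ T, x ∈ I ∧ x ∉ Iu := fun x hx => Finset.mem_sdiff.1 (hT hx)
  have hab : ∀ x ∈ T, a x ≤ b x := fun x hx => by
    have := ha x hx; have := hb x hx; omega
  set seg : V → Set V := fun x => {z | ∃ i, a x ≤ i ∧ i ≤ b x ∧ P x i = z} with hseg
  obtain ⟨X, J, H, hXR, hJT, hJne, hXJ, hHv, hH⟩ := core (G := G) (R := R j \ Ru) (T := T)
    (seg := seg) hFiso hC
    (by
      rintro x hx w ⟨i, h1, h2, rfl⟩ hw
      exact hPR x (hTI x hx).1 i (by have := hb x hx; omega) j (Finset.mem_sdiff.1 hw).1)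
    (by
      rintro x hx y hy hxy w ⟨i, h1, h2, rfl⟩ ⟨i', h1', h2', h3⟩
      exact hxy (hPinj y (hTI y hy).1 x (hTI x hx).1 i' (by have := hb y hy; omega) i
        (by have := hb x hx; omega) h3).1.symm)
    (fun x => (R j \ Ru).filter (G.Adj (P x (a x)))) (fun x => (R j \ Ru).filter (G.Adj (P x (b x))))
    (fun x _ => Finset.filter_subset _ _) (fun x _ => Finset.filter_subset _ _) da db
    (by
      intro x hx u hu w hw huw
      rw [Finset.mem_filter] at hu hw
      have hxI := (hTI x hx).1
      have hbx := hb x hx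
      refine seg_conn (P x) (a x) (b x) (hab x hx) ?_ ?_ u w huw ?_ ?_ hu.2 hw.2
      · intro i h1 h2; exact hPadj x hxI i (by omega)
      · intro i i' h1 h2 h3 h4 h5
        exact (hPinj x hxI x hxI i (by omega) i' (by omega) h5).2
      · rintro i h1 h2 rfl
        exact hPR x hxI i (by omega) j (Finset.mem_sdiff.1 hu.1).1
      · rintro i h1 h2 rfl
        exact hPR x hxI i (by omega) j (Finset.mem_sdiff.1 hw.1).1)
    hTne hTC
  have hHmem : ∀ z ∈ H.verts, z ∈ X ∨ ∃ x ∈ J, ∃ i < ℓ, P x i = z := by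
    intro z hz
    rw [hHv] at hz
    rcases hz with hz | hz
    · exact Or.inl hz
    · simp only [Set.mem_iUnion] at hz
      obtain ⟨x, hx, i, h1, h2, h3⟩ := hz
      exact Or.inr ⟨x, hx, i, by have := hb x (hJT hx); omega, h3⟩
  have hdis : ∀ H' ∈ C, Disjoint H.verts H'.verts := by
    intro H' hH'
    rw [Set.disjoint_left]
    intro z hz hz'
    rcases hHmem z hz with h1 | ⟨x, hx, i, hi, rfl⟩
    · have h2 := Finset.mem_sdiff.1 (hXR h1)
      rcases hS.verts H' hH' z hz' with h3 | ⟨y, hy, i, hi, rfl⟩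
      · exact h2.2 h3
      · exact hPR y (hS.Isub hy) i hi j h2.1
    · have hxT := hTI x (hJT hx)
      rcases hS.verts H' hH' _ hz' with h3 | ⟨y, hy, i', hi', h4⟩
      · obtain ⟨j', hj'⟩ := hS.Rsub _ h3
        exact hPR x hxT.1 i hi j' hj'
      · have := (hPinj y (hS.Isub hy) x hxT.1 i' hi' i hi h4).1
        exact hxT.2 (this ▸ hy)
  have hIJ : Disjoint Iu J := by
    rw [Finset.disjoint_right]
    intro x hx
    exact (hTI x (hJT hx)).2
  have hJpos := hJne.card_pos
  refine ⟨insert H C, Iu ∪ J, Ru ∪ X, ⟨?_, ?_, ?_, ?_, ?_, ?_, ?_⟩, ?_⟩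
  · rintro H' (rfl | hH')
    · exact hH
    · exact hS.sub H' hH'
  · intro H1 h1 H2 h2 hne
    rcases h1 with rfl | h1 <;> rcases h2 with rfl | h2
    · exact absurd rfl hne
    · exact hdis H2 h2
    · exact (hdis H1 h1).symm
    · exact hS.pd h1 h2 hne
  · rintro H' (rfl | hH') z hz
    · rcases hHmem z hz with h1 | ⟨x, hx, i⟩
      · exact Or.inl (Finset.mem_union_right _ h1)
      · exact Or.inr ⟨x, Finset.mem_union_right _ hx, i⟩
    · rcases hS.verts H' hH' z hz with h1 | ⟨x, hx, i⟩
      · exact Or.inl (Finset.mem_union_left _ h1)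
      · exact Or.inr ⟨x, Finset.mem_union_left _ hx, i⟩
  · rw [Set.biUnion_insert, Set.ncard_union_eq]
    · rw [Finset.card_union_of_disjoint hIJ, add_mul, add_comm]
      refine Nat.add_le_add ?_ hS.cov
      set Y : Finset V := (J.sigma (fun x => Finset.Icc (a x) (b x))).image (fun z => P z.1 z.2)
        with hY
      have hYc : Y.card = ∑ x ∈ J, (b x + 1 - a x) := by
        rw [hY, Finset.card_image_of_injOn, Finset.card_sigma]
        · simp
        · rintro ⟨x, i⟩ hx ⟨y, i'⟩ hy hxy
          simp only [Finset.coe_sigma, Set.mem_sigma_iff, Finset.mem_coe, Finset.mem_Icc] at hx hy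
          have h1 := hb x (hJT hx.1)
          have h2 := hb y (hJT hy.1)
          obtain ⟨h3, h4⟩ := hPinj x (hTI x (hJT hx.1)).1 y (hTI y (hJT hy.1)).1 i (by omega) i'
            (by omega) hxy
          subst h3; subst h4; rfl
      have hYH : (Y : Set V) ⊆ H.verts := by
        intro z hz
        obtain ⟨⟨x, i⟩, hx, rfl⟩ := Finset.mem_image.1 (Finset.mem_coe.1 hz)
        rw [Finset.mem_sigma, Finset.mem_Icc] at hx
        rw [hHv]
        right
        simp only [Set.mem_iUnion]
        exact ⟨x, hx.1, i, hx.2.1, hx.2.2, rfl⟩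
      have h5 := Set.ncard_le_ncard hYH (Set.toFinite _)
      rw [Set.ncard_coe_finset, hYc] at h5
      refine le_trans ?_ h5
      rw [← smul_eq_mul]
      apply Finset.card_nsmul_le_sum
      intro x hx
      have h1 := hb x (hJT hx)
      have h2 := ha x (hJT hx)
      omega
    · rw [Set.disjoint_iUnion₂_right]
      exact hdis
  · refine Finset.union_subset hS.Isub ?_
    intro x hx
    exact (hTI x (hJT hx)).1
  · intro z hz
    rcases Finset.mem_union.1 hz with hz | hz
    · exact hS.Rsub z hz
    · exact ⟨j, (Finset.mem_sdiff.1 (hXR hz)).1⟩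
  · rw [Finset.card_union_of_disjoint hIJ]
    have := Finset.card_union_le Ru X
    have := hS.Rcard
    omega
  · rw [Finset.card_union_of_disjoint hIJ]; omega

end SubdivPack
namespace SubdivPack
open scoped Classical

/-- Counting argument producing the data for `State.extend`. -/
lemma find_ext {V : Type*} [Fintype V] {G : SimpleGraph V} {m k ℓ h N C₀ : ℕ}
    {θ d : ℝ} (hθ : 0 < θ) (hd : 0 < d) (hm : 1 ≤ m) (hN : 1 ≤ N) (hh : 1 ≤ h) (hk : 1 ≤ k)
    (hV : 1 ≤ Fintype.card V)
    (hhℓ : 2 * h ≤ ℓ) (c1 : 256 * (N : ℝ) ≤ θ * (h * m)) (c2 : 4 * (C₀ : ℝ) ≤ θ * k)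
    (c3 : 4 * N * ((C₀ : ℝ) + 1) ≤ d)
    {R : Fin m → Finset V} {I : Finset V} {P : V → ℕ → V}
    (hdeg : ∀ v, (dg G Finset.univ v : ℝ) ≤ 2 * d)
    (hRd : ∀ i j, i ≠ j → Disjoint (R i) (R j))
    (hPinj : ∀ x ∈ I, ∀ y ∈ I, ∀ i < ℓ, ∀ j < ℓ, P x i = P y j → x = y ∧ i = j)
    (hPd : ∀ x ∈ I, ∀ i < ℓ, ∀ j, d ≤ 2 * N * dg G (R j) (P x i))
    (hRc : ∀ j, (N : ℝ) * (R j).card ≤ 2 * Fintype.card V)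
    (hI1 : (k : ℝ) * Fintype.card V ≤ 2 * (N * (I.card : ℝ)))
    (hI2 : (N : ℝ) * I.card ≤ 2 * k * Fintype.card V)
    {Iu Ru : Finset V} (hIu : Iu ⊆ I) (hRu : Ru.card ≤ 2 * Iu.card)
    (hU : θ * I.card ≤ (I \ Iu).card) :
    ∃ (j : Fin m) (T : Finset V) (a b : V → ℕ), T ⊆ I \ Iu ∧ T.Nonempty ∧
      (∀ x ∈ T, a x < h) ∧ (∀ x ∈ T, ℓ - h ≤ b x ∧ b x < ℓ) ∧
      (∀ x ∈ T, C₀ + 1 ≤ dg G (R j \ Ru) (P x (a x))) ∧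
      (∀ x ∈ T, C₀ + 1 ≤ dg G (R j \ Ru) (P x (b x))) ∧
      C₀ * (R j \ Ru).card ≤ 2 * T.card := by
  set n : ℝ := (Fintype.card V : ℝ) with hn
  have hn1 : 1 ≤ n := by rw [hn]; exact_mod_cast hV
  have hN' : (1 : ℝ) ≤ N := by exact_mod_cast hN
  have hk' : (1 : ℝ) ≤ k := by exact_mod_cast hk
  have hm' : (1 : ℝ) ≤ m := by exact_mod_cast hm
  have hh' : (1 : ℝ) ≤ h := by exact_mod_cast hh
  have hRuc : (N : ℝ) * Ru.card ≤ 4 * k * n := by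
    have h1 : (Ru.card : ℝ) ≤ 2 * I.card := by
      exact_mod_cast hRu.trans (Nat.mul_le_mul_left 2 (Finset.card_le_card hIu))
    nlinarith
  -- choose a reservoir that is little used
  obtain ⟨j, hj⟩ : ∃ j : Fin m, (m : ℝ) * (Ru ∩ R j).card ≤ Ru.card := by
    by_contra hcon
    push Not at hcon
    have h1 : ∑ j : Fin m, (Ru ∩ R j).card ≤ Ru.card := by
      rw [← Finset.card_biUnion]
      · apply Finset.card_le_card
        intro z hz
        obtain ⟨j, _, hz⟩ := Finset.mem_biUnion.1 hz
        exact (Finset.mem_inter.1 hz).1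
      · intro i _ j _ hij
        exact (hRd i j hij).mono Finset.inter_subset_right Finset.inter_subset_right
    have h2 : (m : ℝ) * Ru.card < ∑ j : Fin m, (m : ℝ) * (Ru ∩ R j).card := by
      have : (m : ℝ) * Ru.card = ∑ j : Fin m, (Ru.card : ℝ) := by simp
      rw [this]
      exact Finset.sum_lt_sum_of_nonempty ⟨⟨0, hm⟩, Finset.mem_univ _⟩ (fun j _ => hcon j)
    rw [← Finset.mul_sum] at h2
    have h3 : (∑ j : Fin m, ((Ru ∩ R j).card : ℝ)) ≤ Ru.card := by exact_mod_cast h1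
    nlinarith
  set Q := Ru ∩ R j with hQ
  have hQc : N * (m * (Q.card : ℝ)) ≤ 4 * k * n := by
    refine le_trans ?_ hRuc
    gcongr
  set W : Finset V := Finset.univ.filter (fun v => d < 4 * N * (dg G Q v : ℝ)) with hW
  have hWc : m * (W.card : ℝ) ≤ 32 * k * n := by
    have h1 : (W.card : ℝ) * d ≤ ∑ v, 4 * N * (dg G Q v : ℝ) := by
      rw [← nsmul_eq_mul]
      refine (Finset.card_nsmul_le_sum W (fun v => 4 * N * (dg G Q v : ℝ)) _ ?_).trans
        (Finset.sum_le_sum_of_subset_of_nonneg (Finset.subset_univ _) ?_)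
      · intro v hv; exact (Finset.mem_filter.1 hv).2.le
      · intro v _ _; positivity
    have h2 : ∑ v, (dg G Q v : ℝ) ≤ Q.card * (2 * d) := by
      have : ∑ v, (dg G Q v : ℝ) = ∑ u ∈ Q, (dg G Finset.univ u : ℝ) := by
        exact_mod_cast dg_comm G Finset.univ Q
      rw [this, ← nsmul_eq_mul]
      exact Finset.sum_le_card_nsmul _ _ _ (fun u _ => hdeg u)
    rw [← Finset.mul_sum] at h1
    have h3 : (W.card : ℝ) * d ≤ (8 * (N * Q.card)) * d := by
      have : 4 * (N : ℝ) * ∑ v, (dg G Q v : ℝ) ≤ 4 * N * (Q.card * (2 * d)) := by gcongr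
      linarith
    have h4 := le_of_mul_le_mul_right h3 hd
    have h5 : m * (W.card : ℝ) ≤ m * (8 * (N * Q.card)) := by gcongr
    linarith
  -- a vertex that is not weak has many neighbours in the unused part of the reservoir
  have hgood : ∀ x ∈ I, ∀ i < ℓ, P x i ∉ W → C₀ + 1 ≤ dg G (R j \ Ru) (P x i) := by
    intro x hx i hi hw
    have h1 : 4 * N * (dg G Q (P x i) : ℝ) ≤ d := by
      by_contra hc
      push Not at hc
      exact hw (Finset.mem_filter.2 ⟨Finset.mem_univ _, hc⟩)
    have h2 := hPd x hx i hi j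
    have h3 : dg G (R j) (P x i) ≤ dg G (R j \ Ru) (P x i) + dg G Q (P x i) := by
      unfold dg
      refine (Finset.card_le_card ?_).trans (Finset.card_union_le _ _)
      intro z hz
      rw [Finset.mem_filter] at hz
      by_cases hzR : z ∈ Ru
      · exact Finset.mem_union_right _ (Finset.mem_filter.2 ⟨Finset.mem_inter.2 ⟨hzR, hz.1⟩, hz.2⟩)
      · exact Finset.mem_union_left _ (Finset.mem_filter.2 ⟨Finset.mem_sdiff.2 ⟨hz.1, hzR⟩, hz.2⟩)
    have h3' : (dg G (R j) (P x i) : ℝ) ≤ dg G (R j \ Ru) (P x i) + dg G Q (P x i) := by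
      exact_mod_cast h3
    have h4 : d ≤ 4 * N * (dg G (R j \ Ru) (P x i) : ℝ) := by nlinarith
    have h5 : 4 * (N : ℝ) * ((C₀ : ℝ) + 1) ≤ 4 * N * (dg G (R j \ Ru) (P x i) : ℝ) := c3.trans h4
    have h6 := le_of_mul_le_mul_left h5 (by positivity)
    exact_mod_cast h6
  -- dead paths
  have hdead : ∀ o : ℕ, o + h ≤ ℓ →
      h * ((I \ Iu).filter (fun x => ∀ i < h, P x (o + i) ∈ W)).card ≤ W.card := by
    intro o ho
    set De := (I \ Iu).filter (fun x => ∀ i < h, P x (o + i) ∈ W) with hDe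
    have h1 : (De ×ˢ Finset.range h).image (fun z => P z.1 (o + z.2)) ⊆ W := by
      intro z hz
      obtain ⟨⟨x, i⟩, hx, rfl⟩ := Finset.mem_image.1 hz
      rw [Finset.mem_product, Finset.mem_range] at hx
      exact (Finset.mem_filter.1 hx.1).2 i hx.2
    have h2 := Finset.card_le_card h1
    rw [Finset.card_image_of_injOn, Finset.card_product, Finset.card_range, mul_comm] at h2
    · exact h2
    · rintro ⟨x, i⟩ hx ⟨y, i'⟩ hy hxy
      simp only [Finset.coe_product, Set.mem_prod, Finset.mem_coe, Finset.mem_range] at hx hy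
      have hxI := (Finset.mem_sdiff.1 (Finset.mem_filter.1 hx.1).1).1
      have hyI := (Finset.mem_sdiff.1 (Finset.mem_filter.1 hy.1).1).1
      obtain ⟨h3, h4⟩ := hPinj x hxI y hyI (o + i) (by omega) (o + i') (by omega) hxy
      have h4' : i = i' := by omega
      rw [h3, h4']
  set D1 := (I \ Iu).filter (fun x => ∀ i < h, P x (0 + i) ∈ W) with hD1
  set D2 := (I \ Iu).filter (fun x => ∀ i < h, P x (ℓ - h + i) ∈ W) with hD2
  have hd1 := hdead 0 (by omega)
  have hd2 := hdead (ℓ - h) (by omega)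
  set T := ((I \ Iu) \ D1) \ D2 with hT
  have hTU : T ⊆ I \ Iu := (Finset.sdiff_subset).trans Finset.sdiff_subset
  have hTc : (I \ Iu).card ≤ T.card + D1.card + D2.card := by
    have e1 : ((I \ Iu) \ D1).card ≤ T.card + D2.card := Finset.card_le_card_sdiff_add_card
    have e2 := Finset.card_le_card_sdiff_add_card (t := D1) (s := I \ Iu)
    omega
  have hTcard : θ * k * n ≤ 4 * (N * (T.card : ℝ)) := by
    have e1 : ((I \ Iu).card : ℝ) ≤ T.card + D1.card + D2.card := by exact_mod_cast hTc
    have e2 : (h : ℝ) * D1.card ≤ W.card := by exact_mod_cast hd1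
    have e3 : (h : ℝ) * D2.card ≤ W.card := by exact_mod_cast hd2
    have e4 : (h * m : ℝ) * (D1.card + D2.card) ≤ 64 * k * n := by
      have : (m : ℝ) * (h * D1.card) ≤ m * W.card := by gcongr
      have : (m : ℝ) * (h * D2.card) ≤ m * W.card := by gcongr
      linarith
    have e5 : 256 * (N : ℝ) * (D1.card + D2.card) ≤ 64 * (θ * k * n) := by
      have f1 : 256 * (N : ℝ) * (D1.card + D2.card) ≤ θ * (h * m) * (D1.card + D2.card) := by gcongr
      have f2 : θ * ((h * m : ℝ) * (D1.card + D2.card)) ≤ θ * (64 * k * n) := by gcongr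
      linarith
    have e6 : θ * (k * n) ≤ 2 * (N * ((T.card : ℝ) + D1.card + D2.card)) := by
      have f1 : θ * (k * n) ≤ θ * (2 * (N * (I.card : ℝ))) := by gcongr
      have f2 : (N : ℝ) * (θ * I.card) ≤ N * (T.card + D1.card + D2.card) := by
        gcongr
        exact hU.trans e1
      linarith
    linarith
  have hTne : T.Nonempty := by
    rw [← Finset.card_pos]
    by_contra hc
    have : T.card = 0 := by omega
    rw [this] at hTcard
    have : 0 < θ * k * n := by positivity
    simp at hTcard
    linarith
  have hTC : C₀ * (R j \ Ru).card ≤ 2 * T.card := by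
    have e1 : ((R j \ Ru).card : ℝ) ≤ (R j).card := by
      exact_mod_cast Finset.card_le_card Finset.sdiff_subset
    have e2 : (N : ℝ) * (C₀ * (R j \ Ru).card) ≤ N * (2 * T.card) := by
      have f1 : (N : ℝ) * (R j \ Ru).card ≤ 2 * n := le_trans (by gcongr) (hRc j)
      have f2 : C₀ * ((N : ℝ) * (R j \ Ru).card) ≤ C₀ * (2 * n) := by gcongr
      have f3 : 4 * (C₀ : ℝ) * n ≤ θ * k * n := by gcongr
      linarith
    have e3 := le_of_mul_le_mul_left e2 (by linarith)
    exact_mod_cast e3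
  have hA : ∀ x, ∃ i, x ∈ T → i < h ∧ P x (0 + i) ∉ W := by
    intro x
    by_cases hx : x ∈ T
    · have h1 := Finset.mem_sdiff.1 (Finset.mem_sdiff.1 hx).1
      by_contra hc
      push Not at hc
      exact h1.2 (Finset.mem_filter.2 ⟨h1.1, fun i hi => (hc i).2 hi⟩)
    · exact ⟨0, fun h => absurd h hx⟩
  have hB : ∀ x, ∃ i, x ∈ T → i < h ∧ P x (ℓ - h + i) ∉ W := by
    intro x
    by_cases hx : x ∈ T
    · have h1 := Finset.mem_sdiff.1 hx
      by_contra hc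
      push Not at hc
      exact h1.2 (Finset.mem_filter.2 ⟨hTU hx, fun i hi => (hc i).2 hi⟩)
    · exact ⟨0, fun h => absurd h hx⟩
  choose a ha using hA
  choose b hb using hB
  refine ⟨j, T, a, fun x => ℓ - h + b x, hTU, hTne, fun x hx => (ha x hx).1, ?_, ?_, ?_, hTC⟩
  · intro x hx
    have := (hb x hx).1
    beta_reduce
    constructor <;> omega
  · intro x hx
    have h1 := ha x hx
    rw [zero_add] at h1
    exact hgood x (Finset.mem_sdiff.1 (hTU hx)).1 _ (by omega) h1.2
  · intro x hx
    have h1 := hb x hx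
    beta_reduce
    exact hgood x (Finset.mem_sdiff.1 (hTU hx)).1 _ (by omega) h1.2

end SubdivPack
namespace SubdivPack
open scoped Classical

lemma ncard_nbr {V : Type*} [Fintype V] (G : SimpleGraph V) (v : V) :
    (G.neighborSet v).ncard = dg G Finset.univ v := by
  have : G.neighborSet v = ↑(Finset.univ.filter (G.Adj v)) := by
    ext w; simp
  rw [this, Set.ncard_coe_finset]
  rfl

lemma final_arith (s ν n h cov U J : ℝ) (hs : 2 ≤ s) (hν : 5 ≤ ν * (s + 1)) (hh : 0 ≤ h)
    (hn : 0 ≤ n) (hJ : (1 - 1 / s) * n ≤ h * (1 + s) * J) (hU : (1 - 1 / s) * J ≤ U)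
    (hcov : U * (h * (s - 2)) ≤ cov) : (1 - ν) * n ≤ cov := by
  have hs2 : 0 ≤ s - 2 := by linarith
  have hi : 1 / s ≤ 1 := by rw [div_le_one (by linarith)]; linarith
  have hi0 : 0 ≤ 1 - 1 / s := by linarith
  have e1 : (1 - 1 / s) * J * (h * (s - 2)) ≤ cov :=
    (mul_le_mul_of_nonneg_right hU (by positivity)).trans hcov
  have e2 : (1 - 1 / s) * (s - 2) * ((1 - 1 / s) * n) ≤
      (1 - 1 / s) * (s - 2) * (h * (1 + s) * J) :=
    mul_le_mul_of_nonneg_left hJ (by positivity)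
  have e3 : (1 - 1 / s) * (s - 2) * ((1 - 1 / s) * n) ≤ cov * (1 + s) := by
    have := mul_le_mul_of_nonneg_right e1 (by linarith : 0 ≤ 1 + s)
    linarith
  have e4 : s - 4 ≤ (1 - 1 / s) * (s - 2) * (1 - 1 / s) := by
    have : (1 - 1 / s) * (s - 2) * (1 - 1 / s) - (s - 4) = (5 * s - 2) / s ^ 2 := by
      field_simp
      ring
    have h2 : 0 ≤ (5 * s - 2) / s ^ 2 := by
      apply div_nonneg <;> nlinarith
    linarith
  have e5 : (s - 4) * n ≤ cov * (1 + s) := by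
    have := mul_le_mul_of_nonneg_right e4 hn
    linarith
  have e6 : (1 - ν) * n * (1 + s) ≤ cov * (1 + s) := by
    have := mul_le_mul_of_nonneg_right hν hn
    linarith
  exact le_of_mul_le_mul_right e6 (by linarith)

end SubdivPack
/-- Lemma 3.1: for a fixed graph `F` with no isolated vertices and at least one edge, and any
`ν > 0`, there are `γ > 0` and `d₀` such that for all `n ≥ d ≥ d₀`, every `n`-vertex graph all
of whose degrees are `(1 ± γ) d` contains a collection of pairwise vertex-disjoint
`F`-subdivisions covering at least `(1 - ν) n` vertices. -/
theorem stmt_1 {α : Type*} [Fintype α] (F : SimpleGraph α)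
    (hFiso : ∀ a : α, ∃ b : α, F.Adj a b) (hFe : ∃ a b : α, F.Adj a b)
    (ν : ℝ) (hν : 0 < ν) :
    ∃ (γ : ℝ) (d₀ : ℕ), 0 < γ ∧ ∀ n d : ℕ, d₀ ≤ d → d ≤ n →
      ∀ (V : Type*) [Fintype V] (G : SimpleGraph V), Fintype.card V = n →
        (∀ v : V, (1 - γ) * d ≤ ((G.neighborSet v).ncard : ℝ) ∧
          ((G.neighborSet v).ncard : ℝ) ≤ (1 + γ) * d) →
        ∃ 𝒞 : Set G.Subgraph,
          (∀ H ∈ 𝒞, F.IsSubdivision H.coe) ∧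
          (𝒞.Pairwise fun H₁ H₂ => Disjoint H₁.verts H₂.verts) ∧
          (1 - ν) * n ≤ ((⋃ H ∈ 𝒞, H.verts).ncard : ℝ) := by
  classical
  obtain ⟨C, hC⟩ := SubdivPack.mader _ F rfl
  have hne : Nonempty α := ⟨hFe.choose⟩
  obtain ⟨s, hs2, hsν⟩ : ∃ s : ℕ, 2 ≤ s ∧ 5 ≤ ν * ((s : ℝ) + 1) := by
    refine ⟨⌈5 / ν⌉₊ + 2, by omega, ?_⟩
    have h1 := Nat.le_ceil (5 / ν)
    rw [div_le_iff₀ hν] at h1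
    push_cast
    nlinarith
  have hs2' : (2 : ℝ) ≤ s := by exact_mod_cast hs2
  obtain ⟨h, hh⟩ : ∃ h : ℕ, h = 512 * s ^ 2 := ⟨_, rfl⟩
  obtain ⟨k, hk⟩ : ∃ k : ℕ, k = 4 * (C + 1) * s := ⟨_, rfl⟩
  obtain ⟨N, hN⟩ : ∃ N : ℕ, N = k * h + k * (s * h) := ⟨_, rfl⟩
  have hh1 : 1 ≤ h := by rw [hh]; nlinarith
  have hk1 : 1 ≤ k := by rw [hk]; nlinarith
  have hkh : 1 ≤ k * h := Nat.mul_pos hk1 hh1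
  have hN1 : 1 ≤ N := by rw [hN]; omega
  have hN1' : (1 : ℝ) ≤ N := by exact_mod_cast hN1
  have hh' : (h : ℝ) = 512 * (s : ℝ) ^ 2 := by rw [hh]; push_cast; ring
  have hk' : (k : ℝ) = 4 * ((C : ℝ) + 1) * s := by rw [hk]; push_cast; ring
  have hN' : (N : ℝ) = k * h * (1 + s) := by rw [hN]; push_cast; ring
  have hk1' : (1 : ℝ) ≤ k := by exact_mod_cast hk1
  have hh1' : (1 : ℝ) ≤ h := by exact_mod_cast hh1
  obtain ⟨η, hη⟩ : ∃ η : ℝ, η = 1 / (s : ℝ) := ⟨_, rfl⟩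
  have hη0 : 0 < η := by rw [hη]; positivity
  have hη2 : η ≤ 1 / 2 := by
    rw [hη]; exact one_div_le_one_div_of_le (by norm_num) hs2'
  have hηs : η * s = 1 := by rw [hη]; field_simp
  obtain ⟨ε, hε⟩ : ∃ ε : ℝ, ε = η / (11 * (N : ℝ) ^ 3) := ⟨_, rfl⟩
  have hε0 : 0 < ε := by rw [hε]; positivity
  have hεη : ε * (11 * (N : ℝ) ^ 3) = η := by rw [hε]; field_simp
  have hε1 : ε ≤ 1 := by
    have : (1 : ℝ) ≤ N ^ 3 := one_le_pow₀ hN1'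
    nlinarith
  refine ⟨ε, ⌈2 * (N : ℝ) ^ 2 / ε ^ 3⌉₊ + 4 * N * (C + 1), hε0, ?_⟩
  intro n d hd₀ hdn V _ G hVn hdeg
  have hdpos : 0 < d := by
    have : 0 < 4 * N * (C + 1) := by positivity
    omega
  have hd' : (0 : ℝ) < d := by exact_mod_cast hdpos
  have hd1 : 2 * (N : ℝ) ^ 2 ≤ ε ^ 3 * d := by
    have h1 := Nat.le_ceil (2 * (N : ℝ) ^ 2 / ε ^ 3)
    have h2 : ((⌈2 * (N : ℝ) ^ 2 / ε ^ 3⌉₊ : ℕ) : ℝ) ≤ d := by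
      exact_mod_cast le_trans (Nat.le_add_right _ _) hd₀
    have h3 := h1.trans h2
    rw [div_le_iff₀ (by positivity)] at h3
    linarith
  have hd2 : 4 * (N : ℝ) * ((C : ℝ) + 1) ≤ d := by
    exact_mod_cast le_trans (Nat.le_add_left _ _) hd₀
  have hcard : 1 ≤ Fintype.card V := by omega
  have hVne : Nonempty V := Fintype.card_pos_iff.1 hcard
  simp only [SubdivPack.ncard_nbr] at hdeg
  have hsh : 1 ≤ s * h := Nat.mul_pos (by omega) hh1
  obtain ⟨R, I, P, hRd, hPinj, hPadj, hPR, hPd, hRc, hI1, hI2⟩ :=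
    SubdivPack.exists_paths (k * h) k (s * h) hk1 hsh η hη0 (by linarith) N hN ε d hεη hd' hd1 G hdeg
  have hhl : 2 * h ≤ s * h := Nat.mul_le_mul_right h hs2
  set St : Finset V → Prop := fun Iu => ∃ 𝒞 Ru,
    SubdivPack.State F G R I P (s * h) (s * h - 2 * h) 𝒞 Iu Ru with hSt
  have hSt0 : St ∅ := ⟨∅, ∅, by simp, by simp, by simp, by simp, by simp, by simp, by simp⟩
  obtain ⟨Iu, hIu, hmax⟩ := Finset.exists_max_image (I.powerset.filter St) Finset.card
    ⟨∅, by simp [hSt0]⟩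
  obtain ⟨𝒞, Ru, hS⟩ := (Finset.mem_filter.1 hIu).2
  have hbig : ((I \ Iu).card : ℝ) < η * I.card := by
    by_contra hcon
    push Not at hcon
    have hI1' : (k : ℝ) * Fintype.card V ≤ 2 * (N * (I.card : ℝ)) := by
      have : 0 ≤ (k : ℝ) * Fintype.card V := by positivity
      nlinarith
    obtain ⟨j, T, a, b, hT, hTne, ha, hb, da, db, hTC⟩ :=
      SubdivPack.find_ext (θ := η) (G := G) (C₀ := C) hη0 hd' hkh hN1 hh1 hk1 hcard hhl
        (by
          push_cast
          rw [hN', hh']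
          have h1 : η * (512 * (s : ℝ) ^ 2 * (k * (512 * s ^ 2))) =
            (η * s) * (512 * s * (k * (512 * s ^ 2))) := by ring
          rw [h1, hηs, one_mul]
          have h2 : 0 ≤ (k : ℝ) * (512 * s ^ 2) := by positivity
          nlinarith)
        (by
          rw [hk']
          have h1 : η * (4 * ((C : ℝ) + 1) * s) = (η * s) * (4 * ((C : ℝ) + 1)) := by ring
          rw [h1, hηs]
          linarith)
        hd2 (fun v => (hdeg v).2.trans (by nlinarith)) hRd hPinj hPd hRc hI1' hI2 hS.Isub hS.Rcard
        hcon
    obtain ⟨C', Iu', Ru', hS', hlt⟩ := hS.extend hFiso (hC V) hhl hPinj hPadj hPR j T hT hTne a b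
      ha hb da db hTC
    have := hmax Iu' (Finset.mem_filter.2 ⟨Finset.mem_powerset.2 hS'.Isub, C', Ru', hS'⟩)
    omega
  refine ⟨𝒞, hS.sub, hS.pd, ?_⟩
  have hU : (1 - 1 / (s : ℝ)) * I.card ≤ Iu.card := by
    have h1 : (I.card : ℝ) ≤ (I \ Iu).card + Iu.card := by
      exact_mod_cast Finset.card_le_card_sdiff_add_card
    rw [← hη]
    linarith
  have hcov : (Iu.card : ℝ) * (h * ((s : ℝ) - 2)) ≤ ((⋃ H ∈ 𝒞, H.verts).ncard : ℝ) := by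
    have h1 : (Iu.card : ℝ) * ((s * h - 2 * h : ℕ) : ℝ) ≤ ((⋃ H ∈ 𝒞, H.verts).ncard : ℝ) := by
      exact_mod_cast hS.cov
    rw [Nat.cast_sub hhl] at h1
    push_cast at h1
    linarith
  refine SubdivPack.final_arith s ν n h _ Iu.card I.card hs2' hsν (by positivity) (by positivity)
    ?_ hU hcov
  rw [← hη, ← hVn]
  have h1 : (k : ℝ) * ((1 - η) * (Fintype.card V : ℝ)) ≤ k * (h * (1 + s) * I.card) := by
    rw [hN'] at hI1
    linarith
  exact le_of_mul_le_mul_left h1 (by linarith)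
end

section
/- For all γ, p with 0 < γ, p ≤ 1/2, there exists d₀ such that the following holds for all d ≥ d₀. Let m ∈ ℕ and let p₁, …, p_m ≥ p be reals with p₁ + ⋯ + p_m = 1. Let G be a graph with maximum degree Δ(G) ≤ 2d containing non-empty vertex sets A and V such that d_G(v, A) ≥ (1 − γ)d for each v ∈ V. Then there is a partition A = A₁ ∪ ⋯ ∪ A_m such that: (A1) for each v ∈ V and i ∈ [m], d_G(v, A_i) ≥ (1 − 2γ)p_i d; and (A2) for each i ∈ [m], (1 − γ)p_i|A| ≤ |A_i| ≤ (1 + γ)p_i|A|. Moreover, if additionally d_G(v, A) ≤ (1 + γ)d for each v ∈ V, then the partition can be chosen so that also (A3) for each v ∈ V and i ∈ [m], d_G(v, A_i) ≤ (1 + 2γ)p_i d. -/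
open SimpleGraph

namespace LLLAux

open Finset

/-- Weighted measure of an event in a finite space. -/
noncomputable def Pr {Ω : Type*} [Fintype Ω] (w : Ω → ℝ) (s : Set Ω) : ℝ :=
  ∑ ω, s.indicator w ω

section basic
variable {Ω : Type*} [Fintype Ω] {w : Ω → ℝ}

lemma Pr_nonneg (hw : ∀ ω, 0 ≤ w ω) (s : Set Ω) : 0 ≤ Pr w s :=
  Finset.sum_nonneg fun ω _ => Set.indicator_nonneg (fun x _ => hw x) ω

lemma Pr_mono (hw : ∀ ω, 0 ≤ w ω) {s t : Set Ω} (h : s ⊆ t) : Pr w s ≤ Pr w t :=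
  Finset.sum_le_sum fun ω _ => Set.indicator_le_indicator_of_subset h hw ω

lemma Pr_inter_add_compl (s t : Set Ω) : Pr w (s ∩ t) + Pr w (sᶜ ∩ t) = Pr w t := by
  classical
  unfold Pr
  rw [← Finset.sum_add_distrib]
  refine Finset.sum_congr rfl fun ω _ => ?_
  by_cases h1 : ω ∈ s <;> by_cases h2 : ω ∈ t <;> simp [Set.indicator, h1, h2]

lemma Pr_union_le (hw : ∀ ω, 0 ≤ w ω) (s t : Set Ω) : Pr w (s ∪ t) ≤ Pr w s + Pr w t := by
  classical
  unfold Pr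
  rw [← Finset.sum_add_distrib]
  refine Finset.sum_le_sum fun ω _ => ?_
  have := hw ω
  by_cases h1 : ω ∈ s <;> by_cases h2 : ω ∈ t <;> simp [Set.indicator, h1, h2, this]

lemma Pr_empty : Pr w ∅ = 0 := by simp [Pr]

lemma Pr_biUnion_le {ι : Type*} (hw : ∀ ω, 0 ≤ w ω) (T : Finset ι) (E : ι → Set Ω) :
    Pr w (⋃ k ∈ T, E k) ≤ ∑ k ∈ T, Pr w (E k) := by
  classical
  induction T using Finset.induction_on with
  | empty => simp [Pr_empty]
  | insert a T ha ih =>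
    rw [Finset.sum_insert ha, Finset.set_biUnion_insert]
    exact (Pr_union_le hw _ _).trans (by linarith)

end basic

/-- The event that none of the events in `T` holds. -/
def Nn {Ω ι : Type*} (E : ι → Set Ω) (T : Finset ι) : Set Ω := {ω | ∀ k ∈ T, ω ∉ E k}

theorem lll_step {Ω ι : Type*} [Fintype Ω] [DecidableEq ι] (w : Ω → ℝ) (hw : ∀ ω, 0 ≤ w ω)
    (F : Finset ι) (E : ι → Set Ω) (R : ι → ι → Prop) [DecidableRel R] (q : ℝ) (D : ℕ)
    (hq0 : 0 ≤ q)
    (hq : ∀ j ∈ F, Pr w (E j) ≤ q)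
    (hD : ∀ j ∈ F, (F.filter (R j)).card ≤ D)
    (hqD : 4 * q * D ≤ 1)
    (hind : ∀ j ∈ F, ∀ T ⊆ F, (∀ k ∈ T, ¬ R j k) →
      Pr w (E j ∩ Nn E T) = Pr w (E j) * Pr w (Nn E T)) :
    ∀ n : ℕ, ∀ T ⊆ F, T.card = n → ∀ j ∈ F, j ∉ T →
      Pr w (E j ∩ Nn E T) ≤ 2 * q * Pr w (Nn E T) := by
  intro n
  induction n using Nat.strong_induction_on with
  | _ n ih =>
  intro T hT hn j hj hjT
  set T1 := T.filter (R j) with hT1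
  set T2 := T.filter (fun k => ¬ R j k) with hT2
  have hT2F : T2 ⊆ F := (Finset.filter_subset _ _).trans hT
  have h1 : Pr w (E j ∩ Nn E T) ≤ q * Pr w (Nn E T2) := by
    calc Pr w (E j ∩ Nn E T) ≤ Pr w (E j ∩ Nn E T2) := by
          apply Pr_mono hw
          rintro ω ⟨ha, hb⟩
          exact ⟨ha, fun k hk => hb k (Finset.mem_filter.1 hk).1⟩
      _ = Pr w (E j) * Pr w (Nn E T2) :=
          hind j hj T2 hT2F (fun k hk => (Finset.mem_filter.1 hk).2)
      _ ≤ _ := mul_le_mul_of_nonneg_right (hq j hj) (Pr_nonneg hw _)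
  have h2 : Pr w (Nn E T2) ≤ 2 * Pr w (Nn E T) := by
    rcases T1.eq_empty_or_nonempty with he | hne
    · have : T2 = T := by
        rw [hT2, Finset.filter_eq_self]
        intro k hk hR
        have : k ∈ T1 := Finset.mem_filter.2 ⟨hk, hR⟩
        simp [he] at this
      rw [this]
      linarith [Pr_nonneg hw (Nn E T)]
    · have hcard : T1.card + T2.card = T.card := Finset.card_filter_add_card_filter_not _
      have hpos := hne.card_pos
      have hsub : Nn E T2 ⊆ Nn E T ∪ ⋃ k ∈ T1, (E k ∩ Nn E T2) := by
        intro ω hω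
        by_cases h : ω ∈ Nn E T
        · exact Or.inl h
        · right
          simp only [Nn, Set.mem_ofPred_eq, not_forall, not_not] at h
          obtain ⟨k, hk, hkE⟩ := h
          simp only [Set.mem_iUnion]
          refine ⟨k, ?_, hkE, hω⟩
          refine Finset.mem_filter.2 ⟨hk, ?_⟩
          by_contra hR
          exact hω k (Finset.mem_filter.2 ⟨hk, hR⟩) hkE
      have h3 := (Pr_mono hw hsub).trans (Pr_union_le hw _ _)
      have h4 := Pr_biUnion_le hw T1 (fun k => E k ∩ Nn E T2)
      have h5 : ∑ k ∈ T1, Pr w (E k ∩ Nn E T2) ≤ T1.card • (2 * q * Pr w (Nn E T2)) := by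
        apply Finset.sum_le_card_nsmul
        intro k hk
        refine ih T2.card (by omega) T2 hT2F rfl k (hT (Finset.mem_filter.1 hk).1) ?_
        intro hk2
        exact (Finset.mem_filter.1 hk2).2 (Finset.mem_filter.1 hk).2
      have h6 : T1.card ≤ D :=
        (Finset.card_le_card (Finset.filter_subset_filter _ hT)).trans (hD j hj)
      have h7 : (T1.card : ℝ) ≤ D := by exact_mod_cast h6
      rw [nsmul_eq_mul] at h5
      have h8 := Pr_nonneg hw (Nn E T2)
      have h9 : (T1.card : ℝ) * (2 * q * Pr w (Nn E T2)) ≤ D * (2 * q * Pr w (Nn E T2)) := by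
        gcongr
      have h10 : 4 * q * D * Pr w (Nn E T2) ≤ 1 * Pr w (Nn E T2) := by gcongr
      nlinarith
  nlinarith

theorem lll {Ω ι : Type*} [Fintype Ω] [DecidableEq ι] (w : Ω → ℝ) (hw : ∀ ω, 0 ≤ w ω)
    (hw1 : 0 < ∑ ω, w ω)
    (F : Finset ι) (E : ι → Set Ω) (R : ι → ι → Prop) [DecidableRel R] (q : ℝ) (D : ℕ)
    (hq0 : 0 ≤ q) (hq4 : q ≤ 1 / 4)
    (hq : ∀ j ∈ F, Pr w (E j) ≤ q)
    (hD : ∀ j ∈ F, (F.filter (R j)).card ≤ D)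
    (hqD : 4 * q * D ≤ 1)
    (hind : ∀ j ∈ F, ∀ T ⊆ F, (∀ k ∈ T, ¬ R j k) →
      Pr w (E j ∩ Nn E T) = Pr w (E j) * Pr w (Nn E T)) :
    ∃ ω, ∀ j ∈ F, ω ∉ E j := by
  have key := lll_step w hw F E R q D hq0 hq hD hqD hind
  have hpos : ∀ T : Finset ι, T ⊆ F → 0 < Pr w (Nn E T) := by
    intro T
    induction T using Finset.induction_on with
    | empty =>
      intro _
      have : Nn E (∅ : Finset ι) = Set.univ := by ext; simp [Nn]
      rw [this]; simpa [Pr] using hw1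
    | insert a T ha ih =>
      intro hT
      have h1 := ih ((Finset.subset_insert _ _).trans hT)
      have h2 := key T.card T ((Finset.subset_insert _ _).trans hT) rfl a
        (hT (Finset.mem_insert_self _ _)) ha
      have h3 := Pr_inter_add_compl (w := w) (E a) (Nn E T)
      have h4 : Nn E (insert a T) = (E a)ᶜ ∩ Nn E T := by ext; simp [Nn]
      rw [h4]
      nlinarith
  by_contra hcon
  have : Nn E F = ∅ := by
    ext ω
    simp only [Set.mem_empty_iff_false, iff_false]
    exact fun h => hcon ⟨ω, h⟩
  have h := hpos F subset_rfl
  rw [this, Pr_empty] at h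
  exact lt_irrefl _ h

/-- product weight -/
noncomputable def pw {α κ : Type*} [Fintype α] (r : κ → ℝ) (c : α → κ) : ℝ := ∏ a, r (c a)

section prod
variable {α κ : Type*} [Fintype α] [DecidableEq α] [Fintype κ] [DecidableEq κ] {r : κ → ℝ}

lemma pw_nonneg (hr : ∀ i, 0 ≤ r i) (c : α → κ) : 0 ≤ pw r c :=
  Finset.prod_nonneg fun a _ => hr _

lemma sum_pw_mul (g : α → κ → ℝ) :
    ∑ c : α → κ, pw r c * ∏ a, g a (c a) = ∏ a, ∑ i, r i * g a i := by
  rw [Finset.prod_univ_sum]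
  simp [pw, Finset.prod_mul_distrib]

lemma sum_pw (h1 : ∑ i, r i = 1) : ∑ c : α → κ, pw r c = 1 := by
  have := sum_pw_mul (α := α) (r := r) (fun _ _ => 1)
  simpa [h1] using this

/-- swap two colourings outside `S` -/
def mix (S : Finset α) (x : (α → κ) × (α → κ)) : (α → κ) × (α → κ) :=
  (fun a => if a ∈ S then x.1 a else x.2 a, fun a => if a ∈ S then x.2 a else x.1 a)

lemma mix_invol (S : Finset α) : Function.Involutive (mix (κ := κ) S) := by
  rintro ⟨x, y⟩
  ext a <;> by_cases h : a ∈ S <;> simp [mix, h]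

lemma indep (h1 : ∑ i, r i = 1) (S : Finset α) (s t : Set (α → κ))
    (hs : ∀ c c' : α → κ, (∀ a ∈ S, c a = c' a) → (c ∈ s ↔ c' ∈ s))
    (ht : ∀ c c' : α → κ, (∀ a ∉ S, c a = c' a) → (c ∈ t ↔ c' ∈ t)) :
    Pr (pw r) (s ∩ t) = Pr (pw r) s * Pr (pw r) t := by
  classical
  have h2 : Pr (pw r) (s ∩ t) = Pr (pw r) (s ∩ t) * ∑ c : α → κ, pw r c := by
    rw [sum_pw h1, mul_one]
  rw [h2]
  unfold Pr
  rw [Finset.sum_mul_sum, Finset.sum_mul_sum, ← Fintype.sum_prod_type', ← Fintype.sum_prod_type']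
  refine Fintype.sum_equiv (mix_invol S).toPerm _ _ ?_
  rintro ⟨x, y⟩
  have e1 : (mix S (x, y)).1 ∈ s ↔ x ∈ s := hs _ _ (by intro a ha; simp [mix, ha])
  have e2 : (mix S (x, y)).2 ∈ t ↔ x ∈ t := ht _ _ (by intro a ha; simp [mix, ha])
  have e3 : pw r x * pw r y = pw r (mix S (x, y)).1 * pw r (mix S (x, y)).2 := by
    simp only [pw, ← Finset.prod_mul_distrib]
    refine Finset.prod_congr rfl fun a _ => ?_
    by_cases h : a ∈ S <;> simp [mix, h, mul_comm]
  simp only [Function.Involutive.coe_toPerm, Set.indicator, e1, e2, Set.mem_inter_iff]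
  by_cases hx : x ∈ s <;> by_cases hy : x ∈ t <;> simp [hx, hy, e3]

/-- count of colour `i` in `S` -/
def cnt (S : Finset α) (i : κ) (c : α → κ) : ℕ := (S.filter (fun a => c a = i)).card

lemma mgf (hr : ∀ i, 0 ≤ r i) (h1 : ∑ i, r i = 1) (S : Finset α) (i : κ) (s : ℝ)
    (hs : |s| ≤ 1) :
    ∑ c : α → κ, pw r c * Real.exp (s * cnt S i c) ≤
      Real.exp (S.card * r i * (s + s ^ 2)) := by
  have e : ∀ c : α → κ, Real.exp (s * cnt S i c) =
      ∏ a, (if a ∈ S then (if c a = i then Real.exp s else 1) else 1) := by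
    intro c
    rw [Finset.prod_ite_mem, Finset.univ_inter, Finset.prod_ite, Finset.prod_const,
      Finset.prod_const_one, mul_one, ← Real.exp_nat_mul, cnt, mul_comm]
  simp only [e]
  rw [sum_pw_mul (fun a j => if a ∈ S then (if j = i then Real.exp s else 1) else 1)]
  have f : ∀ a, ∑ j, r j * (if a ∈ S then (if j = i then Real.exp s else 1) else 1)
      = if a ∈ S then 1 + r i * (Real.exp s - 1) else 1 := by
    intro a
    by_cases ha : a ∈ S
    · simp only [ha, if_true]
      have : ∀ j, r j * (if j = i then Real.exp s else 1)
          = r j + (if j = i then r i * (Real.exp s - 1) else 0) := by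
        intro j
        by_cases h : j = i
        · subst h; simp; ring
        · simp [h]
      simp only [this, Finset.sum_add_distrib, h1]
      simp
    · simp [ha, h1]
  simp only [f]
  rw [Finset.prod_ite_mem, Finset.univ_inter, Finset.prod_const, mul_assoc, Real.exp_nat_mul]
  have hri : r i ≤ 1 := by
    rw [← h1]; exact Finset.single_le_sum (fun j _ => hr j) (Finset.mem_univ i)
  apply pow_le_pow_left₀
  · nlinarith [hr i, Real.exp_pos s]
  · have h3 : Real.exp s - 1 ≤ s + s ^ 2 := by
      have := (abs_le.1 (Real.abs_exp_sub_one_sub_id_le hs)).2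
      linarith
    have h4 := Real.add_one_le_exp (r i * (s + s ^ 2))
    nlinarith [hr i, mul_le_mul_of_nonneg_left h3 (hr i)]

lemma tail (hr : ∀ i, 0 ≤ r i) (h1 : ∑ i, r i = 1) (S : Finset α) (i : κ) (s y : ℝ)
    (hs : |s| ≤ 1) :
    Pr (pw r) {c : α → κ | y ≤ s * cnt S i c} ≤ Real.exp (S.card * r i * (s + s ^ 2) - y) := by
  classical
  rw [Real.exp_sub, le_div_iff₀ (Real.exp_pos y)]
  refine le_trans ?_ (mgf hr h1 S i s hs)
  unfold Pr
  rw [Finset.sum_mul]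
  refine Finset.sum_le_sum fun c _ => ?_
  by_cases h : y ≤ s * cnt S i c
  · simp only [Set.indicator, Set.mem_ofPred_eq, h, if_true]
    exact mul_le_mul_of_nonneg_left (Real.exp_le_exp.2 h) (pw_nonneg hr c)
  · simp only [Set.indicator, Set.mem_ofPred_eq, h, if_false, zero_mul]
    exact mul_nonneg (pw_nonneg hr c) (Real.exp_pos _).le

/-- bad event -/
def Bad (r : κ → ℝ) (η : ℝ) (S : Finset α) : Set (α → κ) :=
  ⋃ i ∈ (Finset.univ : Finset κ),
    {c | η * r i * S.card < |(cnt S i c : ℝ) - r i * S.card|}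

lemma Bad_le (hr : ∀ i, 0 ≤ r i) (h1 : ∑ i, r i = 1) (η p n : ℝ) (hη0 : 0 < η) (hη : η ≤ 1)
    (hp0 : 0 < p) (hp : ∀ i, p ≤ r i) (S : Finset α) (hn : n ≤ S.card) (hn0 : 0 ≤ n) :
    Pr (pw r) (Bad (α := α) r η S) ≤ 2 / p * Real.exp (-(p * n * η ^ 2 / 4)) := by
  have hpw := fun c : α → κ => pw_nonneg hr c
  have hone : ∀ i, Pr (pw r) {c : α → κ | η * r i * S.card < |(cnt S i c : ℝ) - r i * S.card|}
      ≤ 2 * Real.exp (-(p * n * η ^ 2 / 4)) := by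
    intro i
    have hsub : {c : α → κ | η * r i * S.card < |(cnt S i c : ℝ) - r i * S.card|} ⊆
        {c | (η / 2) * ((1 + η) * r i * S.card) ≤ (η / 2) * cnt S i c} ∪
        {c | (-(η / 2)) * ((1 - η) * r i * S.card) ≤ (-(η / 2)) * cnt S i c} := by
      intro c hc
      simp only [Set.mem_ofPred_eq, lt_abs] at hc
      rcases hc with h | h
      · left
        simp only [Set.mem_ofPred_eq]
        apply mul_le_mul_of_nonneg_left _ (by linarith)
        nlinarith
      · right
        simp only [Set.mem_ofPred_eq]
        apply mul_le_mul_of_nonpos_left _ (by linarith)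
        nlinarith
    have ha : |η / 2| ≤ 1 := by rw [abs_le]; constructor <;> linarith
    have hb : |-(η / 2)| ≤ 1 := by rw [abs_neg]; exact ha
    refine ((Pr_mono hpw hsub).trans (Pr_union_le hpw _ _)).trans ?_
    have t1 := tail hr h1 S i (η / 2) ((η / 2) * ((1 + η) * r i * S.card)) ha
    have t2 := tail hr h1 S i (-(η / 2)) ((-(η / 2)) * ((1 - η) * r i * S.card)) hb
    have hm : p * n ≤ r i * S.card := mul_le_mul (hp i) hn hn0 (hr i)
    have hm2 : p * n * η ^ 2 ≤ r i * S.card * η ^ 2 := by gcongr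
    have u1 : Real.exp (S.card * r i * (η / 2 + (η / 2) ^ 2) - (η / 2) * ((1 + η) * r i * S.card))
        ≤ Real.exp (-(p * n * η ^ 2 / 4)) := Real.exp_le_exp.2 (by nlinarith)
    have u2 : Real.exp (S.card * r i * (-(η / 2) + (-(η / 2)) ^ 2) -
        (-(η / 2)) * ((1 - η) * r i * S.card))
        ≤ Real.exp (-(p * n * η ^ 2 / 4)) := Real.exp_le_exp.2 (by nlinarith)
    linarith
  have h2 := Pr_biUnion_le hpw (Finset.univ : Finset κ)
    (fun i => {c : α → κ | η * r i * S.card < |(cnt S i c : ℝ) - r i * S.card|})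
  refine (h2.trans (Finset.sum_le_card_nsmul _ _ _ (fun i _ => hone i))).trans ?_
  rw [nsmul_eq_mul]
  have hcard : ((Finset.univ : Finset κ).card : ℝ) * p ≤ 1 := by
    rw [← h1, ← nsmul_eq_mul]
    exact Finset.card_nsmul_le_sum _ _ _ (fun i _ => hp i)
  have hcard2 : ((Finset.univ : Finset κ).card : ℝ) ≤ 1 / p := by rwa [le_div_iff₀ hp0]
  calc _ ≤ (1 / p) * (2 * Real.exp (-(p * n * η ^ 2 / 4))) := by gcongr
    _ = _ := by ring

lemma cnt_congr (S : Finset α) (i : κ) (c c' : α → κ) (h : ∀ a ∈ S, c a = c' a) :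
    cnt S i c = cnt S i c' := by
  unfold cnt
  congr 1
  exact Finset.filter_congr fun a ha => by rw [h a ha]

lemma Bad_congr (η : ℝ) (S : Finset α) (c c' : α → κ) (h : ∀ a ∈ S, c a = c' a) :
    c ∈ Bad r η S ↔ c' ∈ Bad r η S := by
  simp only [Bad, Set.mem_iUnion, Set.mem_ofPred_eq, cnt_congr S _ c c' h]

theorem colouring (hr : ∀ i, 0 ≤ r i) (h1 : ∑ i, r i = 1) (η p : ℝ) (hη0 : 0 < η) (hη : η ≤ 1)
    (hp0 : 0 < p) (hp : ∀ i, p ≤ r i) (d : ℕ) (hd : 1 ≤ d)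
    (hbig : 4 * (2 / p * Real.exp (-(p * (d / 2) * η ^ 2 / 4))) * (2 * d * (2 * d + 1) : ℕ) ≤ 1)
    (F : Finset (Finset α)) (hF1 : ∀ S ∈ F, (d : ℝ) / 2 ≤ S.card) (hF2 : ∀ S ∈ F, S.card ≤ 2 * d)
    (hF3 : ∀ a, (F.filter (fun S => a ∈ S)).card ≤ 2 * d + 1) :
    ∃ c : α → κ, ∀ S ∈ F, ∀ i, |(cnt S i c : ℝ) - r i * S.card| ≤ η * r i * S.card := by
  set q := 2 / p * Real.exp (-(p * (d / 2) * η ^ 2 / 4)) with hq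
  have hq0 : 0 ≤ q := by positivity
  have hq4 : q ≤ 1 / 4 := by
    have : (1 : ℝ) ≤ (2 * d * (2 * d + 1) : ℕ) := by
      have : 1 ≤ 2 * d * (2 * d + 1) := Nat.mul_pos (by omega) (by omega)
      exact_mod_cast this
    nlinarith
  classical
  obtain ⟨c, hc⟩ := lll (pw r) (fun c : α → κ => pw_nonneg hr c)
    (by rw [sum_pw h1]; norm_num) F (fun S => Bad r η S)
    (fun S T => ¬ Disjoint S T) q (2 * d * (2 * d + 1)) hq0 hq4
    (fun S hS => Bad_le hr h1 η p _ hη0 hη hp0 hp S (hF1 S hS) (by positivity))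
    (by
      intro S hS
      have hsub : F.filter (fun T => ¬ Disjoint S T) ⊆
          S.biUnion (fun a => F.filter (fun T => a ∈ T)) := by
        intro T hT
        obtain ⟨hTF, hT2⟩ := Finset.mem_filter.1 hT
        obtain ⟨a, ha, hb⟩ := Finset.not_disjoint_iff.1 hT2
        exact Finset.mem_biUnion.2 ⟨a, ha, Finset.mem_filter.2 ⟨hTF, hb⟩⟩
      refine (Finset.card_le_card hsub).trans ?_
      refine (Finset.card_biUnion_le_card_mul _ _ _ (fun a _ => hF3 a)).trans ?_
      exact Nat.mul_le_mul_right _ (hF2 S hS))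
    hbig
    (by
      intro S hS T hT hdis
      refine indep h1 S _ _ (fun c c' h => Bad_congr η S c c' h) ?_
      intro c c' h
      simp only [Nn, Set.mem_ofPred_eq]
      refine forall₂_congr fun U hU => not_congr (Bad_congr η U c c' ?_)
      intro a ha
      apply h a
      intro haS
      exact Finset.disjoint_left.1 (not_not.1 (hdis U hU)) haS ha)
  refine ⟨c, fun S hS i => ?_⟩
  have := hc S hS
  simp only [Bad, Set.mem_iUnion, Set.mem_ofPred_eq, not_exists, not_lt] at this
  exact this i (Finset.mem_univ i)

end prod

lemma numeric (η p : ℝ) (hη0 : 0 < η) (hp0 : 0 < p) :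
    ∃ d₀ : ℕ, 1 ≤ d₀ ∧ ∀ d : ℕ, d₀ ≤ d →
    4 * (2 / p * Real.exp (-(p * (d / 2) * η ^ 2 / 4))) * (2 * d * (2 * d + 1) : ℕ) ≤ 1 := by
  set c := p * η ^ 2 / 8 with hc
  have hc0 : 0 < c := by positivity
  obtain ⟨N, hN⟩ := exists_nat_ge (288 / (p * c ^ 3))
  refine ⟨N + 1, by omega, fun d hd => ?_⟩
  have hd1 : (1 : ℝ) ≤ d := by exact_mod_cast (by omega : 1 ≤ d)
  have hdN : (N : ℝ) ≤ d := by exact_mod_cast (by omega : N ≤ d)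
  have h1 : 288 ≤ d * (p * c ^ 3) := by
    rw [← div_le_iff₀ (by positivity)]; linarith
  have e : -(p * (d / 2) * η ^ 2 / 4) = -(c * d) := by rw [hc]; ring
  rw [e, Real.exp_neg]
  have h2 : (c * d) ^ 3 / 6 ≤ Real.exp (c * d) := by
    have := Real.pow_div_factorial_le_exp (c * d) (by positivity) 3
    simpa [Nat.factorial] using this
  have h3 : (Real.exp (c * d))⁻¹ ≤ ((c * d) ^ 3 / 6)⁻¹ := by
    apply inv_anti₀ (by positivity) h2
  push_cast
  calc 4 * (2 / p * (Real.exp (c * d))⁻¹) * (2 * d * (2 * d + 1))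
      ≤ 4 * (2 / p * ((c * d) ^ 3 / 6)⁻¹) * (2 * d * (2 * d + d)) := by gcongr
    _ = 288 / (d * (p * c ^ 3)) := by field_simp; ring
    _ ≤ 1 := by rw [div_le_one (by positivity)]; exact h1

end LLLAux

/-- Lemma 2.3 (partitioning lemma via the local lemma). -/
theorem stmt_2 (γ p : ℝ) (hγ0 : 0 < γ) (hγ : γ ≤ 1 / 2) (hp0 : 0 < p) (hp : p ≤ 1 / 2) :
    ∃ d₀ : ℕ, ∀ d : ℕ, d₀ ≤ d →
      ∀ (m : ℕ) (pp : Fin m → ℝ), (∀ i, p ≤ pp i) → (∑ i, pp i) = 1 →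
      ∀ (Vt : Type*) [Fintype Vt] (G : SimpleGraph Vt),
        (∀ v : Vt, (G.neighborSet v).ncard ≤ 2 * d) →
        ∀ A Vs : Set Vt, A.Nonempty → Vs.Nonempty →
        (∀ v ∈ Vs, (1 - γ) * d ≤ ((G.neighborSet v ∩ A).ncard : ℝ)) →
        ((∃ Pa : Fin m → Set Vt,
            (⋃ i, Pa i) = A ∧
            Pairwise (Function.onFun Disjoint Pa) ∧
            (∀ v ∈ Vs, ∀ i, (1 - 2 * γ) * pp i * d ≤ ((G.neighborSet v ∩ Pa i).ncard : ℝ)) ∧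
            (∀ i, (1 - γ) * pp i * A.ncard ≤ ((Pa i).ncard : ℝ) ∧
              ((Pa i).ncard : ℝ) ≤ (1 + γ) * pp i * A.ncard)) ∧
          ((∀ v ∈ Vs, ((G.neighborSet v ∩ A).ncard : ℝ) ≤ (1 + γ) * d) →
            ∃ Pa : Fin m → Set Vt,
              (⋃ i, Pa i) = A ∧
              Pairwise (Function.onFun Disjoint Pa) ∧
              (∀ v ∈ Vs, ∀ i, (1 - 2 * γ) * pp i * d ≤ ((G.neighborSet v ∩ Pa i).ncard : ℝ)) ∧
              (∀ i, (1 - γ) * pp i * A.ncard ≤ ((Pa i).ncard : ℝ) ∧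
                ((Pa i).ncard : ℝ) ≤ (1 + γ) * pp i * A.ncard) ∧
              (∀ v ∈ Vs, ∀ i,
                ((G.neighborSet v ∩ Pa i).ncard : ℝ) ≤ (1 + 2 * γ) * pp i * d))) := by
  classical
  have hη0 : 0 < γ / 2 := by linarith
  obtain ⟨d₀, hd₀, hnum⟩ := LLLAux.numeric (γ / 2) p hη0 hp0
  refine ⟨d₀, fun d hd m pp hpp hsum Vt _ G hdeg A Vs hA hVs hlow => ?_⟩
  have hd1 : 1 ≤ d := hd₀.trans hd
  have hdR : (1 : ℝ) ≤ d := by exact_mod_cast hd1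
  have hr : ∀ i, 0 ≤ pp i := fun i => hp0.le.trans (hpp i)
  set B : Finset Vt := A.toFinset with hB
  have hmemB : ∀ a, a ∈ B ↔ a ∈ A := fun a => Set.mem_toFinset
  let N : Vt → Finset Vt := fun v => B.filter (fun a => G.Adj v a)
  have hN : ∀ v, (G.neighborSet v ∩ A).ncard = (N v).card := by
    intro v
    rw [← Set.ncard_coe_finset]
    congr 1
    ext a
    simp [N, hmemB, and_comm]
  have hdegf : ∀ v, (Finset.univ.filter (fun a => G.Adj v a)).card ≤ 2 * d := by
    intro v
    refine le_trans (le_of_eq ?_) (hdeg v)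
    rw [← Set.ncard_coe_finset]
    congr 1
    ext a
    simp
  have hNle : ∀ v, (N v).card ≤ 2 * d := fun v =>
    (Finset.card_le_card (Finset.filter_subset_filter _ (Finset.subset_univ _))).trans (hdegf v)
  have hNge : ∀ v ∈ Vs, (1 - γ) * d ≤ ((N v).card : ℝ) := by
    intro v hv
    rw [← hN]; exact hlow v hv
  have hNge2 : ∀ v ∈ Vs, (d : ℝ) / 2 ≤ ((N v).card : ℝ) := by
    intro v hv
    have := hNge v hv
    nlinarith
  -- blocks
  obtain ⟨v₀, hv₀⟩ := hVs
  set k := (d + 1) / 2 with hk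
  have hkB : k ≤ B.card := by
    have h1 := hNge2 v₀ hv₀
    have h2 : (N v₀).card ≤ B.card := Finset.card_le_card (Finset.filter_subset _ _)
    have h3 : (d : ℝ) ≤ ((2 * (N v₀).card : ℕ) : ℝ) := by push_cast; linarith
    have h4 : d ≤ 2 * (N v₀).card := by exact_mod_cast h3
    omega
  have hk0 : 0 < k := by omega
  set n := B.card / k with hn
  have hn0 : 0 < n := Nat.div_pos hkB hk0
  obtain ⟨P, hP1, hP2⟩ := Finpartition.exists_equipartition_card_eq B hn0.ne'
    (Nat.div_le_self _ _)
  have hPge : ∀ S ∈ P.parts, k ≤ S.card := by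
    intro S hS
    refine le_trans ?_ (hP1.average_le_card_part hS)
    rw [hP2, Nat.le_div_iff_mul_le hn0, mul_comm]
    exact Nat.div_mul_le_self _ _
  have hPle : ∀ S ∈ P.parts, S.card ≤ 2 * k := by
    intro S hS
    refine (hP1.card_part_le_average_add_one hS).trans ?_
    rw [hP2]
    apply Nat.succ_le_of_lt
    rw [Nat.div_lt_iff_lt_mul hn0]
    have : B.card < k * (n + 1) := Nat.lt_mul_div_succ _ hk0
    nlinarith
  have hkd : k ≤ d := by omega
  set F1 : Finset (Finset Vt) := (Vs.toFinset).image N with hF1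
  obtain ⟨c, hc⟩ := LLLAux.colouring (α := Vt) hr hsum (γ / 2) p hη0 (by linarith) hp0 hpp d hd1
    (hnum d hd) (F1 ∪ P.parts)
    (by
      intro S hS
      rcases Finset.mem_union.1 hS with h | h
      · obtain ⟨v, hv, rfl⟩ := Finset.mem_image.1 h
        exact hNge2 v (Set.mem_toFinset.1 hv)
      · have h1 := hPge S h
        have h2 : d ≤ 2 * S.card := by omega
        have h3 : (d : ℝ) ≤ ((2 * S.card : ℕ) : ℝ) := by exact_mod_cast h2
        push_cast at h3
        linarith)
    (by
      intro S hS
      rcases Finset.mem_union.1 hS with h | h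
      · obtain ⟨v, hv, rfl⟩ := Finset.mem_image.1 h
        exact hNle v
      · have h1 := hPle S h
        omega)
    (by
      intro a
      rw [Finset.filter_union]
      refine (Finset.card_union_le _ _).trans (Nat.add_le_add ?_ ?_)
      · have : F1.filter (fun S => a ∈ S) ⊆
            (Finset.univ.filter (fun v => G.Adj a v)).image N := by
          intro S hS
          obtain ⟨h1, h2⟩ := Finset.mem_filter.1 hS
          obtain ⟨v, hv, rfl⟩ := Finset.mem_image.1 h1
          refine Finset.mem_image_of_mem _ (Finset.mem_filter.2 ⟨Finset.mem_univ _, ?_⟩)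
          exact (Finset.mem_filter.1 h2).2.symm
        exact (Finset.card_le_card this).trans (Finset.card_image_le.trans (hdegf a))
      · rw [Finset.card_le_one]
        intro S hS T hT
        obtain ⟨h1, h2⟩ := Finset.mem_filter.1 hS
        obtain ⟨h3, h4⟩ := Finset.mem_filter.1 hT
        exact P.eq_of_mem_parts h1 h3 h2 h4)
  let Pa : Fin m → Set Vt := fun i => {a | a ∈ A ∧ c a = i}
  have hU : (⋃ i, Pa i) = A := by
    ext a
    simp [Pa]
  have hDis : Pairwise (Function.onFun Disjoint Pa) := by
    intro i j hij
    refine Set.disjoint_left.2 fun a ha hb => hij ?_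
    exact ha.2.symm.trans hb.2
  have hcN : ∀ v i, (G.neighborSet v ∩ Pa i).ncard = LLLAux.cnt (N v) i c := by
    intro v i
    rw [LLLAux.cnt, ← Set.ncard_coe_finset]
    congr 1
    ext a
    simp only [N, Pa, Set.mem_inter_iff, SimpleGraph.mem_neighborSet, Set.mem_ofPred_eq,
      Finset.coe_filter, Finset.mem_filter, hmemB]
    tauto
  have hcA : ∀ i, (Pa i).ncard = LLLAux.cnt B i c := by
    intro i
    rw [LLLAux.cnt, ← Set.ncard_coe_finset]
    congr 1
    ext a
    simp [Pa, hmemB]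
  have hAc : A.ncard = B.card := by rw [hB, Set.ncard_eq_toFinset_card']
  have hvb : ∀ v ∈ Vs, ∀ i, |(LLLAux.cnt (N v) i c : ℝ) - pp i * (N v).card|
      ≤ γ / 2 * pp i * (N v).card := fun v hv i =>
    hc (N v) (Finset.mem_union_left _ (Finset.mem_image_of_mem _ (Set.mem_toFinset.2 hv))) i
  have hA1 : ∀ v ∈ Vs, ∀ i,
      (1 - 2 * γ) * pp i * d ≤ ((G.neighborSet v ∩ Pa i).ncard : ℝ) := by
    intro v hv i
    rw [hcN]
    have h1 := (abs_le.1 (hvb v hv i)).1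
    have h2 : (1 - γ / 2) * pp i * ((1 - γ) * d) ≤ (1 - γ / 2) * pp i * (N v).card :=
      mul_le_mul_of_nonneg_left (hNge v hv) (mul_nonneg (by linarith) (hr i))
    have h3 : 0 ≤ pp i * d := mul_nonneg (hr i) (by linarith)
    have h4 : (1 - 2 * γ) * (pp i * d) ≤ ((1 - γ / 2) * (1 - γ)) * (pp i * d) :=
      mul_le_mul_of_nonneg_right (by nlinarith) h3
    linarith
  have hcB : ∀ i, LLLAux.cnt B i c = ∑ S ∈ P.parts, LLLAux.cnt S i c := by
    intro i
    unfold LLLAux.cnt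
    rw [← Finset.card_biUnion]
    · congr 1
      ext a
      simp only [Finset.mem_filter, Finset.mem_biUnion]
      constructor
      · rintro ⟨haB, h⟩
        obtain ⟨S, hS, ha⟩ := P.exists_mem haB
        exact ⟨S, hS, ha, h⟩
      · rintro ⟨S, hS, ha, h⟩
        exact ⟨P.le hS ha, h⟩
    · intro S hS T hT hST
      exact Finset.disjoint_filter_filter (P.disjoint hS hT hST)
  have hAb : ∀ i, |(LLLAux.cnt B i c : ℝ) - pp i * B.card| ≤ γ / 2 * pp i * B.card := by
    intro i
    rw [hcB, ← P.sum_card_parts]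
    push_cast
    rw [Finset.mul_sum, Finset.mul_sum, ← Finset.sum_sub_distrib]
    refine (Finset.abs_sum_le_sum_abs _ _).trans (Finset.sum_le_sum fun S hS => ?_)
    exact hc S (Finset.mem_union_right _ hS) i
  have hA2 : ∀ i, (1 - γ) * pp i * A.ncard ≤ ((Pa i).ncard : ℝ) ∧
      ((Pa i).ncard : ℝ) ≤ (1 + γ) * pp i * A.ncard := by
    intro i
    rw [hcA, hAc]
    have h1 := abs_le.1 (hAb i)
    have h2 : 0 ≤ γ * (pp i * B.card) :=
      mul_nonneg hγ0.le (mul_nonneg (hr i) (Nat.cast_nonneg _))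
    constructor
    · linarith [h1.1]
    · linarith [h1.2]
  refine ⟨⟨Pa, hU, hDis, hA1, hA2⟩, fun hup => ⟨Pa, hU, hDis, hA1, hA2, ?_⟩⟩
  intro v hv i
  rw [hcN]
  have h1 := (abs_le.1 (hvb v hv i)).2
  have h0 := hup v hv
  rw [hN] at h0
  have h2 : (1 + γ / 2) * pp i * (N v).card ≤ (1 + γ / 2) * pp i * ((1 + γ) * d) :=
    mul_le_mul_of_nonneg_left h0 (mul_nonneg (by linarith) (hr i))
  have h3 : 0 ≤ pp i * d := mul_nonneg (hr i) (by linarith)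
  have h4 : ((1 + γ / 2) * (1 + γ)) * (pp i * d) ≤ (1 + 2 * γ) * (pp i * d) :=
    mul_le_mul_of_nonneg_right (by nlinarith) h3
  linarith
end

section
/- For all m ∈ ℕ, ε with 0 < ε ≤ 1, and q ≥ 1/2, there exists γ₀ > 0 such that for all 0 < γ ≤ γ₀ there exists d₀ such that the following holds for all d ≥ d₀. Let G be an n-vertex graph with maximum degree Δ(G) ≤ d containing a vertex set V ⊆ V(G) with (1 − γ)qn ≤ |V| ≤ (1 + γ)qn and (1 − γ)qd ≤ d_G(v, V) ≤ (1 + γ)qd for each vertex v of G. Let t = ⌈(1 − ε)qn/m⌉. Then the induced subgraph G[V] contains pairwise vertex-disjoint paths P₁, …, P_t, each of length m − 1 (i.e. with m vertices), such that every vertex of G has at most 4d/m neighbours in G among the endvertices of P₁, …, P_t. -/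
open SimpleGraph

open Finset in
lemma mgf_count {α : Type*} [Fintype α] [DecidableEq α] (m : ℕ) (hm : 0 < m) (N : Finset α)
    (i : Fin m) (l : ℝ) :
    ∑ c : α → Fin m, Real.exp (l * (#{u ∈ N | c u = i} : ℝ)) ≤
      (m : ℝ) ^ (Fintype.card α) * Real.exp (#N * ((Real.exp l - 1) / m)) := by
  have h1 : ∀ c : α → Fin m, Real.exp (l * (#{u ∈ N | c u = i} : ℝ)) =
      ∏ u : α, (if u ∈ N ∧ c u = i then Real.exp l else 1) := by
    intro c
    rw [Finset.prod_ite]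
    simp only [prod_const, one_pow, mul_one]
    rw [← Real.exp_nat_mul, mul_comm]
    congr 4
    ext u; simp
  simp_rw [h1]
  have h2 := Finset.prod_univ_sum (fun _ : α => (Finset.univ : Finset (Fin m)))
    (fun u j => if u ∈ N ∧ j = i then Real.exp l else (1 : ℝ))
  rw [Fintype.piFinset_univ] at h2
  rw [← h2]
  have hm' : (0 : ℝ) < m := by exact_mod_cast hm
  have h3 : ∀ u : α, ∑ j : Fin m, (if u ∈ N ∧ j = i then Real.exp l else (1 : ℝ)) ≤
      m * (if u ∈ N then Real.exp ((Real.exp l - 1) / m) else 1) := by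
    intro u
    by_cases hu : u ∈ N
    · simp only [hu, true_and, if_true]
      have : ∀ j : Fin m, (if j = i then Real.exp l else (1 : ℝ)) =
          1 + (if j = i then Real.exp l - 1 else 0) := by
        intro j; split_ifs <;> ring
      simp_rw [this]
      rw [Finset.sum_add_distrib]
      simp only [sum_const, card_univ, Fintype.card_fin, nsmul_eq_mul, mul_one, sum_ite_eq',
        mem_univ, if_true]
      have := Real.add_one_le_exp ((Real.exp l - 1) / m)
      calc (m : ℝ) + (Real.exp l - 1) = m * ((Real.exp l - 1) / m + 1) := by field_simp; ring
        _ ≤ _ := by gcongr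
    · simp [hu]
  calc _ ≤ ∏ u : α, ((m : ℝ) * (if u ∈ N then Real.exp ((Real.exp l - 1) / m) else 1)) := by
        apply Finset.prod_le_prod
        · intro u _
          apply Finset.sum_nonneg
          intro j _
          split_ifs <;> positivity
        · intro u _; exact h3 u
    _ = _ := by
        rw [Finset.prod_mul_distrib, Finset.prod_ite]
        simp only [prod_const, one_pow, mul_one, card_univ]
        rw [← Real.exp_nat_mul]
        congr 4
        simp

open Finset in
lemma tail_count {α : Type*} [Fintype α] [DecidableEq α] (m : ℕ) (hm : 0 < m) (N : Finset α)
    (i : Fin m) (l a : ℝ) :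
    (#{c : α → Fin m | a ≤ l * (#{u ∈ N | c u = i} : ℝ)} : ℝ) ≤
      (m : ℝ) ^ (Fintype.card α) * Real.exp (#N * ((Real.exp l - 1) / m) - a) := by
  have h := mgf_count m hm N i l
  rw [Real.exp_sub, ← mul_div_assoc, le_div_iff₀ (Real.exp_pos _)]
  refine le_trans ?_ h
  calc _ = ∑ c ∈ {c : α → Fin m | a ≤ l * (#{u ∈ N | c u = i} : ℝ)}, Real.exp a := by simp
    _ ≤ ∑ c ∈ {c : α → Fin m | a ≤ l * (#{u ∈ N | c u = i} : ℝ)},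
          Real.exp (l * (#{u ∈ N | c u = i} : ℝ)) := by
        apply Finset.sum_le_sum
        intro c hc
        simp only [mem_filter, mem_univ, true_and] at hc
        exact Real.exp_le_exp.mpr hc
    _ ≤ _ := by
        apply Finset.sum_le_sum_of_subset_of_nonneg (subset_univ _)
        intros; positivity

open Finset in
/-- Chernoff bound for a single vertex and colour, in counting form. -/
lemma dev_count {α : Type*} [Fintype α] [DecidableEq α] (m : ℕ) (hm : 0 < m) (N : Finset α)
    (i : Fin m) (η Q : ℝ) (hη0 : 0 < η) (hη : η ≤ 1) (hQ : 0 ≤ Q)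
    (hN1 : (1 - η / 4) * Q ≤ #N) (hN2 : (#N : ℝ) ≤ (1 + η / 4) * Q) :
    (#{c : α → Fin m | ¬ ((1 - η) * (Q / m) ≤ (#{u ∈ N | c u = i} : ℝ) ∧
        (#{u ∈ N | c u = i} : ℝ) ≤ (1 + η) * (Q / m))} : ℝ) ≤
      (m : ℝ) ^ (Fintype.card α) * (2 * Real.exp (- (η ^ 2 / 16) * (Q / m))) := by
  have hm' : (0 : ℝ) < m := by exact_mod_cast hm
  have hQm : 0 ≤ Q / m := by positivity
  have hu := tail_count m hm N i (η / 4) ((η / 4) * ((1 + η) * (Q / m)))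
  have hl := tail_count m hm N i (-(η / 4)) (-(η / 4) * ((1 - η) * (Q / m)))
  have e1 := Real.abs_exp_sub_one_sub_id_le (x := η / 4) (by rw [abs_le]; constructor <;> linarith)
  have e2 := Real.abs_exp_sub_one_sub_id_le (x := -(η / 4))
    (by rw [abs_le]; constructor <;> linarith)
  have e1' := (abs_le.mp e1).2
  have e2' := (abs_le.mp e2).2
  have hNm1 : (1 - η / 4) * (Q / m) ≤ #N / m := by
    rw [← mul_div_assoc]; gcongr
  have hNm2 : (#N : ℝ) / m ≤ (1 + η / 4) * (Q / m) := by
    rw [← mul_div_assoc]; gcongr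
  have b1 : #N * ((Real.exp (η / 4) - 1) / m) - (η / 4) * ((1 + η) * (Q / m)) ≤
      - (η ^ 2 / 16) * (Q / m) := by
    have : #N * ((Real.exp (η / 4) - 1) / m) = (#N / m) * (Real.exp (η / 4) - 1) := by ring
    rw [this]
    have : (#N / m : ℝ) * (Real.exp (η / 4) - 1) ≤
        ((1 + η / 4) * (Q / m)) * (η / 4 + (η / 4) ^ 2) := by
      have : (0 : ℝ) ≤ #N / m := by positivity
      have h0 : 0 ≤ Real.exp (η / 4) - 1 := by linarith [Real.add_one_le_exp (η / 4)]
      apply mul_le_mul hNm2 (by linarith) h0 (by positivity)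
    have h3 : 0 ≤ (Q / m) * η ^ 2 * (1 - η) := by
      have : 0 ≤ 1 - η := by linarith
      positivity
    have h4 : 0 ≤ (Q / m) * η ^ 2 := by positivity
    nlinarith
  have b2 : #N * ((Real.exp (-(η / 4)) - 1) / m) - (-(η / 4) * ((1 - η) * (Q / m))) ≤
      - (η ^ 2 / 16) * (Q / m) := by
    have : #N * ((Real.exp (-(η / 4)) - 1) / m) = (#N / m) * (Real.exp (-(η / 4)) - 1) := by ring
    rw [this]
    have h1 : (#N / m : ℝ) * (Real.exp (-(η / 4)) - 1) ≤
        (#N / m : ℝ) * (-(η / 4) + (η / 4) ^ 2) := by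
      gcongr
      linarith
    have h2 : (#N / m : ℝ) * ((η / 4) * (1 - η / 4)) ≥
        ((1 - η / 4) * (Q / m)) * ((η / 4) * (1 - η / 4)) := by
      have : 0 ≤ (η / 4) * (1 - η / 4) := by
        apply mul_nonneg <;> linarith
      gcongr
    have h3 : 0 ≤ (Q / m) * η ^ 2 * (1 - η) := by
      have : 0 ≤ 1 - η := by linarith
      positivity
    have h4 : 0 ≤ (Q / m) * η ^ 2 := by positivity
    have h5 : 0 ≤ (Q / m) * η ^ 2 * η := by positivity
    nlinarith
  have hpos : (0 : ℝ) ≤ (m : ℝ) ^ (Fintype.card α) := by positivity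
  have hu' := hu.trans (mul_le_mul_of_nonneg_left (Real.exp_le_exp.mpr b1) hpos)
  have hl' := hl.trans (mul_le_mul_of_nonneg_left (Real.exp_le_exp.mpr b2) hpos)
  have hsub : ({c : α → Fin m | ¬ ((1 - η) * (Q / m) ≤ (#{u ∈ N | c u = i} : ℝ) ∧
        (#{u ∈ N | c u = i} : ℝ) ≤ (1 + η) * (Q / m))} : Finset (α → Fin m)) ⊆
      ({c : α → Fin m | (η / 4) * ((1 + η) * (Q / m)) ≤ (η / 4) * (#{u ∈ N | c u = i} : ℝ)} :
        Finset (α → Fin m)) ∪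
      ({c : α → Fin m | -(η / 4) * ((1 - η) * (Q / m)) ≤
        -(η / 4) * (#{u ∈ N | c u = i} : ℝ)} : Finset (α → Fin m)) := by
    intro c hc
    simp only [mem_filter, mem_univ, true_and, mem_union] at hc ⊢
    by_cases h : (1 - η) * (Q / m) ≤ (#{u ∈ N | c u = i} : ℝ)
    · left
      have : (1 + η) * (Q / m) < (#{u ∈ N | c u = i} : ℝ) := by
        by_contra h'
        exact hc ⟨h, not_lt.mp h'⟩
      gcongr
    · right
      have := (not_le.mp h).le
      rw [neg_mul, neg_mul, neg_le_neg_iff]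
      gcongr
  have hc := (Finset.card_le_card hsub).trans (Finset.card_union_le _ _)
  have hc' : (_ : ℝ) ≤ _ := Nat.cast_le.mpr hc
  rw [Nat.cast_add] at hc'
  linarith

open Finset in
/-- Existence of a colouring with few bad vertices. -/
lemma exists_colouring {α : Type*} [Fintype α] [DecidableEq α] (m : ℕ) (hm : 0 < m)
    (N : α → Finset α) (η Q : ℝ) (hη0 : 0 < η) (hη : η ≤ 1) (hQ : 0 ≤ Q)
    (hN1 : ∀ v, (1 - η / 4) * Q ≤ #(N v)) (hN2 : ∀ v, (#(N v) : ℝ) ≤ (1 + η / 4) * Q) :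
    ∃ (c : α → Fin m) (B : Finset α),
      (#B : ℝ) ≤ Fintype.card α * (m * (2 * Real.exp (- (η ^ 2 / 16) * (Q / m)))) ∧
      ∀ v, v ∉ B → ∀ i : Fin m, (1 - η) * (Q / m) ≤ (#{u ∈ N v | c u = i} : ℝ) ∧
        (#{u ∈ N v | c u = i} : ℝ) ≤ (1 + η) * (Q / m) := by
  classical
  set E := Real.exp (- (η ^ 2 / 16) * (Q / m)) with hE
  let good : (α → Fin m) → α → Fin m → Prop := fun c v i =>
    (1 - η) * (Q / m) ≤ (#{u ∈ N v | c u = i} : ℝ) ∧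
        (#{u ∈ N v | c u = i} : ℝ) ≤ (1 + η) * (Q / m)
  have : Nonempty (Fin m) := ⟨⟨0, hm⟩⟩
  have key : ∃ c ∈ (Finset.univ : Finset (α → Fin m)),
      ((∑ v : α, ∑ i : Fin m, if ¬ good c v i then (1 : ℝ) else 0)) ≤
        Fintype.card α * (m * (2 * E)) := by
    apply Finset.exists_le_of_sum_le Finset.univ_nonempty
    rw [Finset.sum_comm]
    have : ∀ v ∈ (Finset.univ : Finset α), ∑ c : α → Fin m, ∑ i : Fin m,
        (if ¬ good c v i then (1 : ℝ) else 0) ≤ m * ((m : ℝ) ^ (Fintype.card α) * (2 * E)) := by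
      intro v _
      rw [Finset.sum_comm]
      have h : ∀ i ∈ (Finset.univ : Finset (Fin m)), ∑ c : α → Fin m,
          (if ¬ good c v i then (1 : ℝ) else 0) ≤ (m : ℝ) ^ (Fintype.card α) * (2 * E) := by
        intro i _
        rw [Finset.sum_boole]
        exact dev_count m hm (N v) i η Q hη0 hη hQ (hN1 v) (hN2 v)
      refine (Finset.sum_le_sum h).trans ?_
      simp
    refine (Finset.sum_le_sum this).trans ?_
    simp only [sum_const, card_univ, nsmul_eq_mul, Fintype.card_fun, Fintype.card_fin,
      Nat.cast_pow]
    apply le_of_eq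
    ring
  obtain ⟨c, -, hc⟩ := key
  refine ⟨c, ({v | ∃ i, ¬ good c v i} : Finset α), ?_, ?_⟩
  · refine le_trans ?_ hc
    rw [← Finset.sum_boole]
    apply Finset.sum_le_sum
    intro v _
    split_ifs with h
    · obtain ⟨i, hi⟩ := h
      refine le_trans ?_ (Finset.single_le_sum (f := fun i => if ¬ good c v i then (1 : ℝ) else 0)
        (fun j _ => by split_ifs <;> norm_num) (Finset.mem_univ i))
      simp [hi]
    · apply Finset.sum_nonneg
      intro j _
      split_ifs <;> norm_num
  · intro v hv i
    simp only [mem_filter, mem_univ, true_and, not_exists, not_not] at hv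
    exact hv i

open Finset in
/-- Hall's theorem with deficiency. -/
lemma hall_defect {ι α : Type*} [DecidableEq ι] [DecidableEq α] (T : Finset ι)
    (t : ι → Finset α) (D : ℕ) (a₀ : ι → α) (h : ∀ S ⊆ T, #S ≤ #(S.biUnion t) + D) :
    ∃ T' ⊆ T, #T ≤ #T' + D ∧ ∃ f : ι → α, Set.InjOn f T' ∧ ∀ a ∈ T', f a ∈ t a := by
  classical
  let t' : T → Finset (α ⊕ Fin D) := fun a => (t a).disjSum Finset.univ
  have hall : ∀ s : Finset T, #s ≤ #(s.biUnion t') := by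
    intro s
    rcases s.eq_empty_or_nonempty with rfl | ⟨b, hb⟩
    · simp
    have hs := h (s.map (Function.Embedding.subtype _)) (by
      intro x hx
      simp only [mem_map, Function.Embedding.subtype_apply] at hx
      obtain ⟨y, _, rfl⟩ := hx
      exact y.2)
    rw [card_map] at hs
    refine hs.trans ?_
    have : s.biUnion t' = ((s.map (Function.Embedding.subtype _)).biUnion t).disjSum
        (Finset.univ : Finset (Fin D)) := by
      ext x
      rcases x with x | x
      · simp [t', Finset.mem_biUnion]
      · simp only [mem_biUnion, t', inr_mem_disjSum, mem_univ, and_true, iff_true]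
        exact ⟨b, hb⟩
    rw [this, card_disjSum]
    simp
  obtain ⟨f, hf, hft⟩ := (Finset.all_card_le_biUnion_card_iff_exists_injective t').mp hall
  let g : ι → α ⊕ Fin D := fun a => if ha : a ∈ T then f ⟨a, ha⟩ else Sum.inl (a₀ a)
  have hg : ∀ a (ha : a ∈ T), g a = f ⟨a, ha⟩ := fun a ha => by simp [g, ha]
  have hginj : Set.InjOn g T := by
    intro a ha b hb hab
    rw [hg a ha, hg b hb] at hab
    simpa using hf hab
  have hl : ∀ a, a ∈ T.filter (fun a => (g a).isLeft) →
      g a = Sum.inl (Sum.elim id (fun _ => a₀ a) (g a)) := by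
    intro a ha
    have := (mem_filter.mp ha).2
    rcases hga : g a with x | x
    · simp
    · simp [hga] at this
  refine ⟨T.filter (fun a => (g a).isLeft), filter_subset _ _, ?_,
    fun a => Sum.elim id (fun _ => a₀ a) (g a), ?_, ?_⟩
  · rw [← Finset.card_filter_add_card_filter_not (s := T) (fun a => (g a).isLeft)]
    have : #(T.filter (fun a => ¬ (g a).isLeft)) ≤ #((Finset.univ : Finset (Fin D)).map
        (Function.Embedding.inr : Fin D ↪ α ⊕ Fin D)) := by
      apply Finset.card_le_card_of_injOn g
      · intro a ha
        have := (mem_filter.mp ha).2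
        rcases hga : g a with x | x
        · simp [hga] at this
        · simp
      · exact hginj.mono (by intro a ha; exact (mem_filter.mp ha).1)
    rw [card_map, card_univ, Fintype.card_fin] at this
    omega
  · intro a ha b hb hab
    apply hginj (mem_filter.mp ha).1 (mem_filter.mp hb).1
    rw [hl a ha, hl b hb]
    exact congrArg _ hab
  · intro a ha
    have haT := (mem_filter.mp ha).1
    have h1 := hft ⟨a, haT⟩
    rw [← hg a haT, hl a ha] at h1
    simpa [t'] using h1

open Finset in
lemma layer_hall {α : Type*} [Fintype α] [DecidableEq α] (G : SimpleGraph α)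
    [DecidableRel G.Adj] (W W' B : Finset α) (lo hi d : ℝ) (hlo0 : 0 ≤ lo) (hhi0 : 0 ≤ hi)
    (hlo : ∀ v, v ∉ B → lo ≤ (#{u ∈ W' | G.Adj v u} : ℝ))
    (hhi : ∀ v, v ∉ B → (#{u ∈ W | G.Adj v u} : ℝ) ≤ hi)
    (hd : ∀ v, (#{u ∈ W | G.Adj v u} : ℝ) ≤ d) (hd0 : 0 ≤ d) (S : Finset α) (hS : S ⊆ W) :
    ((#S : ℝ) - #B) * lo ≤ #(S.biUnion fun v => {u ∈ W' | G.Adj v u}) * hi + #B * d := by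
  set M := S.biUnion fun v => {u ∈ W' | G.Adj v u} with hM
  have h1 : ∑ v ∈ S, (#{u ∈ W' | G.Adj v u} : ℝ) = ∑ u ∈ M, (#{v ∈ S | G.Adj u v} : ℝ) := by
    have := Finset.sum_card_bipartiteAbove_eq_sum_card_bipartiteBelow (s := S) (t := M)
      (fun v u => G.Adj v u)
    have e1 : ∑ v ∈ S, #{u ∈ W' | G.Adj v u} = ∑ v ∈ S, #(M.bipartiteAbove (fun v u => G.Adj v u) v) := by
      apply Finset.sum_congr rfl
      intro v hv
      congr 1
      ext u
      simp only [mem_filter, bipartiteAbove, hM, mem_biUnion]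
      constructor
      · rintro ⟨a, b⟩; exact ⟨⟨v, hv, a, b⟩, b⟩
      · rintro ⟨⟨_, _, a, _⟩, b⟩; exact ⟨a, b⟩
    have e2 : ∑ u ∈ M, #{v ∈ S | G.Adj u v} = ∑ u ∈ M, #(S.bipartiteBelow (fun v u => G.Adj v u) u) := by
      apply Finset.sum_congr rfl
      intro v hv
      congr 1
      ext u
      simp [bipartiteBelow, G.adj_comm]
    rw [← Nat.cast_sum, ← Nat.cast_sum, e1, e2, this]
  have h2 : ((#S : ℝ) - #B) * lo ≤ ∑ v ∈ S, (#{u ∈ W' | G.Adj v u} : ℝ) := by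
    calc ((#S : ℝ) - #B) * lo ≤ #(S \ B) * lo := by
          gcongr
          have := Finset.le_card_sdiff B S
          have : (#S : ℝ) ≤ #(S \ B) + #B := by exact_mod_cast (by omega)
          linarith
      _ = ∑ v ∈ S \ B, lo := by simp
      _ ≤ ∑ v ∈ S \ B, (#{u ∈ W' | G.Adj v u} : ℝ) := by
          apply Finset.sum_le_sum
          intro v hv
          exact hlo v (mem_sdiff.mp hv).2
      _ ≤ _ := by
          apply Finset.sum_le_sum_of_subset_of_nonneg sdiff_subset
          intros; positivity
  have hmono : ∀ u, (#{v ∈ S | G.Adj u v} : ℝ) ≤ #{v ∈ W | G.Adj u v} := by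
    intro u
    exact_mod_cast Finset.card_le_card (Finset.filter_subset_filter _ hS)
  have h3 : ∑ u ∈ M, (#{v ∈ S | G.Adj u v} : ℝ) ≤ #M * hi + #B * d := by
    calc _ ≤ ∑ u ∈ M, (hi + if u ∈ B then d else 0) := by
          apply Finset.sum_le_sum
          intro u _
          split_ifs with hu
          · linarith [hmono u, hd u]
          · linarith [hmono u, hhi u hu]
      _ = #M * hi + ∑ u ∈ M, (if u ∈ B then d else 0) := by
          rw [Finset.sum_add_distrib]; simp
      _ ≤ _ := by
          gcongr
          rw [← Finset.sum_filter, Finset.sum_const, nsmul_eq_mul]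
          gcongr
          intro u hu
          exact (mem_filter.mp hu).2
  linarith

open Finset in
lemma iterate_layers {α : Type*} [DecidableEq α] (G : SimpleGraph α)
    [DecidableRel G.Adj] (W : ℕ → Finset α) (D : ℕ) (m : ℕ)
    (h : ∀ k, k < m → ∀ S ⊆ W k, #S ≤ #(S.biUnion fun v => {u ∈ W (k+1) | G.Adj v u}) + D) :
    ∀ k, k ≤ m → ∃ (T : Finset α) (p : ℕ → α → α), #(W 0) ≤ #T + k * D ∧
      (∀ j, j ≤ k → Set.InjOn (p j) T ∧ ∀ a ∈ T, p j a ∈ W j) ∧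
      (∀ j, j < k → ∀ a ∈ T, G.Adj (p j a) (p (j + 1) a)) := by
  intro k
  induction k with
  | zero =>
    intro _
    refine ⟨W 0, fun _ a => a, by simp, ?_, by simp⟩
    intro j hj
    obtain rfl : j = 0 := by omega
    exact ⟨fun a _ b _ hab => hab, fun a ha => ha⟩
  | succ k ih =>
    intro hk
    obtain ⟨T, p, hT, hp, hadj⟩ := ih (by omega)
    obtain ⟨T', hT', hcard, f, hf, hft⟩ := hall_defect T
      (fun a => {u ∈ W (k+1) | G.Adj (p k a) u}) D id (by
        intro S hS
        have hinj : Set.InjOn (p k) S := (hp k le_rfl).1.mono (by exact_mod_cast hS)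
        have := h k (by omega) (S.image (p k)) (by
          intro x hx
          obtain ⟨a, ha, rfl⟩ := mem_image.mp hx
          exact (hp k le_rfl).2 a (hS ha))
        rw [card_image_of_injOn hinj, image_biUnion] at this
        exact this)
    refine ⟨T', fun j => if j ≤ k then p j else f, ?_, ?_, ?_⟩
    · rw [add_mul]; omega
    · intro j hj
      by_cases hjk : j ≤ k
      · simp only [hjk, if_true]
        exact ⟨(hp j hjk).1.mono (by exact_mod_cast hT'), fun a ha => (hp j hjk).2 a (hT' ha)⟩
      · obtain rfl : j = k + 1 := by omega
        simp only [hjk, if_false]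
        exact ⟨hf, fun a ha => (mem_filter.mp (hft a ha)).1⟩
    · intro j hj a ha
      by_cases hjk : j < k
      · have h1 : j ≤ k := by omega
        have h2 : j + 1 ≤ k := by omega
        simp only [h1, h2, if_true]
        exact hadj j hjk a (hT' ha)
      · obtain rfl : j = k := by omega
        simp only [le_refl, if_true, show ¬ (j + 1 ≤ j) by omega, if_false]
        exact (mem_filter.mp (hft a ha)).2

/-- A walk along a sequence of vertices. -/
lemma walk_of_seq {α : Type*} (G : SimpleGraph α) (k : ℕ) (s : ℕ → α)
    (hs : ∀ j, j < k → G.Adj (s j) (s (j + 1)))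
    (hinj : ∀ i j, i ≤ k → j ≤ k → s i = s j → i = j) :
    ∃ P : G.Walk (s 0) (s k), P.IsPath ∧ P.length = k ∧ ∀ w, w ∈ P.support → ∃ j, j ≤ k ∧ w = s j := by
  induction k with
  | zero => exact ⟨SimpleGraph.Walk.nil, by simp, by simp, by simp⟩
  | succ k ih =>
    obtain ⟨P, hP, hl, hsup⟩ := ih (fun j hj => hs j (by omega))
      (fun i j hi hj => hinj i j (by omega) (by omega))
    refine ⟨P.concat (hs k (by omega)), ?_, ?_, ?_⟩
    · apply hP.concat
      intro hmem
      obtain ⟨j, hj, e⟩ := hsup _ hmem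
      have := hinj _ _ le_rfl (by omega) e
      omega
    · simp [hl]
    · intro w hw
      rw [SimpleGraph.Walk.support_concat] at hw
      simp only [List.mem_append, List.mem_singleton] at hw
      rcases hw with hw | hw
      · obtain ⟨j, hj, e⟩ := hsup _ hw
        exact ⟨j, by omega, e⟩
      · exact ⟨k + 1, le_rfl, hw⟩

set_option maxHeartbeats 1000000 in
open Finset in
/-- The deterministic part: from a good colouring to the paths. -/
lemma paths_of_colouring {α : Type*} [Fintype α] [DecidableEq α] (G : SimpleGraph α)
    [DecidableRel G.Adj] (m : ℕ) (hm : 0 < m) (V B : Finset α) (c : α → Fin m)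
    (ε q η : ℝ) (d : ℕ) (hd : 0 < d) (hε0 : 0 < ε) (hε : ε ≤ 1) (hq : 1 / 2 ≤ q) (hq2 : q ≤ 3 / 2)
    (hη : η = ε / (16 * m ^ 2))
    (hdeg : ∀ v, #{u | G.Adj v u} ≤ d)
    (hB : (#B : ℝ) * d ≤ ε / (32 * m ^ 3) * Fintype.card α)
    (hgood : ∀ v, v ∉ B → ∀ i : Fin m,
      (1 - η) * (q * d / m) ≤ (#{u ∈ {u ∈ V | G.Adj v u} | c u = i} : ℝ) ∧
        (#{u ∈ {u ∈ V | G.Adj v u} | c u = i} : ℝ) ≤ (1 + η) * (q * d / m)) :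
    ∃ (T : Finset α) (p : ℕ → α → α), (1 - ε) * q * Fintype.card α / m ≤ #T ∧
      (∀ j, j ≤ m - 1 → Set.InjOn (p j) T ∧ ∀ a ∈ T, p j a ∈ V ∧ (c (p j a) : ℕ) = j) ∧
      (∀ j, j < m - 1 → ∀ a ∈ T, G.Adj (p j a) (p (j + 1) a)) ∧
      ∀ v, (#{u | G.Adj v u ∧ (u ∈ T.image (p 0) ∨ u ∈ T.image (p (m - 1)))} : ℝ)
        ≤ 4 * d / m := by
  classical
  set n := Fintype.card α with hn
  have hm' : (1 : ℝ) ≤ m := by exact_mod_cast hm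
  have hd' : (1 : ℝ) ≤ d := by exact_mod_cast hd
  set b : ℝ := (#B : ℝ) with hb
  have hb0 : 0 ≤ b := by positivity
  have hn0 : (0 : ℝ) ≤ n := by positivity
  have hη0 : 0 < η := by rw [hη]; positivity
  have hηm : η * (16 * m ^ 2) = ε := by rw [hη]; field_simp
  have hη1 : η ≤ 1 / 16 := by
    have hm2 : (1 : ℝ) ≤ (m : ℝ) ^ 2 := one_le_pow₀ hm'
    nlinarith [mul_le_mul_of_nonneg_left hm2 hη0.le]
  set R : ℝ := q * d / m with hR
  have hR0 : 0 < R := by positivity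
  have hdR : (d : ℝ) ≤ 2 * m * R := by
    rw [hR]; field_simp; nlinarith
  let W : ℕ → Finset α := fun k => {u ∈ V | (c u : ℕ) = k}
  have hWeq : ∀ k (hk : k < m) v, ({u ∈ W k | G.Adj v u} : Finset α) =
      {u ∈ {u ∈ V | G.Adj v u} | c u = ⟨k, hk⟩} := by
    intro k hk v
    ext u
    simp only [W, mem_filter, Fin.ext_iff]
    tauto
  have hWd : ∀ (X : Finset α) v, (#{u ∈ X | G.Adj v u} : ℝ) ≤ d := by
    intro X v
    have : #{u ∈ X | G.Adj v u} ≤ d :=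
      (card_le_card (filter_subset_filter _ (subset_univ X))).trans (hdeg v)
    exact_mod_cast this
  have hlo0 : 0 ≤ (1 - η) * R := by
    have : 0 ≤ 1 - η := by linarith
    positivity
  have hhi0 : 0 ≤ (1 + η) * R := by positivity
  have hcard : ∀ S : Finset α, (#S : ℝ) ≤ n := fun S => by exact_mod_cast card_le_univ S
  set Dr : ℝ := 2 * η * n + 3 * m * b with hDr
  have hDr0 : 0 ≤ Dr := by positivity
  -- the Hall-type condition
  have hall : ∀ k, k < m - 1 → ∀ S ⊆ W k,
      #S ≤ #(S.biUnion fun v => {u ∈ W (k+1) | G.Adj v u}) + ⌊Dr⌋₊ := by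
    intro k hk S hS
    have h := layer_hall G (W k) (W (k + 1)) B ((1 - η) * R) ((1 + η) * R) d hlo0 hhi0
      (fun v hv => by rw [hWeq (k + 1) (by omega)]; exact (hgood v hv _).1)
      (fun v hv => by rw [hWeq k (by omega)]; exact (hgood v hv _).2)
      (hWd _) (by positivity) S hS
    set M := S.biUnion fun v => {u ∈ W (k+1) | G.Adj v u} with hM
    have h2 : ((#S : ℝ) - b) * (1 - η) ≤ #M * (1 + η) + b * (2 * m) := by
      have h3 : b * d ≤ b * (2 * m * R) := by gcongr
      have : (((#S : ℝ) - b) * (1 - η)) * R ≤ (#M * (1 + η) + b * (2 * m)) * R := by linarith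
      exact le_of_mul_le_mul_right this hR0
    have h4 : (#S : ℝ) - #M ≤ Dr := by
      have e1 : η * #S ≤ η * n := mul_le_mul_of_nonneg_left (hcard S) hη0.le
      have e2 : η * #M ≤ η * n := mul_le_mul_of_nonneg_left (hcard M) hη0.le
      have e3 : 0 ≤ η * b := by positivity
      have e4 : b ≤ b * m := by nlinarith
      rw [hDr]; nlinarith
    by_contra hcon
    have h5 : ⌊Dr⌋₊ + 1 ≤ #S - #M := by omega
    have h6 : Dr < ((#S - #M : ℕ) : ℝ) := (Nat.lt_floor_add_one Dr).trans_le (by exact_mod_cast h5)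
    rw [Nat.cast_sub (by omega)] at h6
    linarith
  obtain ⟨T, p, hT, hp, hadj⟩ := iterate_layers G W ⌊Dr⌋₊ (m - 1) hall (m - 1) le_rfl
  -- size of the first layer
  have hW0 : ((n : ℝ) - b) * (1 - η) * (q / m) ≤ #(W 0) + b := by
    have h := layer_hall G Finset.univ (W 0) B ((1 - η) * R) d d hlo0 (by positivity)
      (fun v hv => by rw [hWeq 0 hm]; exact (hgood v hv _).1)
      (fun v hv => hWd _ v) (hWd _) (by positivity) Finset.univ (subset_univ _)
    have hsub : (#((Finset.univ : Finset α).biUnion fun v => {u ∈ W 0 | G.Adj v u}) : ℝ)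
        ≤ #(W 0) := by
      have : #((Finset.univ : Finset α).biUnion fun v => {u ∈ W 0 | G.Adj v u}) ≤ #(W 0) := by
        apply card_le_card
        intro u hu
        obtain ⟨v, -, hv⟩ := mem_biUnion.mp hu
        exact (mem_filter.mp hv).1
      exact_mod_cast this
    rw [card_univ, ← hn] at h
    have h2 : (((n : ℝ) - b) * (1 - η) * (q / m)) * d ≤ (#(W 0) + b) * d := by
      have : (((n : ℝ) - b) * (1 - η) * (q / m)) * d = (n - b) * ((1 - η) * R) := by
        rw [hR]; ring
      rw [this]
      refine h.trans ?_
      rw [add_mul]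
      gcongr
    exact le_of_mul_le_mul_right h2 (by linarith)
  -- remove paths with an end adjacent to a bad vertex
  let NB : Finset α := B.biUnion fun v => {u | G.Adj v u}
  have hNB : (#NB : ℝ) ≤ b * d := by
    have : #NB ≤ #B * d := card_biUnion_le_card_mul _ _ _ (fun v _ => hdeg v)
    rw [hb]; exact_mod_cast this
  let T' : Finset α := T.filter (fun a => p 0 a ∉ NB ∧ p (m - 1) a ∉ NB)
  have hT'T : T' ⊆ T := filter_subset _ _
  have hcardT' : #T ≤ #T' + 2 * #NB := by
    have aux : ∀ j, j ≤ m - 1 → #(T.filter (fun a => p j a ∈ NB)) ≤ #NB := by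
      intro j hj
      apply card_le_card_of_injOn (p j)
      · intro a ha; exact (mem_filter.mp ha).2
      · exact (hp j hj).1.mono (by intro a ha; exact (mem_filter.mp ha).1)
    have hsub : T ⊆ T' ∪ (T.filter (fun a => p 0 a ∈ NB) ∪
        T.filter (fun a => p (m - 1) a ∈ NB)) := by
      intro a ha
      simp only [T', mem_union, mem_filter]
      tauto
    have h1 := card_le_card hsub
    have h2 := card_union_le T' (T.filter (fun a => p 0 a ∈ NB) ∪
        T.filter (fun a => p (m - 1) a ∈ NB))
    have h3 := card_union_le (T.filter (fun a => p 0 a ∈ NB)) (T.filter (fun a => p (m - 1) a ∈ NB))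
    have h4 := aux 0 (by omega)
    have h5 := aux (m - 1) le_rfl
    omega
  have hWmem : ∀ j, j ≤ m - 1 → ∀ a ∈ T, p j a ∈ V ∧ (c (p j a) : ℕ) = j := by
    intro j hj a ha
    simpa [W] using (hp j hj).2 a ha
  refine ⟨T', p, ?_, ?_, ?_, ?_⟩
  · have h1 : (#T : ℝ) ≤ #T' + 2 * #NB := by exact_mod_cast hcardT'
    have h2 : (#(W 0) : ℝ) ≤ #T + (m - 1) * Dr := by
      have h3 : (#(W 0) : ℝ) ≤ #T + ((m - 1 : ℕ) : ℝ) * ⌊Dr⌋₊ := by exact_mod_cast hT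
      rw [Nat.cast_sub hm, Nat.cast_one] at h3
      have h4 := Nat.floor_le hDr0
      have h5 : ((m : ℝ) - 1) * ⌊Dr⌋₊ ≤ (m - 1) * Dr := by
        apply mul_le_mul_of_nonneg_left h4; linarith
      linarith
    have hbd : b ≤ b * d := by nlinarith
    set β : ℝ := ε / (32 * m ^ 3) with hβ
    have hβm : β * (32 * m ^ 3) = ε := by rw [hβ]; field_simp
    have hbβ : b ≤ β * n := hbd.trans hB
    set r : ℝ := q / m with hr
    have hr0 : 0 < r := by positivity
    have hrm : r * m = q := by rw [hr]; field_simp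
    have hr2 : r ≤ 3 / 2 := by nlinarith
    -- lower bound for W 0
    have hw : r * n - 2 * η * n - 3 * b ≤ #(W 0) := by
      have e1 : r * (η * n) ≤ 3 / 2 * (η * n) := by gcongr
      have e2 : r * b ≤ 3 / 2 * b := by gcongr
      have e3 : 0 ≤ r * b * η := by positivity
      have e4 : 0 ≤ η * n := by positivity
      nlinarith
    have htot : r * n - 2 * m * η * n - 3 * m ^ 2 * b - 3 * b - 2 * (b * d) ≤ #T' := by
      have : ((m : ℝ) - 1) * Dr = 2 * m * η * n - 2 * η * n + 3 * m ^ 2 * b - 3 * m * b := by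
        rw [hDr]; ring
      have : 0 ≤ 3 * m * b := by positivity
      linarith
    have htot2 : r * n - 2 * m * η * n - 8 * m ^ 2 * (β * n) ≤ #T' := by
      have hm2 : (1 : ℝ) ≤ m ^ 2 := by nlinarith
      have e1 : (m : ℝ) ^ 2 * b ≤ m ^ 2 * (β * n) := by gcongr
      have e2 : β * n ≤ m ^ 2 * (β * n) := by
        have : 0 ≤ β * n := hb0.trans hbβ
        nlinarith
      linarith
    have hgoal : (1 - ε) * q * n / m = r * n - ε * r * n := by rw [hr]; ring
    rw [hgoal]
    have hη' : 2 * m * η = ε / (8 * m) := by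
      rw [eq_div_iff (by positivity), ← hηm]; ring
    have hβ' : 8 * m ^ 2 * β = ε / (4 * m) := by
      rw [eq_div_iff (by positivity), ← hβm]; ring
    have : 2 * m * η + 8 * m ^ 2 * β ≤ ε * r := by
      rw [hη', hβ', hr]
      have : ε / (8 * m) + ε / (4 * m) = ε * ((3 / 8) / m) := by field_simp; norm_num
      rw [this]
      gcongr
      linarith
    have := mul_le_mul_of_nonneg_right this hn0
    nlinarith
  · intro j hj
    exact ⟨(hp j hj).1.mono (by exact_mod_cast hT'T), fun a ha => hWmem j hj a (hT'T ha)⟩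
  · intro j hj a ha
    exact hadj j hj a (hT'T ha)
  · intro v
    by_cases hv : v ∈ B
    · have : ({u | G.Adj v u ∧ (u ∈ T'.image (p 0) ∨ u ∈ T'.image (p (m - 1)))} : Finset α)
          = ∅ := by
        rw [Finset.eq_empty_iff_forall_notMem]
        intro u hu
        simp only [mem_filter, mem_univ, true_and, mem_image] at hu
        obtain ⟨hvu, h⟩ := hu
        have huNB : u ∈ NB := mem_biUnion.mpr ⟨v, hv, by simpa using hvu⟩
        rcases h with ⟨a, ha, rfl⟩ | ⟨a, ha, rfl⟩
        · exact (mem_filter.mp ha).2.1 huNB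
        · exact (mem_filter.mp ha).2.2 huNB
      rw [this]
      simp only [card_empty, Nat.cast_zero]
      positivity
    · have hsub : ({u | G.Adj v u ∧ (u ∈ T'.image (p 0) ∨ u ∈ T'.image (p (m - 1)))} : Finset α)
          ⊆ {u ∈ W 0 | G.Adj v u} ∪ {u ∈ W (m - 1) | G.Adj v u} := by
        intro u hu
        simp only [mem_filter, mem_univ, true_and, mem_image] at hu
        obtain ⟨hvu, h⟩ := hu
        rcases h with ⟨a, ha, rfl⟩ | ⟨a, ha, rfl⟩
        · exact mem_union_left _ (mem_filter.mpr ⟨(hp 0 (by omega)).2 a (hT'T ha), hvu⟩)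
        · exact mem_union_right _ (mem_filter.mpr ⟨(hp (m - 1) le_rfl).2 a (hT'T ha), hvu⟩)
      have h1 := (card_le_card hsub).trans (card_union_le _ _)
      have h2 : (#({u | G.Adj v u ∧ (u ∈ T'.image (p 0) ∨ u ∈ T'.image (p (m - 1)))} : Finset α) : ℝ)
          ≤ #{u ∈ W 0 | G.Adj v u} + #{u ∈ W (m - 1) | G.Adj v u} := by exact_mod_cast h1
      have h3 := (hgood v hv ⟨0, hm⟩).2
      have h4 := (hgood v hv ⟨m - 1, by omega⟩).2
      rw [← hWeq] at h3 h4
      have h5 : 2 * ((1 + η) * R) ≤ 4 * d / m := by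
        have : 2 * ((1 + η) * R) = (2 * ((1 + η) * q)) * d / m := by rw [hR]; ring
        rw [this]
        gcongr
        nlinarith
      linarith

/-- Lemma 2.4: covering nearly all of a nearly regular induced subgraph by vertex-disjoint
paths of length `m - 1` whose endvertices form a set of low maximum degree. -/
theorem stmt_3 (m : ℕ) (ε q : ℝ) (hε0 : 0 < ε) (hε : ε ≤ 1) (hq : 1 / 2 ≤ q) :
    ∃ γ₀ : ℝ, 0 < γ₀ ∧ ∀ γ : ℝ, 0 < γ → γ ≤ γ₀ →
      ∃ d₀ : ℕ, ∀ d : ℕ, d₀ ≤ d →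
        ∀ (Vt : Type*) [Fintype Vt] (G : SimpleGraph Vt) (n : ℕ), Fintype.card Vt = n →
          (∀ v : Vt, (G.neighborSet v).ncard ≤ d) →
          ∀ V : Set Vt,
            ((1 - γ) * q * n ≤ (V.ncard : ℝ) ∧ (V.ncard : ℝ) ≤ (1 + γ) * q * n) →
            (∀ v : Vt, (1 - γ) * q * d ≤ ((G.neighborSet v ∩ V).ncard : ℝ) ∧
              ((G.neighborSet v ∩ V).ncard : ℝ) ≤ (1 + γ) * q * d) →
            ∀ t : ℕ, t = ⌈(1 - ε) * q * n / m⌉₊ →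
            ∃ (x y : Fin t → Vt) (P : ∀ i : Fin t, G.Walk (x i) (y i)),
              (∀ i, (P i).IsPath ∧ (P i).length = m - 1 ∧ ∀ w ∈ (P i).support, w ∈ V) ∧
              (∀ i j, i ≠ j → ∀ w : Vt, w ∈ (P i).support → w ∉ (P j).support) ∧
              (∀ v : Vt,
                ((G.neighborSet v ∩ (Set.range x ∪ Set.range y)).ncard : ℝ) ≤ 4 * d / m) := by
  classical
  rcases Nat.eq_zero_or_pos m with rfl | hm
  · refine ⟨1, one_pos, fun γ _ _ => ⟨0, fun d _ Vt _ G n _ _ V _ _ t ht => ?_⟩⟩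
    simp only [Nat.cast_zero, div_zero, Nat.ceil_zero] at ht
    subst ht
    refine ⟨Fin.elim0, Fin.elim0, fun i => i.elim0, fun i => i.elim0, fun i => i.elim0, ?_⟩
    intro v
    simp
  have hm' : (1 : ℝ) ≤ m := by exact_mod_cast hm
  obtain ⟨η, hη⟩ : ∃ η : ℝ, η = ε / (16 * m ^ 2) := ⟨_, rfl⟩
  have hη0 : 0 < η := by rw [hη]; positivity
  have hηm : η * (16 * m ^ 2) = ε := by rw [hη]; field_simp
  have hη1 : η ≤ 1 / 16 := by
    have hm2 : (1 : ℝ) ≤ (m : ℝ) ^ 2 := one_le_pow₀ hm'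
    nlinarith [mul_le_mul_of_nonneg_left hm2 hη0.le]
  obtain ⟨β, hβ⟩ : ∃ β : ℝ, β = ε / (32 * m ^ 3) := ⟨_, rfl⟩
  have hβ0 : 0 < β := by rw [hβ]; positivity
  obtain ⟨κ, hκ⟩ : ∃ κ : ℝ, κ = η ^ 2 / 16 / (2 * m) := ⟨_, rfl⟩
  have hκ0 : 0 < κ := by rw [hκ]; positivity
  refine ⟨η / 4, by positivity, fun γ hγ0 hγ =>
    ⟨⌈4 * m / (κ ^ 2 * β)⌉₊ + 1, fun d hd Vt _ G n hn hΔ V _ hV t ht => ?_⟩⟩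
  have hdpos : 0 < d := by omega
  have hd1 : (1 : ℝ) ≤ d := by exact_mod_cast hdpos
  have hdbig : 4 * m / (κ ^ 2 * β) ≤ (d : ℝ) := by
    refine (Nat.le_ceil _).trans ?_
    exact_mod_cast (by omega : ⌈4 * m / (κ ^ 2 * β)⌉₊ ≤ d)
  rcases isEmpty_or_nonempty Vt with hempty | ⟨⟨v₀⟩⟩
  · have hn0 : n = 0 := by rw [← hn]; exact Fintype.card_eq_zero
    subst hn0
    simp only [Nat.cast_zero, mul_zero, zero_div, Nat.ceil_zero] at ht
    subst ht
    exact ⟨Fin.elim0, Fin.elim0, fun i => i.elim0, fun i => i.elim0, fun i => i.elim0,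
      fun v => isEmptyElim v⟩
  let Vf : Finset Vt := V.toFinset
  have hncard : ∀ v, (G.neighborSet v ∩ V).ncard = (Vf.filter (fun u => G.Adj v u)).card := by
    intro v
    rw [← Set.ncard_coe_finset]
    congr 1
    ext u
    simp [Vf, and_comm]
  have hncard' : ∀ v, (G.neighborSet v).ncard =
      (Finset.univ.filter (fun u => G.Adj v u)).card := by
    intro v
    rw [← Set.ncard_coe_finset]
    congr 1
    ext u
    simp
  have hq2 : q ≤ 3 / 2 := by
    have h1 := (hV v₀).1
    have h2 : ((G.neighborSet v₀ ∩ V).ncard : ℝ) ≤ d := by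
      have : (G.neighborSet v₀ ∩ V).ncard ≤ d :=
        (Set.ncard_le_ncard Set.inter_subset_left (Set.toFinite _)).trans (hΔ v₀)
      exact_mod_cast this
    have h3 : (1 - γ) * q ≤ 1 := by
      have : ((1 - γ) * q) * d ≤ 1 * d := by linarith
      exact le_of_mul_le_mul_right this (by linarith)
    nlinarith
  have hQ0 : 0 ≤ q * d := by positivity
  obtain ⟨c, B, hB, hgood⟩ := exists_colouring m hm (fun v => Vf.filter (fun u => G.Adj v u))
    η (q * d) hη0 (by linarith) hQ0
    (fun v => by
      have := (hV v).1
      rw [hncard] at this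
      refine le_trans ?_ this
      rw [mul_assoc]
      gcongr)
    (fun v => by
      have := (hV v).2
      rw [hncard] at this
      refine this.trans ?_
      rw [mul_assoc]
      gcongr)
  have hBd : (B.card : ℝ) * d ≤ ε / (32 * m ^ 3) * Fintype.card Vt := by
    rw [← hβ]
    have hE : Real.exp (-(η ^ 2 / 16) * (q * d / m)) ≤ Real.exp (-(κ * d)) := by
      apply Real.exp_le_exp.mpr
      have : κ * d ≤ (η ^ 2 / 16) * (q * d / m) := by
        have : κ * d = (η ^ 2 / 16) * ((1 / 2) * d / m) := by rw [hκ]; field_simp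
        rw [this]
        gcongr
      linarith
    have hE2 : Real.exp (-(κ * d)) * (κ ^ 2 * d ^ 2) ≤ 2 := by
      have h1 := Real.quadratic_le_exp_of_nonneg (x := κ * d) (by positivity)
      have h2 : κ ^ 2 * d ^ 2 ≤ 2 * Real.exp (κ * d) := by
        have : 0 ≤ κ * d := by positivity
        nlinarith
      calc _ ≤ Real.exp (-(κ * d)) * (2 * Real.exp (κ * d)) := by gcongr
        _ = 2 := by rw [Real.exp_neg]; field_simp
    have hE3 : m * (2 * Real.exp (-(κ * d))) * d ≤ β := by
      rw [div_le_iff₀ (by positivity)] at hdbig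
      have h1 : (m * (2 * Real.exp (-(κ * d))) * d) * (κ ^ 2 * d) ≤ β * (κ ^ 2 * d) := by
        calc _ = (2 * m) * (Real.exp (-(κ * d)) * (κ ^ 2 * d ^ 2)) := by ring
          _ ≤ (2 * m) * 2 := by gcongr
          _ ≤ _ := by linarith
      exact le_of_mul_le_mul_right h1 (by positivity)
    calc (B.card : ℝ) * d ≤ (Fintype.card Vt * (m * (2 * Real.exp (-(κ * d))))) * d := by
          gcongr
          refine hB.trans ?_
          gcongr
      _ = (m * (2 * Real.exp (-(κ * d))) * d) * Fintype.card Vt := by ring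
      _ ≤ _ := by gcongr
  obtain ⟨T, p, hT, hp, hadj, hends⟩ := paths_of_colouring G m hm Vf B c ε q η d hdpos hε0 hε hq hq2
    hη (fun v => by rw [← hncard']; exact hΔ v) hBd hgood
  have htT : t ≤ T.card := by
    rw [ht, ← hn]
    exact Nat.ceil_le.mpr hT
  let e : Fin t → Vt := fun i => (T.equivFin.symm (Fin.castLE htT i) : Vt)
  have heT : ∀ i, e i ∈ T := fun i => (T.equivFin.symm (Fin.castLE htT i)).2
  have heinj : Function.Injective e := by
    intro i j hij
    have := T.equivFin.symm.injective (Subtype.ext hij)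
    exact Fin.castLE_injective htT this
  have hwalk := fun i : Fin t => walk_of_seq G (m - 1) (fun j => p j (e i))
    (fun j hj => hadj j hj _ (heT i))
    (fun j k hj hk h => by
      rw [← ((hp j hj).2 _ (heT i)).2, ← ((hp k hk).2 _ (heT i)).2]
      exact congrArg (fun z => (c z : ℕ)) h)
  choose P hPath hlen hsup using hwalk
  refine ⟨fun i => p 0 (e i), fun i => p (m - 1) (e i), P, ?_, ?_, ?_⟩
  · intro i
    refine ⟨hPath i, hlen i, ?_⟩
    intro w hw
    obtain ⟨j, hj, rfl⟩ := hsup i w hw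
    have := ((hp j hj).2 _ (heT i)).1
    simpa [Vf] using this
  · intro i j hij w hwi hwj
    obtain ⟨a, ha, h1⟩ := hsup i w hwi
    obtain ⟨b, hb, h2⟩ := hsup j w hwj
    have ca := ((hp a ha).2 _ (heT i)).2
    have cb := ((hp b hb).2 _ (heT j)).2
    have h1' : w = p a (e i) := h1
    have h2' : w = p b (e j) := h2
    rw [← h1'] at ca
    rw [← h2'] at cb
    have hab : a = b := ca.symm.trans cb
    subst hab
    exact hij (heinj ((hp a ha).1 (heT i) (heT j) (h1'.symm.trans h2')))
  · intro v
    refine le_trans ?_ (hends v)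
    rw [← Set.ncard_coe_finset]
    have : (G.neighborSet v ∩ (Set.range (fun i => p 0 (e i)) ∪
        Set.range (fun i => p (m - 1) (e i)))).ncard ≤
        ((Finset.univ.filter (fun u => G.Adj v u ∧ (u ∈ T.image (p 0) ∨
          u ∈ T.image (p (m - 1)))) : Finset Vt) : Set Vt).ncard := by
      apply Set.ncard_le_ncard _ (Set.toFinite _)
      rintro u ⟨hu, hu'⟩
      simp only [Finset.coe_filter, Finset.mem_univ, true_and, Set.mem_ofPred_eq, Finset.mem_image]
      refine ⟨hu, ?_⟩
      rcases hu' with ⟨i, rfl⟩ | ⟨i, rfl⟩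
      · exact Or.inl ⟨e i, heT i, rfl⟩
      · exact Or.inr ⟨e i, heT i, rfl⟩
    exact_mod_cast this
end
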